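/- arXiv:2308.07945 — 9 statements merged into one kernel-verified Lean document; each statement's English description precedes it below -/
import Mathlib

section
/- Let N, m be positive integers with N ≥ 2m+3 and set n = N−2m. Define B₁ = 2·(2π)^{−n}·∑_{j=1}^∞ j^{−n}. Then there exists C > 0 such that for every integer k ≥ 2, every r > 0 and every h ∈ [0,1): if n ≥ 4 then |∑_{j=2}^k |x⁺_{k,1,r,h} − x⁺_{k,j,r,h}|^{−n} − B₁·k^n/(r√(1−h²))^n| ≤ C·k^{n−2}/(r√(1−h²))^n, and if n = 3 then |∑_{j=2}^k |x⁺_{k,1,r,h} − x⁺_{k,j,r,h}|^{−n} − B₁·k^n/(r√(1−h²))^n| ≤ C·k^{n−2}·log k/(r√(1−h²))^n. -/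
/-!
With `ρ = r√(1-h²)` the distance between the first and the `j`-th point is the chord
`2 ρ sin (π (j-1) / k)`, so the claim compares `∑_{0<i<k} sin (π i / k)^{-n}` with
`2 (k / π)^n ζ(n)`. Write `n = p + 2`.

On `(0, π/2]` the function `sin x ^{-n}` differs from `x^{-n}` by `O(x^{-p})`
(`inv_sin_pow_sub`: Bernoulli's inequality together with `x - sin x ≤ x³`); by the reflection
`x ↦ π - x`, on all of `(0, π)` it differs from `x^{-n} + (π-x)^{-n}` by
`O(x^{-p} + (π-x)^{-p})` (`inv_sin_pow_sub_sub`). Summing over `x = π i / k`, both halves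
contribute the same, and the main term is `2 (k/π)^n ∑_{i<k} i^{-n}` with an error
`O(k^p ∑_{i<k} i^{-p})`. Completing the partial sum to `ζ(n)` costs only `O(k) = O(k^p)`
(`tsum_sub_zetaSum_le`). Finally `∑_{i<k} i^{-p}` is bounded for `p ≥ 2`, and is a harmonic
number, hence `O(log k)`, for `p = 1`.
-/

/-- The points `x⁺_{k,j,r,h}` and `x⁻_{k,j,r,h}` in `ℝ^N`:
first two coordinates `r√(1-h²)(cos(2(j-1)π/k), sin(2(j-1)π/k))`, third coordinate `±rh`,
remaining coordinates `0`. -/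
noncomputable def pt (N : ℕ) (a b c : ℝ) : EuclideanSpace ℝ (Fin N) :=
  (WithLp.equiv 2 (Fin N → ℝ)).symm fun i =>
    if (i : ℕ) = 0 then a else if (i : ℕ) = 1 then b else if (i : ℕ) = 2 then c else 0

noncomputable def xp (N k : ℕ) (r h : ℝ) (j : ℕ) : EuclideanSpace ℝ (Fin N) :=
  pt N (r * Real.sqrt (1 - h ^ 2) * Real.cos (2 * ((j : ℝ) - 1) * Real.pi / k))
    (r * Real.sqrt (1 - h ^ 2) * Real.sin (2 * ((j : ℝ) - 1) * Real.pi / k)) (r * h)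

/-- The partial sum `1^{-s} + 2^{-s} + ⋯ + q^{-s}` of the zeta series. -/
noncomputable def zetaSum (q s : ℕ) : ℝ :=
  ∑ i ∈ Finset.range q, (((i : ℝ) + 1)⁻¹) ^ s

/-! ### Pointwise comparison of `sin x` with its linear approximations at `0` and `π` -/

lemma sub_sin_le_cube {x : ℝ} (hx : 0 < x) :
    x - Real.sin x ≤ x ^ 3 := by
  have := Real.sin_gt_sub_cube hx
  have : 0 < x ^ 3 := by positivity
  linarith

lemma inv_sin_pow_sub (p : ℕ) {x : ℝ} (hx : 0 < x) (hx2 : x ≤ Real.pi / 2) :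
    |((Real.sin x)⁻¹) ^ (p + 2) - (x⁻¹) ^ (p + 2)| ≤
      ((p : ℝ) + 2) * (Real.pi / 2) ^ (p + 2) * (x⁻¹) ^ p := by
  have hpi := Real.pi_pos
  have hs : 0 < Real.sin x := Real.sin_pos_of_pos_of_lt_pi hx (by linarith)
  have hle : Real.sin x ≤ x := Real.sin_le hx.le
  set s := Real.sin x with hs_def
  have hlow : 2 / Real.pi * x ≤ s := Real.mul_le_sin hx.le hx2
  have hinv : s⁻¹ ≤ Real.pi / 2 * x⁻¹ := by
    have : (2 / Real.pi * x)⁻¹ = Real.pi / 2 * x⁻¹ := by field_simp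
    rw [← this]
    exact inv_anti₀ (by positivity) hlow
  have ht : 1 - x ^ 2 ≤ s / x := by
    rw [le_div_iff₀ hx]
    have := sub_sin_le_cube hx
    nlinarith
  have hB := one_add_mul_sub_le_pow (a := s / x) (n := p + 2)
    (by have : 0 < s / x := by positivity
        linarith)
  push_cast at hB
  have hB' : 1 - (s / x) ^ (p + 2) ≤ ((p : ℝ) + 2) * x ^ 2 := by
    have h0 : (0 : ℝ) ≤ (p : ℝ) + 2 := by positivity
    nlinarith [mul_le_mul_of_nonneg_left ht h0]
  have hmono : (x⁻¹) ^ (p + 2) ≤ (s⁻¹) ^ (p + 2) := by gcongr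
  rw [abs_of_nonneg (sub_nonneg.2 hmono)]
  have e : (s⁻¹) ^ (p + 2) - (x⁻¹) ^ (p + 2) = (s⁻¹) ^ (p + 2) * (1 - (s / x) ^ (p + 2)) := by
    have : (x⁻¹) ^ (p + 2) = (s⁻¹) ^ (p + 2) * (s / x) ^ (p + 2) := by
      rw [← mul_pow]; congr 1; field_simp
    rw [this]; ring
  rw [e]
  calc (s⁻¹) ^ (p + 2) * (1 - (s / x) ^ (p + 2))
      ≤ (s⁻¹) ^ (p + 2) * (((p : ℝ) + 2) * x ^ 2) := by gcongr
    _ ≤ (Real.pi / 2 * x⁻¹) ^ (p + 2) * (((p : ℝ) + 2) * x ^ 2) := by gcongr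
    _ = ((p : ℝ) + 2) * (Real.pi / 2) ^ (p + 2) * (x⁻¹) ^ p := by
      rw [mul_pow, pow_add (x⁻¹)]
      field_simp

/-- The constant in the error bound for `sin x ^{-(p+2)}` on `(0, π)`. -/
noncomputable def sinConst (p : ℕ) : ℝ := ((p : ℝ) + 2) * (Real.pi / 2) ^ (p + 2) + 1

lemma sinConst_pos (p : ℕ) : 0 < sinConst p := by
  have := Real.pi_pos
  unfold sinConst; positivity

lemma inv_sin_pow_sub_sub_left (p : ℕ) {x : ℝ} (hx : 0 < x) (hx2 : x ≤ Real.pi / 2) :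
    |((Real.sin x)⁻¹) ^ (p + 2) - ((x⁻¹) ^ (p + 2) + ((Real.pi - x)⁻¹) ^ (p + 2))| ≤
      sinConst p * ((x⁻¹) ^ p + ((Real.pi - x)⁻¹) ^ p) := by
  have h1 := inv_sin_pow_sub p hx hx2
  have hpi := Real.pi_gt_three
  have hy : 1 ≤ Real.pi - x := by linarith
  -- The term at the far endpoint is itself an error term, as `π - x ≥ 1`.
  have h2 : ((Real.pi - x)⁻¹) ^ (p + 2) ≤ ((Real.pi - x)⁻¹) ^ p :=
    pow_le_pow_of_le_one (by positivity) (inv_le_one_of_one_le₀ hy) (by omega)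
  have h3 : 0 ≤ ((Real.pi - x)⁻¹) ^ (p + 2) := by positivity
  have h4 : 0 ≤ (x⁻¹) ^ p := by positivity
  have h5 : 0 ≤ ((p : ℝ) + 2) * (Real.pi / 2) ^ (p + 2) * ((Real.pi - x)⁻¹) ^ p := by positivity
  unfold sinConst
  rw [abs_le] at h1 ⊢
  constructor <;> nlinarith [h1.1, h1.2]

lemma inv_sin_pow_sub_sub (p : ℕ) {x : ℝ} (hx : 0 < x) (hx2 : x < Real.pi) :
    |((Real.sin x)⁻¹) ^ (p + 2) - ((x⁻¹) ^ (p + 2) + ((Real.pi - x)⁻¹) ^ (p + 2))| ≤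
      sinConst p * ((x⁻¹) ^ p + ((Real.pi - x)⁻¹) ^ p) := by
  rcases le_total x (Real.pi / 2) with h | h
  · exact inv_sin_pow_sub_sub_left p hx h
  · have := inv_sin_pow_sub_sub_left p (x := Real.pi - x) (by linarith) (by linarith)
    rw [Real.sin_pi_sub, sub_sub_cancel] at this
    rwa [add_comm ((x⁻¹) ^ (p + 2)), add_comm ((x⁻¹) ^ p)]

/-! ### Summation over the nodes `π i / k` -/

lemma sum_inv_pow_node (q s : ℕ) :
    ∑ i ∈ Finset.range q, ((Real.pi * ((i : ℝ) + 1) / (q + 1))⁻¹) ^ s =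
      (((q : ℝ) + 1) / Real.pi) ^ s * zetaSum q s := by
  unfold zetaSum
  rw [Finset.mul_sum]
  refine Finset.sum_congr rfl fun i _ => ?_
  rw [← mul_pow]
  congr 1
  have := Real.pi_pos
  field_simp

lemma sum_inv_pow_node_reflect (q s : ℕ) :
    ∑ i ∈ Finset.range q, ((Real.pi - Real.pi * ((i : ℝ) + 1) / (q + 1))⁻¹) ^ s =
      (((q : ℝ) + 1) / Real.pi) ^ s * zetaSum q s := by
  rw [← sum_inv_pow_node, ← Finset.sum_range_reflect]
  refine Finset.sum_congr rfl fun i hi => ?_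
  have hi' := Finset.mem_range.1 hi
  have : ((q - 1 - i : ℕ) : ℝ) = (q : ℝ) - 1 - i := by
    rw [Nat.cast_sub (by omega), Nat.cast_sub (by omega)]; simp
  rw [this]
  congr 2
  field_simp
  ring

lemma sum_inv_sin_sub (p q : ℕ) :
    |∑ i ∈ Finset.range q, ((Real.sin (Real.pi * ((i : ℝ) + 1) / (q + 1)))⁻¹) ^ (p + 2) -
        2 * ((((q : ℝ) + 1) / Real.pi) ^ (p + 2) * zetaSum q (p + 2))| ≤
      2 * sinConst p * ((((q : ℝ) + 1) / Real.pi) ^ p * zetaSum q p) := by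
  have e1 : 2 * ((((q : ℝ) + 1) / Real.pi) ^ (p + 2) * zetaSum q (p + 2)) =
      ∑ i ∈ Finset.range q, (((Real.pi * ((i : ℝ) + 1) / (q + 1))⁻¹) ^ (p + 2) +
        ((Real.pi - Real.pi * ((i : ℝ) + 1) / (q + 1))⁻¹) ^ (p + 2)) := by
    rw [Finset.sum_add_distrib, sum_inv_pow_node, sum_inv_pow_node_reflect]; ring
  have e2 : 2 * sinConst p * ((((q : ℝ) + 1) / Real.pi) ^ p * zetaSum q p) =
      ∑ i ∈ Finset.range q, sinConst p * (((Real.pi * ((i : ℝ) + 1) / (q + 1))⁻¹) ^ p +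
        ((Real.pi - Real.pi * ((i : ℝ) + 1) / (q + 1))⁻¹) ^ p) := by
    rw [← Finset.mul_sum, Finset.sum_add_distrib, sum_inv_pow_node, sum_inv_pow_node_reflect]
    ring
  rw [e1, e2, ← Finset.sum_sub_distrib]
  refine (Finset.abs_sum_le_sum_abs _ _).trans (Finset.sum_le_sum fun i hi => ?_)
  have hi' : (i : ℝ) + 1 ≤ q := by exact_mod_cast Finset.mem_range.1 hi
  have hpi := Real.pi_pos
  refine inv_sin_pow_sub_sub p (by positivity) ?_
  rw [div_lt_iff₀ (by positivity)]
  nlinarith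

/-! ### Partial sums and tail of the zeta series -/

/-- The tail of the zeta series telescopes: `i^{-(p+2)} ≤ k^{-p} (1/(i-1) - 1/i)` for
`i ≥ k = q + 1`. -/
lemma zetaSum_le_add (p q : ℕ) (hq : 1 ≤ q) (d : ℕ) :
    zetaSum (q + d) (p + 2) ≤
      zetaSum q (p + 2) + (((q : ℝ) + 1)⁻¹) ^ p * ((q : ℝ)⁻¹ - ((q : ℝ) + d)⁻¹) := by
  have hq' : (1 : ℝ) ≤ q := by exact_mod_cast hq
  induction d with
  | zero => simp
  | succ d ih =>
    have e : zetaSum (q + (d + 1)) (p + 2) =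
        zetaSum (q + d) (p + 2) + (((q : ℝ) + d + 1)⁻¹) ^ (p + 2) := by
      unfold zetaSum
      rw [← add_assoc, Finset.sum_range_succ]; push_cast; rfl
    have h1 : (((q : ℝ) + d + 1)⁻¹) ^ p ≤ (((q : ℝ) + 1)⁻¹) ^ p := by
      gcongr
      linarith [(Nat.cast_nonneg d : (0 : ℝ) ≤ d)]
    have h2 : (((q : ℝ) + d + 1)⁻¹) ^ 2 ≤ ((q : ℝ) + d)⁻¹ - ((q : ℝ) + d + 1)⁻¹ := by
      have : ((q : ℝ) + d)⁻¹ - ((q : ℝ) + d + 1)⁻¹ =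
          ((q : ℝ) + d)⁻¹ * ((q : ℝ) + d + 1)⁻¹ := by
        field_simp; ring
      rw [this, sq]
      refine mul_le_mul_of_nonneg_right (inv_anti₀ ?_ ?_) (by positivity)
      · positivity
      · linarith
    have h3 : (((q : ℝ) + d + 1)⁻¹) ^ (p + 2) ≤
        (((q : ℝ) + 1)⁻¹) ^ p * (((q : ℝ) + d)⁻¹ - ((q : ℝ) + d + 1)⁻¹) := by
      rw [pow_add]
      exact mul_le_mul h1 h2 (by positivity) (by positivity)
    rw [e]
    push_cast
    rw [← add_assoc (q : ℝ)]
    nlinarith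

lemma zetaSum_mono (s : ℕ) {a b : ℕ} (h : a ≤ b) : zetaSum a s ≤ zetaSum b s := by
  unfold zetaSum
  exact Finset.sum_le_sum_of_subset_of_nonneg (Finset.range_mono h) fun i _ _ => by positivity

lemma zetaSum_nonneg (q s : ℕ) : 0 ≤ zetaSum q s := by
  unfold zetaSum; positivity

lemma summable_inv_pow (p : ℕ) : Summable fun i : ℕ => (((i : ℝ) + 1)⁻¹) ^ (p + 2) := by
  have := (summable_nat_add_iff 1).2 (Real.summable_nat_pow_inv (p := p + 2) |>.2 (by omega))
  simpa [inv_pow] using this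

lemma tsum_sub_zetaSum_le (p q : ℕ) (hq : 1 ≤ q) :
    |∑' i : ℕ, (((i : ℝ) + 1)⁻¹) ^ (p + 2) - zetaSum q (p + 2)| ≤
      (((q : ℝ) + 1)⁻¹) ^ p * (q : ℝ)⁻¹ := by
  have hnn : ∀ i : ℕ, (0 : ℝ) ≤ (((i : ℝ) + 1)⁻¹) ^ (p + 2) := fun i => by positivity
  have hlow : zetaSum q (p + 2) ≤ ∑' i : ℕ, (((i : ℝ) + 1)⁻¹) ^ (p + 2) :=
    (summable_inv_pow p).sum_le_tsum _ fun i _ => hnn i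
  have hup : ∑' i : ℕ, (((i : ℝ) + 1)⁻¹) ^ (p + 2) ≤
      zetaSum q (p + 2) + (((q : ℝ) + 1)⁻¹) ^ p * (q : ℝ)⁻¹ := by
    refine Real.tsum_le_of_sum_range_le hnn fun M => ?_
    have h1 := zetaSum_mono (p + 2) (Nat.le_add_left M q)
    have h2 := zetaSum_le_add p q hq M
    have h3 : 0 ≤ (((q : ℝ) + 1)⁻¹) ^ p * ((q : ℝ) + M)⁻¹ := by positivity
    change zetaSum M (p + 2) ≤ _
    linarith
  rw [abs_of_nonneg (by linarith)]
  linarith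

/-! ### The asymptotics of `∑ sin (π i / k)^{-n}` -/

lemma sum_inv_sin_sub_tsum (p q : ℕ) (hp : 1 ≤ p) (hq : 1 ≤ q) :
    |∑ i ∈ Finset.range q, ((Real.sin (Real.pi * ((i : ℝ) + 1) / (q + 1)))⁻¹) ^ (p + 2) -
        2 * ((((q : ℝ) + 1) / Real.pi) ^ (p + 2) * ∑' i : ℕ, (((i : ℝ) + 1)⁻¹) ^ (p + 2))| ≤
      (2 * sinConst p + 4) * ((q : ℝ) + 1) ^ p * (1 + zetaSum q p) := by
  have h1 := sum_inv_sin_sub p q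
  have h2 := tsum_sub_zetaSum_le p q hq
  have hpi := Real.pi_gt_three
  have hq' : (1 : ℝ) ≤ q := by exact_mod_cast hq
  have hC := sinConst_pos p
  have hZ := zetaSum_nonneg q p
  set k : ℝ := (q : ℝ) + 1 with hk
  have hk1 : 1 ≤ k := by linarith
  have hkpi : k / Real.pi ≤ k := div_le_self (by linarith) (by linarith)
  have h3 : (k / Real.pi) ^ p ≤ k ^ p := by gcongr
  have h4 : (k / Real.pi) ^ (p + 2) ≤ k ^ (p + 2) := by gcongr
  have hqk : (q : ℝ)⁻¹ ≤ 2 * k⁻¹ := by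
    rw [← div_eq_mul_inv, inv_eq_one_div, div_le_div_iff₀ (by linarith) (by linarith)]
    linarith
  have h5 : (k / Real.pi) ^ (p + 2) * ((k⁻¹) ^ p * (q : ℝ)⁻¹) ≤ 2 * k ^ p := by
    calc (k / Real.pi) ^ (p + 2) * ((k⁻¹) ^ p * (q : ℝ)⁻¹)
        ≤ k ^ (p + 2) * ((k⁻¹) ^ p * (2 * k⁻¹)) := by gcongr
      _ = 2 * k ^ 1 := by rw [pow_add, inv_pow]; field_simp
      _ ≤ 2 * k ^ p := by gcongr
  set S := ∑ i ∈ Finset.range q, ((Real.sin (Real.pi * ((i : ℝ) + 1) / k))⁻¹) ^ (p + 2)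
  set ζ := ∑' i : ℕ, (((i : ℝ) + 1)⁻¹) ^ (p + 2)
  have h6 : |2 * ((k / Real.pi) ^ (p + 2) * (ζ - zetaSum q (p + 2)))| ≤ 4 * k ^ p := by
    rw [abs_mul, abs_mul, abs_of_pos (by norm_num : (0 : ℝ) < 2),
      abs_of_nonneg (by positivity : 0 ≤ (k / Real.pi) ^ (p + 2))]
    have : (k / Real.pi) ^ (p + 2) * |ζ - zetaSum q (p + 2)| ≤
      (k / Real.pi) ^ (p + 2) * ((k⁻¹) ^ p * (q : ℝ)⁻¹) := by gcongr
    linarith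
  have h7 : 2 * sinConst p * ((k / Real.pi) ^ p * zetaSum q p) ≤
      2 * sinConst p * (k ^ p * zetaSum q p) := by gcongr
  have e : S - 2 * ((k / Real.pi) ^ (p + 2) * ζ) =
      (S - 2 * ((k / Real.pi) ^ (p + 2) * zetaSum q (p + 2))) -
        2 * ((k / Real.pi) ^ (p + 2) * (ζ - zetaSum q (p + 2))) := by ring
  rw [e]
  refine (abs_sub _ _).trans ?_
  have h8 : 0 ≤ sinConst p * k ^ p := by positivity
  have h9 : 0 ≤ k ^ p * zetaSum q p := by positivity
  nlinarith

lemma zetaSum_le_two {p : ℕ} (hp : 2 ≤ p) (q : ℕ) : zetaSum q p ≤ 2 := by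
  obtain ⟨t, rfl⟩ := Nat.exists_eq_add_of_le' hp
  have h1 := zetaSum_mono (t + 2) (Nat.le_add_left q 1)
  have h2 := zetaSum_le_add t 1 le_rfl q
  have h3 : zetaSum 1 (t + 2) = 1 := by simp [zetaSum]
  have h4 : (((1 : ℕ) : ℝ) + 1)⁻¹ ^ t ≤ 1 := pow_le_one₀ (by positivity) (by norm_num)
  have h5 : (((1 : ℕ) : ℝ))⁻¹ - (((1 : ℕ) : ℝ) + q)⁻¹ ≤ 1 := by
    have : 0 ≤ (((1 : ℕ) : ℝ) + q)⁻¹ := by positivity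
    simp only [Nat.cast_one, inv_one] at this ⊢
    linarith
  have h6 : 0 ≤ (((1 : ℕ) : ℝ) + 1)⁻¹ ^ t := by positivity
  nlinarith

lemma one_add_zetaSum_one_le (q : ℕ) (hq : 1 ≤ q) :
    1 + zetaSum q 1 ≤ 5 * Real.log ((q : ℝ) + 1) := by
  have hq' : (1 : ℝ) ≤ q := by exact_mod_cast hq
  have h1 : zetaSum q 1 ≤ 1 + Real.log q := by
    have := harmonic_le_one_add_log q
    simpa [harmonic, zetaSum] using this
  have h2 : Real.log q ≤ Real.log ((q : ℝ) + 1) := Real.log_le_log (by linarith) (by linarith)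
  have h3 : Real.log 2 ≤ Real.log ((q : ℝ) + 1) := Real.log_le_log (by linarith) (by linarith)
  have := Real.log_two_gt_d9
  linarith

/-! ### Distances between the points -/

lemma norm_pt_sub (N : ℕ) (hN : 3 ≤ N) (a b a₂ b₂ c : ℝ) :
    ‖pt N a b c - pt N a₂ b₂ c‖ = Real.sqrt ((a - a₂) ^ 2 + (b - b₂) ^ 2) := by
  obtain ⟨t, rfl⟩ := Nat.exists_eq_add_of_le' hN
  rw [EuclideanSpace.norm_eq]
  congr 1
  simp [pt, Fin.sum_univ_succ]

/-- The chord formula: the points number `1` and `i + 2` subtend the angle `2π(i+1)/k`. -/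
lemma norm_xp_sub (N q : ℕ) (hN : 3 ≤ N) (r h : ℝ) (hr : 0 ≤ r) (i : ℕ) (hi : i < q) :
    ‖xp N (q + 1) r h 1 - xp N (q + 1) r h (2 + i)‖ =
      2 * (r * Real.sqrt (1 - h ^ 2)) * Real.sin (Real.pi * ((i : ℝ) + 1) / (q + 1)) := by
  unfold xp
  rw [norm_pt_sub N hN]
  have hpi := Real.pi_pos
  have hi' : (i : ℝ) + 1 ≤ q := by exact_mod_cast hi
  have hs : 0 ≤ Real.sin (Real.pi * ((i : ℝ) + 1) / (q + 1)) := by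
    refine Real.sin_nonneg_of_nonneg_of_le_pi (by positivity) ?_
    rw [div_le_iff₀ (by positivity)]
    nlinarith
  have e : 2 * (((2 + i : ℕ) : ℝ) - 1) * Real.pi / ((q + 1 : ℕ) : ℝ) =
      2 * (Real.pi * ((i : ℝ) + 1) / (q + 1)) := by
    push_cast; ring
  rw [e, Real.cos_two_mul, Real.sin_two_mul]
  set x := Real.pi * ((i : ℝ) + 1) / (q + 1)
  have hsq : Real.cos x ^ 2 = 1 - Real.sin x ^ 2 := Real.cos_sq' x
  rw [Real.sqrt_eq_iff_mul_self_eq (by positivity) (by positivity)]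
  simp only [Nat.cast_one, sub_self, mul_zero, zero_mul, zero_div, Real.cos_zero, Real.sin_zero]
  ring_nf
  rw [show Real.cos x ^ 4 = (Real.cos x ^ 2) ^ 2 by ring, hsq]
  ring

theorem stmt2 (N m : ℕ) (hm : 1 ≤ m) (hN : 2 * m + 3 ≤ N) (n : ℕ) (hn : n = N - 2 * m)
    (B₁ : ℝ) (hB₁ : B₁ = 2 * (2 * Real.pi) ^ (-(n : ℝ)) * ∑' j : ℕ, ((j : ℝ) + 1) ^ (-(n : ℝ))) :
    ∃ C : ℝ, 0 < C ∧ ∀ k : ℕ, 2 ≤ k → ∀ r h : ℝ, 0 < r → 0 ≤ h → h < 1 →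
      (4 ≤ n →
        |(∑ j ∈ Finset.Icc 2 k, ‖xp N k r h 1 - xp N k r h j‖ ^ (-(n : ℝ))) -
            B₁ * (k : ℝ) ^ n / (r * Real.sqrt (1 - h ^ 2)) ^ n| ≤
          C * (k : ℝ) ^ (n - 2) / (r * Real.sqrt (1 - h ^ 2)) ^ n) ∧
      (n = 3 →
        |(∑ j ∈ Finset.Icc 2 k, ‖xp N k r h 1 - xp N k r h j‖ ^ (-(n : ℝ))) -
            B₁ * (k : ℝ) ^ n / (r * Real.sqrt (1 - h ^ 2)) ^ n| ≤
          C * (k : ℝ) ^ (n - 2) * Real.log k / (r * Real.sqrt (1 - h ^ 2)) ^ n) := by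
  obtain ⟨p, rfl⟩ : ∃ p, n = p + 2 := ⟨n - 2, by omega⟩
  have hp : 1 ≤ p := by omega
  have hN3 : 3 ≤ N := by omega
  have hpi := Real.pi_pos
  have hC := sinConst_pos p
  have hrpow : ∀ y : ℝ, 0 ≤ y → y ^ (-((p + 2 : ℕ) : ℝ)) = (y⁻¹) ^ (p + 2) := fun y hy => by
    rw [Real.rpow_neg hy, Real.rpow_natCast, inv_pow]
  have hB : B₁ = 2 * ((2 * Real.pi)⁻¹) ^ (p + 2) * ∑' i : ℕ, (((i : ℝ) + 1)⁻¹) ^ (p + 2) := by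
    rw [hB₁, hrpow _ (by positivity)]
    congr 1
    exact tsum_congr fun j => hrpow _ (by positivity)
  refine ⟨5 * (2 * sinConst p + 4), by positivity, fun k hk r h hr h0 h1 => ?_⟩
  obtain ⟨q, rfl⟩ : ∃ q, k = q + 1 := ⟨k - 1, by omega⟩
  have hq : 1 ≤ q := by omega
  have hρ : 0 < r * Real.sqrt (1 - h ^ 2) := mul_pos hr (Real.sqrt_pos.2 (by nlinarith))
  have hsum : ∑ j ∈ Finset.Icc 2 (q + 1),
      ‖xp N (q + 1) r h 1 - xp N (q + 1) r h j‖ ^ (-((p + 2 : ℕ) : ℝ)) =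
      ((2 * (r * Real.sqrt (1 - h ^ 2)))⁻¹) ^ (p + 2) *
      ∑ i ∈ Finset.range q, ((Real.sin (Real.pi * ((i : ℝ) + 1) / (q + 1)))⁻¹) ^ (p + 2) := by
    have : Finset.Icc 2 (q + 1) = Finset.Ico 2 (q + 2) := by
      ext; simp only [Finset.mem_Icc, Finset.mem_Ico]; omega
    rw [this, Finset.sum_Ico_eq_sum_range, Finset.mul_sum, Nat.add_sub_cancel]
    refine Finset.sum_congr rfl fun i hi => ?_
    rw [hrpow _ (norm_nonneg _), norm_xp_sub N q hN3 r h hr.le i (Finset.mem_range.1 hi),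
      mul_inv, mul_pow]
  have key := sum_inv_sin_sub_tsum p q hp hq
  set ρ := r * Real.sqrt (1 - h ^ 2)
  have main : |(∑ j ∈ Finset.Icc 2 (q + 1),
      ‖xp N (q + 1) r h 1 - xp N (q + 1) r h j‖ ^ (-((p + 2 : ℕ) : ℝ))) -
        B₁ * ((q + 1 : ℕ) : ℝ) ^ (p + 2) / ρ ^ (p + 2)| ≤
      (2 * sinConst p + 4) * ((q : ℝ) + 1) ^ p * (1 + zetaSum q p) / ρ ^ (p + 2) := by
    rw [hsum, hB]
    set S := ∑ i ∈ Finset.range q,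
      ((Real.sin (Real.pi * ((i : ℝ) + 1) / (q + 1)))⁻¹) ^ (p + 2)
    set ζ := ∑' i : ℕ, (((i : ℝ) + 1)⁻¹) ^ (p + 2)
    have e : ((2 * ρ)⁻¹) ^ (p + 2) * S -
        2 * ((2 * Real.pi)⁻¹) ^ (p + 2) * ζ * ((q + 1 : ℕ) : ℝ) ^ (p + 2) / ρ ^ (p + 2) =
        ((2 * ρ)⁻¹) ^ (p + 2) * (S - 2 * ((((q : ℝ) + 1) / Real.pi) ^ (p + 2) * ζ)) := by
      push_cast
      simp only [mul_inv, mul_pow, div_eq_mul_inv, inv_pow]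
      ring
    have hle : ((2 * ρ)⁻¹) ^ (p + 2) ≤ (ρ⁻¹) ^ (p + 2) := by
      gcongr
      linarith
    rw [e, abs_mul, abs_of_pos (by positivity : 0 < ((2 * ρ)⁻¹) ^ (p + 2)),
      div_eq_mul_inv _ (ρ ^ (p + 2)), ← inv_pow, mul_comm]
    exact mul_le_mul key hle (by positivity) ((abs_nonneg _).trans key)
  refine ⟨fun hn4 => main.trans ?_, fun hn3 => main.trans ?_⟩
  · rw [Nat.add_sub_cancel]
    have := zetaSum_le_two (show 2 ≤ p by omega) q
    push_cast
    refine div_le_div_of_nonneg_right ?_ (by positivity)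
    have h8 : 0 ≤ (2 * sinConst p + 4) * ((q : ℝ) + 1) ^ p := by positivity
    nlinarith
  · obtain rfl : p = 1 := by omega
    have := one_add_zetaSum_one_le q hq
    simp only [Nat.add_sub_cancel]
    push_cast
    refine div_le_div_of_nonneg_right ?_ (by positivity)
    have h8 : 0 ≤ (2 * sinConst 1 + 4) * ((q : ℝ) + 1) ^ 1 := by positivity
    nlinarith
end

section
/- Let N, m be positive integers with N ≥ 2m+3 and set n = N−2m. Define B₂ = 2^{−(n−1)}·π^{−1}·∫_0^∞ (1+s²)^{−n/2} ds. Let (h_k) be a sequence in (0,1/2) with h_k → 0, k·h_k → ∞ and k^{n−3}·h_k^{n−1} → 0, and let (r_k) be any sequence of positive real numbers. Then lim_{k→∞} (r_k^n·h_k^{n−1}·√(1−h_k²)/k)·∑_{j=1}^k |x⁺_{k,1,r_k,h_k} − x⁻_{k,j,r_k,h_k}|^{−n} = B₂. -/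
/-!
The squared distance is `‖x⁺₁ - x⁻ⱼ‖² = (2rh)² (1 + (1 - h²) (sin ((j-1)π/k) / h)²)`, so with
`δ = π / (k h)` the quantity in the theorem equals `2⁻ⁿ π⁻¹ √(1-h²)` times the Riemann sum
`δ ∑ f (i δ)`, where `f u = (1 + (1 - h²) (sin (h u) / h)²) ^ (-n/2)`. The summand is `k`-periodic
in `i`, so the sum may be taken over `-⌊k/2⌋ ≤ i < k - ⌊k/2⌋` (`sum_shift`). It is then the integral
over `ℝ` of a step function with mesh `δ → 0` (`integral_step`). For fixed `s` the step function
converges to `(1 + s²) ^ (-n/2)`, because `sin (h u) / h → s` as `u → s`, `h → 0`. On the centred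
range `|i| π / k ≤ π / 2`, so Jordan's inequality `|sin x| ≥ (2/π) |x|` bounds the step function by
`16 / (1 + s²)`. Dominated convergence gives the limit `∫_ℝ (1 + s²) ^ (-n/2)`, which is twice the
integral over the half-line.
-/

open MeasureTheory

noncomputable def xm (N k : ℕ) (r h : ℝ) (j : ℕ) : EuclideanSpace ℝ (Fin N) :=
  pt N (r * Real.sqrt (1 - h ^ 2) * Real.cos (2 * ((j : ℝ) - 1) * Real.pi / k))
    (r * Real.sqrt (1 - h ^ 2) * Real.sin (2 * ((j : ℝ) - 1) * Real.pi / k)) (-(r * h))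

open Filter Topology

/-- The `i`-th summand, after removal of the factor `(2rh)⁻ⁿ`; here `p` stands for `-n/2`. -/
noncomputable def term (p h : ℝ) (k : ℕ) (i : ℤ) : ℝ :=
  (1 + (1 - h ^ 2) * (Real.sin (i * Real.pi / k) / h) ^ 2) ^ p

lemma term_periodic (p h : ℝ) (k : ℕ) (hk : 0 < k) (i : ℤ) :
    term p h k (i + k) = term p h k i := by
  have hk' : (k : ℝ) ≠ 0 := by positivity
  have e : ((i + k : ℤ) : ℝ) * Real.pi / k = i * Real.pi / k + Real.pi := by
    push_cast; field_simp
  unfold term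
  rw [e, Real.sin_add_pi, neg_div, neg_sq]

/-- The sum of a `k`-periodic function over `k` consecutive integers does not depend on where
they start. -/
lemma sum_shift (g : ℤ → ℝ) (k : ℕ) (hg : ∀ i, g (i + k) = g i) (a : ℕ) :
    ∑ i ∈ Finset.range k, g ((i : ℤ) - a) = ∑ i ∈ Finset.range k, g i := by
  induction a with
  | zero => simp
  | succ a ih =>
    rw [← ih]
    cases k with
    | zero => simp
    | succ k =>
      rw [Finset.sum_range_succ', Finset.sum_range_succ (fun i : ℕ => g ((i : ℤ) - a))]
      congr 1
      · refine Finset.sum_congr rfl fun i _ => ?_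
        congr 1; push_cast; ring
      · rw [← hg]
        congr 1; push_cast; ring

/-- The integral of a step function with mesh `δ` supported on finitely many cells. -/
lemma integral_step (g : ℤ → ℝ) (S : Finset ℤ) (δ : ℝ) (hδ : 0 < δ) :
    ∫ s : ℝ, (if ⌊s / δ⌋ ∈ S then g ⌊s / δ⌋ else 0) = δ * ∑ i ∈ S, g i := by
  have e : (fun s : ℝ => if ⌊s / δ⌋ ∈ S then g ⌊s / δ⌋ else 0) = fun s =>
      ∑ i ∈ S, (Set.Ico (i * δ) ((i + 1) * δ)).indicator (fun _ => g i) s := by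
    funext s
    have : ∀ i : ℤ, (Set.Ico (i * δ) ((i + 1) * δ)).indicator (fun _ => g i) s
        = if ⌊s / δ⌋ = i then g i else 0 := by
      intro i
      rw [Set.indicator_apply]
      congr 1
      rw [Set.mem_Ico, Int.floor_eq_iff, le_div_iff₀ hδ, div_lt_iff₀ hδ]
    simp only [this, Finset.sum_ite_eq]
  rw [e, integral_finsetSum, Finset.mul_sum]
  · refine Finset.sum_congr rfl fun i _ => ?_
    rw [integral_indicator measurableSet_Ico, setIntegral_const, smul_eq_mul]
    have h0 : (i : ℝ) * δ ≤ (i + 1) * δ := by nlinarith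
    rw [Real.volume_real_Ico_of_le h0]
    ring
  · intro i _
    rw [integrable_indicator_iff measurableSet_Ico]
    exact integrableOn_const (by simp) (by simp)

lemma norm_sq_sub (N k : ℕ) (hN : 3 ≤ N) (r h : ℝ) (hh : 0 < h) (hh' : h < 1 / 2) (i : ℕ) :
    ‖xp N k r h 1 - xm N k r h (1 + i)‖ ^ 2 =
      (2 * r * h) ^ 2 * (1 + (1 - h ^ 2) * (Real.sin (i * Real.pi / k) / h) ^ 2) := by
  obtain ⟨M, rfl⟩ : ∃ M, N = M + 3 := ⟨N - 3, by omega⟩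
  have hs : Real.sqrt (1 - h ^ 2) ^ 2 = 1 - h ^ 2 := Real.sq_sqrt (by nlinarith)
  have e : 2 * (((1 + i : ℕ) : ℝ) - 1) * Real.pi / k = 2 * (i * Real.pi / k) := by
    push_cast; ring
  have hc := Real.cos_sq' (i * Real.pi / k)
  rw [EuclideanSpace.norm_sq_eq]
  simp only [xp, xm, e, Real.cos_two_mul, Real.sin_two_mul]
  simp [pt, Fin.sum_univ_succ]
  generalize Real.sin (i * Real.pi / k) = S at *
  generalize Real.cos (i * Real.pi / k) = C at *
  generalize Real.sqrt (1 - h ^ 2) = Q at *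
  field_simp
  rw [← hs]
  linear_combination (4 * r ^ 2 * Q ^ 2 * C ^ 2 - 4 * r ^ 2 * Q ^ 2) * hc

lemma norm_rpow (N k n : ℕ) (hN : 3 ≤ N) (r h : ℝ) (hr : 0 < r) (hh : 0 < h) (hh' : h < 1 / 2)
    (i : ℕ) :
    ‖xp N k r h 1 - xm N k r h (1 + i)‖ ^ (-(n : ℝ)) =
      ((2 * r * h) ^ n)⁻¹ * term (-(n : ℝ) / 2) h k i := by
  have h1 := norm_sq_sub N k hN r h hh hh' i
  have e : ∀ x : ℝ, 0 ≤ x → x ^ (-(n : ℝ)) = (x ^ 2) ^ (-(n : ℝ) / 2) := by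
    intro x hx
    rw [← Real.rpow_natCast x 2, ← Real.rpow_mul hx]
    congr 1; push_cast; ring
  have hb : 0 ≤ 1 - h ^ 2 := by nlinarith
  rw [e _ (norm_nonneg _), h1, Real.mul_rpow (by positivity) (by positivity),
    ← e _ (by positivity), Real.rpow_neg (by positivity), Real.rpow_natCast]
  simp [term]

/-- Jordan's inequality on the centred range of indices, for `s` in the cell of index `i`. -/
lemma term_bound (p h δ s : ℝ) (k : ℕ) (i : ℤ) (hp : p ≤ -1) (hh : 0 < h) (hh' : h < 1 / 2)
    (hk : 0 < k) (hδ : δ = Real.pi / (k * h)) (hδ1 : δ ≤ 1) (hi : 2 * |(i : ℝ)| ≤ k)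
    (h1 : i * δ ≤ s) (h2 : s < (i + 1) * δ) :
    term p h k i ≤ 16 * (1 + s ^ 2)⁻¹ := by
  have hk' : (0 : ℝ) < k := by positivity
  have hpi := Real.pi_pos
  have hx : |(i : ℝ) * Real.pi / k| ≤ Real.pi / 2 := by
    rw [abs_div, abs_mul, abs_of_pos hpi, abs_of_pos hk', div_le_iff₀ hk']
    nlinarith
  have hj := Real.mul_abs_le_abs_sin hx
  have hxu : (i : ℝ) * Real.pi / k = h * (i * δ) := by rw [hδ]; field_simp
  have hj2 : 1 / 2 * |(i : ℝ) * δ| ≤ |Real.sin (i * Real.pi / k) / h| := by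
    rw [abs_div, abs_of_pos hh, le_div_iff₀ hh]
    refine le_trans ?_ hj
    rw [hxu, abs_mul h, abs_of_pos hh]
    have : 1 / 2 ≤ 2 / Real.pi := by
      rw [div_le_div_iff₀ two_pos hpi]; linarith [Real.pi_le_four]
    nlinarith [mul_le_mul_of_nonneg_right this (mul_nonneg hh.le (abs_nonneg ((i : ℝ) * δ)))]
  have hj3 : 1 / 4 * ((i : ℝ) * δ) ^ 2 ≤ (Real.sin (i * Real.pi / k) / h) ^ 2 := by
    rw [← sq_abs (Real.sin _ / h), ← sq_abs ((i : ℝ) * δ)]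
    nlinarith [abs_nonneg ((i : ℝ) * δ)]
  have hb : 1 / 16 * (1 + s ^ 2) ≤
      1 + (1 - h ^ 2) * (Real.sin (i * Real.pi / k) / h) ^ 2 := by
    have : 3 / 4 ≤ 1 - h ^ 2 := by nlinarith
    have h3 := mul_le_mul this hj3 (by positivity) (by linarith)
    have h4 : s ^ 2 ≤ 2 * ((i : ℝ) * δ) ^ 2 + 2 := by
      have a1 : 0 ≤ s - i * δ := by linarith
      have a2 : s - i * δ ≤ 1 := by linarith
      nlinarith [sq_nonneg (s - 2 * (i * δ))]
    linarith [sq_nonneg ((i : ℝ) * δ)]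
  have hb1 : 1 ≤ 1 + (1 - h ^ 2) * (Real.sin (i * Real.pi / k) / h) ^ 2 := by
    have : 0 ≤ 1 - h ^ 2 := by nlinarith
    have := mul_nonneg this (sq_nonneg (Real.sin (i * Real.pi / k) / h))
    linarith
  calc term p h k i ≤ (1 + (1 - h ^ 2) * (Real.sin (i * Real.pi / k) / h) ^ 2) ^ (-1 : ℝ) :=
        Real.rpow_le_rpow_of_exponent_le hb1 hp
    _ = (1 + (1 - h ^ 2) * (Real.sin (i * Real.pi / k) / h) ^ 2)⁻¹ := Real.rpow_neg_one _
    _ ≤ (1 / 16 * (1 + s ^ 2))⁻¹ := inv_anti₀ (by positivity) hb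
    _ = 16 * (1 + s ^ 2)⁻¹ := by rw [mul_inv]; norm_num

/-- The `k` integers `-⌊k/2⌋, …, k - ⌊k/2⌋ - 1`. -/
noncomputable def centred (k : ℕ) : Finset ℤ := Finset.Ico (-((k / 2 : ℕ) : ℤ)) (k - (k / 2 : ℕ))

lemma sum_centred (g : ℤ → ℝ) (k : ℕ) (hg : ∀ i, g (i + k) = g i) :
    ∑ i ∈ centred k, g i = ∑ i ∈ Finset.range k, g i := by
  rw [← sum_shift g k hg (k / 2)]
  symm
  refine Finset.sum_bij (fun i _ => (i : ℤ) - (k / 2 : ℕ)) ?_ ?_ ?_ ?_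
  · intro i hi
    simp only [centred, Finset.mem_Ico, Finset.mem_range] at *
    omega
  · intro i _ j _ hij
    omega
  · intro b hb
    simp only [centred, Finset.mem_Ico] at hb
    exact ⟨(b + (k / 2 : ℕ)).toNat, by simp only [Finset.mem_range]; omega, by omega⟩
  · intro i _
    rfl

/-- Convergence of the centred Riemann sums, by dominated convergence. -/
lemma tendsto_riemann (p : ℝ) (hp : p ≤ -1) (hk : ℕ → ℝ)
    (hh1 : ∀ k, 0 < hk k ∧ hk k < 1 / 2)
    (hh2 : Tendsto hk atTop (𝓝 0))
    (hh3 : Tendsto (fun k : ℕ => (k : ℝ) * hk k) atTop atTop) :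
    Tendsto (fun k : ℕ => Real.pi / (k * hk k) * ∑ i ∈ centred k, term p (hk k) k i)
      atTop (𝓝 (∫ s : ℝ, (1 + s ^ 2) ^ p)) := by
  set δ : ℕ → ℝ := fun k => Real.pi / (k * hk k) with hδdef
  have hδ0 : Tendsto δ atTop (𝓝 0) := hh3.const_div_atTop _
  have hδpos : ∀ k, 0 < k → 0 < δ k := fun k h0 => by
    have := (hh1 k).1
    have : (0 : ℝ) < k := by positivity
    have := Real.pi_pos
    simp only [hδdef]; positivity
  have key : Tendsto (fun k : ℕ => ∫ s : ℝ,
      (if ⌊s / δ k⌋ ∈ centred k then term p (hk k) k ⌊s / δ k⌋ else 0))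
      atTop (𝓝 (∫ s : ℝ, (1 + s ^ 2) ^ p)) := by
    refine tendsto_integral_filter_of_dominated_convergence
      (fun s => 16 * (1 + s ^ 2)⁻¹) ?_ ?_ (integrable_inv_one_add_sq.const_mul _) ?_
    · refine Eventually.of_forall fun k => Measurable.aestronglyMeasurable ?_
      have hm : Measurable fun i : ℤ => if i ∈ centred k then term p (hk k) k i else 0 :=
        measurable_from_top
      exact hm.comp (Int.measurable_floor.comp (measurable_id.div_const (δ k)))
    · filter_upwards [hδ0.eventually_le_const one_pos, eventually_gt_atTop 0] with k hd h0
      refine Eventually.of_forall fun s => ?_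
      have hdp := hδpos k h0
      split_ifs with hmem
      · have hb : 0 ≤ 1 - hk k ^ 2 := by nlinarith [(hh1 k).1, (hh1 k).2]
        have hnn : 0 ≤ term p (hk k) k ⌊s / δ k⌋ := by unfold term; positivity
        rw [Real.norm_of_nonneg hnn]
        refine term_bound p (hk k) (δ k) s k _ hp (hh1 k).1 (hh1 k).2 h0 rfl hd ?_ ?_ ?_
        · simp only [centred, Finset.mem_Ico] at hmem
          have : 2 * |⌊s / δ k⌋| ≤ (k : ℤ) := by
            rcases abs_cases ⌊s / δ k⌋ with h | h <;> omega
          exact_mod_cast this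
        · rw [← le_div_iff₀ hdp]; exact Int.floor_le _
        · rw [← div_lt_iff₀ hdp]; exact Int.lt_floor_add_one _
      · simp only [norm_zero]; positivity
    · refine Eventually.of_forall fun s => ?_
      -- the left endpoint of the cell containing `s`
      set u : ℕ → ℝ := fun k => ⌊s / δ k⌋ * δ k with hu
      have hu_lim : Tendsto u atTop (𝓝 s) := by
        have hl : Tendsto (fun k => s - δ k) atTop (𝓝 s) := by
          simpa using hδ0.const_sub s
        refine tendsto_of_tendsto_of_tendsto_of_le_of_le' hl tendsto_const_nhds ?_ ?_
        · filter_upwards [eventually_gt_atTop 0] with k h0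
          have h := Int.lt_floor_add_one (s / δ k)
          rw [div_lt_iff₀ (hδpos k h0)] at h
          simp only [hu]; linarith
        · filter_upwards [eventually_gt_atTop 0] with k h0
          have h := Int.floor_le (s / δ k)
          rwa [le_div_iff₀ (hδpos k h0)] at h
      have hhu : Tendsto (fun k => hk k * u k) atTop (𝓝 0) := by
        simpa using hh2.mul hu_lim
      have hsinc : Tendsto (fun k => Real.sinc (hk k * u k)) atTop (𝓝 1) := by
        have := (Real.continuous_sinc.tendsto 0).comp hhu
        rwa [Real.sinc_zero] at this
      have hbase : Tendsto (fun k => 1 + (1 - hk k ^ 2) * (u k * Real.sinc (hk k * u k)) ^ 2)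
          atTop (𝓝 (1 + s ^ 2)) := by
        simpa using ((hh2.pow 2).const_sub 1).mul ((hu_lim.mul hsinc).pow 2) |>.const_add 1
      have hpow := hbase.rpow_const (p := p) (Or.inl (by positivity))
      refine hpow.congr' ?_
      have habs : Tendsto (fun k => |hk k * u k|) atTop (𝓝 0) := by simpa using hhu.abs
      filter_upwards [habs.eventually_le_const (show (0 : ℝ) < 1 / 2 by norm_num),
        eventually_ge_atTop 5] with k hle h5
      have h0 : 0 < k := by omega
      have hk' : (0 : ℝ) < k := by positivity
      have hh := (hh1 k).1
      have hx : hk k * u k = ⌊s / δ k⌋ * Real.pi / k := by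
        simp only [hu, hδdef]; field_simp
      -- `|i| π / k ≤ 1/2` and `π > 3` give `4 |i| ≤ k`, so that the index is in range
      have h4 : 4 * |⌊s / δ k⌋| ≤ (k : ℤ) := by
        rw [hx, abs_div, abs_mul, abs_of_pos Real.pi_pos, abs_of_pos hk', div_le_iff₀ hk'] at hle
        have : 4 * |(⌊s / δ k⌋ : ℝ)| ≤ (k : ℝ) := by
          nlinarith [Real.pi_gt_three, abs_nonneg (⌊s / δ k⌋ : ℝ)]
        exact_mod_cast this
      have hmem : ⌊s / δ k⌋ ∈ centred k := by
        simp only [centred, Finset.mem_Ico]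
        rcases abs_cases ⌊s / δ k⌋ with h | h <;> omega
      rw [if_pos hmem]
      unfold term
      rw [← hx]
      have hsin : u k * Real.sinc (hk k * u k) = Real.sin (hk k * u k) / hk k := by
        by_cases hz : hk k * u k = 0
        · have : u k = 0 := by
            rcases mul_eq_zero.mp hz with h | h
            · exact absurd h hh.ne'
            · exact h
          simp [this]
        · have : u k ≠ 0 := right_ne_zero_of_mul hz
          rw [Real.sinc_of_ne_zero hz]
          field_simp
      rw [hsin]
  refine key.congr' ?_
  filter_upwards [eventually_gt_atTop 0] with k h0
  exact integral_step _ _ _ (hδpos k h0)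

theorem stmt3 (N m : ℕ) (hm : 1 ≤ m) (hN : 2 * m + 3 ≤ N) (n : ℕ) (hn : n = N - 2 * m)
    (B₂ : ℝ)
    (hB₂ : B₂ = 2 ^ (-((n : ℝ) - 1)) * Real.pi⁻¹ *
      ∫ s in Set.Ioi (0 : ℝ), (1 + s ^ 2) ^ (-(n : ℝ) / 2))
    (hk rk : ℕ → ℝ)
    (hh1 : ∀ k, 0 < hk k ∧ hk k < 1 / 2)
    (hh2 : Filter.Tendsto hk Filter.atTop (nhds 0))
    (hh3 : Filter.Tendsto (fun k : ℕ => (k : ℝ) * hk k) Filter.atTop Filter.atTop)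
    (hh4 : Filter.Tendsto (fun k : ℕ => (k : ℝ) ^ (n - 3) * hk k ^ (n - 1)) Filter.atTop (nhds 0))
    (hr : ∀ k, 0 < rk k) :
    Filter.Tendsto
      (fun k => rk k ^ n * hk k ^ (n - 1) * Real.sqrt (1 - hk k ^ 2) / k *
        ∑ j ∈ Finset.Icc 1 k, ‖xp N k (rk k) (hk k) 1 - xm N k (rk k) (hk k) j‖ ^ (-(n : ℝ)))
      Filter.atTop (nhds B₂) := by
  have hn3 : 3 ≤ n := by omega
  have hn3' : (3 : ℝ) ≤ n := by exact_mod_cast hn3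
  have hR := tendsto_riemann (-(n : ℝ) / 2) (by linarith) hk hh1 hh2 hh3
  have hI : ∫ s : ℝ, (1 + s ^ 2) ^ (-(n : ℝ) / 2) =
      2 * ∫ s in Set.Ioi (0 : ℝ), (1 + s ^ 2) ^ (-(n : ℝ) / 2) := by
    rw [← integral_comp_abs (f := fun s : ℝ => (1 + s ^ 2) ^ (-(n : ℝ) / 2))]
    simp only [sq_abs]
  have hS : Tendsto (fun k => Real.sqrt (1 - hk k ^ 2)) atTop (𝓝 1) := by
    have := ((hh2.pow 2).const_sub 1).sqrt
    simpa using this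
  have hT := (hS.mul hR).const_mul ((2 ^ n)⁻¹ * Real.pi⁻¹)
  have hB : B₂ = (2 ^ n)⁻¹ * Real.pi⁻¹ * (1 * ∫ s : ℝ, (1 + s ^ 2) ^ (-(n : ℝ) / 2)) := by
    have e : (2 : ℝ) ^ (-((n : ℝ) - 1)) = (2 ^ n)⁻¹ * 2 := by
      rw [show -((n : ℝ) - 1) = -(n : ℝ) + 1 by ring, Real.rpow_add two_pos,
        Real.rpow_neg two_pos.le, Real.rpow_natCast, Real.rpow_one]
    rw [hB₂, hI, e]
    ring
  rw [hB]
  refine hT.congr' ?_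
  filter_upwards [eventually_gt_atTop 0] with k h0
  have hh := (hh1 k).1
  have hrk := hr k
  have hk' : (0 : ℝ) < k := by positivity
  have hsum : ∑ j ∈ Finset.Icc 1 k,
      ‖xp N k (rk k) (hk k) 1 - xm N k (rk k) (hk k) j‖ ^ (-(n : ℝ)) =
      ((2 * rk k * hk k) ^ n)⁻¹ * ∑ i ∈ centred k, term (-(n : ℝ) / 2) (hk k) k i := by
    rw [sum_centred _ k (term_periodic _ _ k h0), Finset.mul_sum,
      ← Finset.Ico_add_one_right_eq_Icc, Finset.sum_Ico_eq_sum_range]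
    exact Finset.sum_congr rfl fun i _ =>
      norm_rpow N k n (by omega) _ _ hrk hh (hh1 k).2 i
  rw [hsum]
  obtain ⟨q, rfl⟩ : ∃ q, n = q + 1 := ⟨n - 1, by omega⟩
  have hpi := Real.pi_ne_zero
  generalize ∑ i ∈ centred k, term (-((q + 1 : ℕ) : ℝ) / 2) (hk k) k i = T
  rw [Nat.add_sub_cancel]
  field_simp
  ring
end

section
/- Let N, m be positive integers with N ≥ 2m+3, let 0 < L₁ ≤ L₂ be real numbers and let ε₀ ∈ (0,1). Set B₀ = ∫_{ℝ^N} (1+|z|²)^{−(N+2m)/2} dz. Then there exists C > 0 such that for every Λ ∈ [L₁,L₂] and all x, x' ∈ ℝ^N with |x−x'| ≥ 2: |∫_{ℝ^N} U_{x,Λ}(y)^{(N+2m)/(N−2m)}·U_{x',Λ}(y) dy − B₀·Λ^{−(N−2m)}·|x−x'|^{−(N−2m)}| ≤ C·|x−x'|^{−(N−2m+2−ε₀)}. -/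
/-!
The dilation `z = Λ (y - x)` reduces the claim to bubbles of unit scale: with `D = Λ (x - x')`,
`k = (N - 2m) / 2` and `p = (N + 2m) / 2`, the integral of `(1 + |z|²) ^ (-p) (1 + |D + z|²) ^ (-k)`
has to be compared with `B₀ |D| ^ (-2k)` (`interaction_rescale`).

The weight is even, so `(1 + |D + z|²) ^ (-k)` may be replaced by its average over `z ↦ -z`. For
`|z| ≤ |D| / 2` the first order term of the expansion around `|D| ^ (-2k)` then cancels, and the
error is at most a constant times `|D| ^ (-2k - 2) (1 + |z|²)` (`near_field`). For `|z| > |D| / 2`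
the decay of the weight itself gives the required power of `|D|`. With `τ = 1 - ε₀ / 2`, both
regimes are dominated by `|D| ^ (-2(k + τ))` times `J z + J (D + z) + J (D - z)`, where
`J z = (1 + |z|²) ^ (-(p - τ))` (`pointwise_bound`). Since `2 (p - τ) = N + 2m - 2 + ε₀ > N`, the
function `J` is integrable, and the integral of each of its translates equals that of `J`
(`interaction_bound`).
-/

open MeasureTheory

/-- The standard bubble `U_{x,Λ}(y) = (Λ/(1+Λ²|y-x|²))^{(N-2m)/2}`. -/
noncomputable def U (N m : ℕ) (x : EuclideanSpace ℝ (Fin N)) (Λ : ℝ)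
    (y : EuclideanSpace ℝ (Fin N)) : ℝ :=
  (Λ / (1 + Λ ^ 2 * ‖y - x‖ ^ 2)) ^ (((N : ℝ) - 2 * m) / 2)

/-! ### Expansion of `t ^ (-k)` at `1` -/

/-- The tangent line at `1` lies below the convex function `t ↦ t ^ (-k)`. -/
lemma rpow_neg_ge_tangent {k t : ℝ} (hk : 0 ≤ k) (ht : 0 < t) :
    1 - k * (t - 1) ≤ t ^ (-k) := by
  rw [Real.rpow_def_of_pos ht]
  have h1 := Real.add_one_le_exp (Real.log t * -k)
  have h2 := Real.log_le_sub_one_of_pos ht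
  nlinarith

/-- Second order upper bound for `t ↦ t ^ (-k)` at `1`, uniform on `[1/4, ∞)`. -/
lemma rpow_neg_le_quadratic {k t : ℝ} (hk : 1 ≤ k) (ht : 1 / 4 ≤ t) :
    t ^ (-k) ≤ 1 - k * (t - 1) + (2 * k ^ 2 + 4 ^ k * (4 * k ^ 2)) * (t - 1) ^ 2 := by
  have ht0 : 0 < t := by linarith
  have h4 : (0 : ℝ) < 4 ^ k := by positivity
  by_cases h : 1 / 2 ≤ 1 + k * (t - 1)
  · -- Bernoulli bounds `t ^ k` below by `1 + k (t - 1)`, which stays away from zero here.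
    have hB : 1 + k * (t - 1) ≤ t ^ k := by
      have := one_add_mul_self_le_rpow_one_add (s := t - 1) (by linarith) hk
      simpa using this
    rw [Real.rpow_neg ht0.le]
    have h1 : (t ^ k)⁻¹ ≤ (1 + k * (t - 1))⁻¹ := inv_anti₀ (by linarith) hB
    have h2 : (1 + k * (t - 1))⁻¹ ≤ 1 - k * (t - 1) + 2 * (k * (t - 1)) ^ 2 := by
      rw [inv_le_iff_one_le_mul₀ (by linarith)]
      nlinarith [sq_nonneg (k * (t - 1))]
    have h3 : 0 ≤ 4 ^ k * (4 * k ^ 2) * (t - 1) ^ 2 := by positivity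
    nlinarith
  · push Not at h
    have h1 : t ^ (-k) ≤ 4 ^ k := by
      have := Real.rpow_le_rpow_of_nonpos (z := -k) (by norm_num) ht (by linarith)
      rwa [one_div, Real.inv_rpow (by norm_num), Real.rpow_neg (by norm_num : (0 : ℝ) ≤ 4),
        inv_inv] at this
    have h2 : 1 ≤ 4 * k ^ 2 * (t - 1) ^ 2 := by nlinarith
    have h3 : (4 : ℝ) ^ k * 1 ≤ 4 ^ k * (4 * k ^ 2 * (t - 1) ^ 2) := by gcongr
    have h4 : 0 ≤ 2 * k ^ 2 * (t - 1) ^ 2 := by positivity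
    nlinarith

/-! ### Pointwise estimates of the symmetrized error -/

/-- Near field estimate: averaging over the reflection `v ↦ -v` cancels the first order term of
the expansion, so the error is of the order `A / R`. -/
lemma near_field {k : ℝ} (hk : 1 ≤ k) {K : ℝ} (hK : 0 ≤ K) :
    ∃ C : ℝ, 0 < C ∧ ∀ R A v : ℝ, 0 < R → 1 ≤ A → A / R ≤ K → v ^ 2 ≤ 4 * R * (A - 1) →
      A - 1 ≤ R / 4 →
      |((R + A + v) ^ (-k) + (R + A - v) ^ (-k)) / 2 - R ^ (-k)| ≤ C * (R ^ (-k) * (A / R)) := by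
  obtain ⟨Q, hQ⟩ : ∃ Q : ℝ, Q = 2 * k ^ 2 + 4 ^ k * (4 * k ^ 2) := ⟨_, rfl⟩
  have hQ0 : 0 ≤ Q := by rw [hQ]; positivity
  refine ⟨k + Q * (K + 4), by positivity, ?_⟩
  intro R A v hR hA hAK hv hAR
  have hvabs : |v| ≤ R / 2 + 2 * (A - 1) :=
    abs_le_of_sq_le_sq (by nlinarith [sq_nonneg (R / 2 - 2 * (A - 1))]) (by linarith)
  obtain ⟨hv1, hv2⟩ := abs_le.1 hvabs
  obtain ⟨u, hu⟩ : ∃ u, u = A / R := ⟨_, rfl⟩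
  obtain ⟨w, hw⟩ : ∃ w, w = v / R := ⟨_, rfl⟩
  have hu0 : 0 < u := by rw [hu]; positivity
  have hwu : w ^ 2 ≤ 4 * u := by
    rw [hw, hu, div_pow, div_le_iff₀ (by positivity)]
    have : 4 * (A / R) * R ^ 2 = 4 * R * A := by field_simp
    nlinarith
  have e1 : R + A + v = R * (1 + u + w) := by rw [hu, hw]; field_simp
  have e2 : R + A - v = R * (1 + u - w) := by rw [hu, hw]; field_simp
  have t1 : 1 / 4 ≤ 1 + u + w := by
    have : R * (1 / 4) ≤ R * (1 + u + w) := by rw [← e1]; linarith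
    exact le_of_mul_le_mul_left this hR
  have t2 : 1 / 4 ≤ 1 + u - w := by
    have : R * (1 / 4) ≤ R * (1 + u - w) := by rw [← e2]; linarith
    exact le_of_mul_le_mul_left this hR
  rw [e1, e2, Real.mul_rpow hR.le (by linarith), Real.mul_rpow hR.le (by linarith), ← hu]
  have a1 := rpow_neg_ge_tangent (k := k) (by linarith) (show 0 < 1 + u + w by linarith)
  have a2 := rpow_neg_ge_tangent (k := k) (by linarith) (show 0 < 1 + u - w by linarith)
  have b1 := rpow_neg_le_quadratic hk t1
  have b2 := rpow_neg_le_quadratic hk t2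
  rw [← hQ] at b1 b2
  have hRk : 0 < R ^ (-k) := by positivity
  have main : |((1 + u + w) ^ (-k) + (1 + u - w) ^ (-k)) / 2 - 1| ≤ (k + Q * (K + 4)) * u := by
    have huK : u * u ≤ K * u := by rw [← hu] at hAK; gcongr
    have hq : Q * (u * u + w ^ 2) ≤ Q * ((K + 4) * u) := by gcongr; linarith
    have hku : 0 ≤ k * u := by positivity
    have hQu : 0 ≤ Q * (K + 4) * u := by positivity
    rw [abs_le]
    constructor <;> nlinarith
  calc _ = R ^ (-k) * |((1 + u + w) ^ (-k) + (1 + u - w) ^ (-k)) / 2 - 1| := by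
        rw [← abs_of_pos hRk, ← abs_mul, abs_of_pos hRk]; congr 1; ring
    _ ≤ R ^ (-k) * ((k + Q * (K + 4)) * u) := by gcongr
    _ = _ := by ring

/-- In the product one may replace the larger of the two bases by the smaller one. -/
lemma rpow_neg_mul_le_add {A T b k : ℝ} (hA : 0 < A) (hT : 0 < T) (hb : 0 ≤ b) (hk : 0 ≤ k) :
    A ^ (-b) * T ^ (-k) ≤ A ^ (-(b + k)) + T ^ (-(b + k)) := by
  have h1 : 0 < A ^ (-(b + k)) := by positivity
  have h2 : 0 < T ^ (-(b + k)) := by positivity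
  rcases le_total A T with h | h
  · have := Real.rpow_le_rpow_of_nonpos (z := -k) hA h (by linarith)
    calc A ^ (-b) * T ^ (-k) ≤ A ^ (-b) * A ^ (-k) := by gcongr
      _ = A ^ (-(b + k)) := by rw [← Real.rpow_add hA]; ring_nf
      _ ≤ _ := by linarith
  · have := Real.rpow_le_rpow_of_nonpos (z := -b) hT h (by linarith)
    calc A ^ (-b) * T ^ (-k) ≤ T ^ (-b) * T ^ (-k) := by gcongr
      _ = T ^ (-(b + k)) := by rw [← Real.rpow_add hT]; ring_nf
      _ ≤ _ := by linarith

/-- The pointwise estimate of the weighted, symmetrized error. Here `R = |D|²`, `A = 1 + |z|²` and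
`v = 2⟨D, z⟩`, so that `R + A ± v = 1 + |D ± z|²`. The gain is `R ^ (-τ) = |D| ^ (-2τ)`, paid for
by lowering the decay exponent of the weight from `p` to `p - τ`. -/
lemma pointwise_bound {k p τ r₀ : ℝ} (hk : 1 ≤ k) (hτ0 : 0 ≤ τ) (hτ1 : τ ≤ 1)
    (hp : k + τ ≤ p) (hr₀ : 0 < r₀) :
    ∃ C : ℝ, 0 < C ∧ ∀ R A v : ℝ, r₀ ≤ R → 1 ≤ A → v ^ 2 ≤ 4 * R * (A - 1) →
      0 < R + A + v → 0 < R + A - v →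
      |A ^ (-p) * (((R + A + v) ^ (-k) + (R + A - v) ^ (-k)) / 2 - R ^ (-k))| ≤
        C * R ^ (-(k + τ)) *
          (A ^ (-(p - τ)) + (R + A + v) ^ (-(p - τ)) + (R + A - v) ^ (-(p - τ))) := by
  obtain ⟨K, hKd⟩ : ∃ K : ℝ, K = 1 + 1 / r₀ := ⟨_, rfl⟩
  have hK1 : 1 ≤ K := by rw [hKd]; have : 0 < 1 / r₀ := by positivity
                         linarith
  obtain ⟨C₁, hC₁, near⟩ := near_field hk (K := K) (by linarith)
  have h4 : (0 : ℝ) < 4 ^ (k + τ) := by positivity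
  have h4' : (0 : ℝ) < 4 ^ τ := by positivity
  refine ⟨C₁ * K + 4 ^ (k + τ) + 4 ^ τ, by positivity, ?_⟩
  intro R A v hR hA hv hT1 hT2
  have hR0 : 0 < R := by linarith
  have hA0 : 0 < A := by linarith
  have jA : 0 < A ^ (-(p - τ)) := by positivity
  have j1 : 0 < (R + A + v) ^ (-(p - τ)) := by positivity
  have j2 : 0 < (R + A - v) ^ (-(p - τ)) := by positivity
  have hRk : 0 < R ^ (-k) := by positivity
  have hRkt : 0 < R ^ (-(k + τ)) := by positivity
  have hAp : 0 < A ^ (-p) := by positivity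
  by_cases hAR : A - 1 ≤ R / 4
  · have hAK : A / R ≤ K := by
      have : 1 / R ≤ 1 / r₀ := by gcongr
      have h2 : A / R ≤ (R / 4 + 1) / R := by gcongr; linarith
      have h3 : (R / 4 + 1) / R = 1 / 4 + 1 / R := by field_simp
      linarith
    have hn := near R A v hR0 hA hAK hv hAR
    -- `A / R` splits into `(A / R) ^ τ`, which trades decay in `A` for decay in `R`, and the
    -- bounded factor `(A / R) ^ (1 - τ)`.
    have hsplit : A ^ (-p) * (A / R) ≤ K * (A ^ (-(p - τ)) * R ^ (-τ)) := by
      have hq : 0 < A / R := by positivity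
      have e : A / R = (A / R) ^ τ * (A / R) ^ (1 - τ) := by
        rw [← Real.rpow_add hq]; simp
      have hb : (A / R) ^ (1 - τ) ≤ K := by
        calc (A / R) ^ (1 - τ) ≤ K ^ (1 - τ) := by
              apply Real.rpow_le_rpow hq.le hAK; linarith
          _ ≤ K ^ (1 : ℝ) := Real.rpow_le_rpow_of_exponent_le hK1 (by linarith)
          _ = K := Real.rpow_one K
      have e2 : A ^ (-p) * (A / R) ^ τ = A ^ (-(p - τ)) * R ^ (-τ) := by
        rw [Real.div_rpow hA0.le hR0.le, Real.rpow_neg hR0.le, ← div_eq_mul_inv, ← mul_div_assoc,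
          ← Real.rpow_add hA0]
        ring_nf
      calc A ^ (-p) * (A / R) = (A ^ (-p) * (A / R) ^ τ) * (A / R) ^ (1 - τ) := by
            conv_lhs => rw [e]
            ring
        _ ≤ (A ^ (-p) * (A / R) ^ τ) * K := by gcongr
        _ = _ := by rw [e2]; ring
    have hRsplit : R ^ (-(k + τ)) = R ^ (-k) * R ^ (-τ) := by
      rw [← Real.rpow_add hR0]; ring_nf
    rw [abs_mul, abs_of_pos hAp]
    calc _ ≤ A ^ (-p) * (C₁ * (R ^ (-k) * (A / R))) := by gcongr
      _ = C₁ * R ^ (-k) * (A ^ (-p) * (A / R)) := by ring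
      _ ≤ C₁ * R ^ (-k) * (K * (A ^ (-(p - τ)) * R ^ (-τ))) := by gcongr
      _ = (C₁ * K) * R ^ (-(k + τ)) * A ^ (-(p - τ)) := by rw [hRsplit]; ring
      _ ≤ _ := by gcongr <;> linarith
  · push Not at hAR
    have hA4 : R / 4 ≤ A := by linarith
    have conv4 : ∀ s : ℝ, 0 ≤ s → A ^ (-s) ≤ 4 ^ s * R ^ (-s) := by
      intro s hs
      calc A ^ (-s) ≤ (R / 4) ^ (-s) :=
            Real.rpow_le_rpow_of_nonpos (by positivity) hA4 (by linarith)
        _ = 4 ^ s * R ^ (-s) := by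
            rw [Real.div_rpow hR0.le (by norm_num), Real.rpow_neg (by norm_num : (0 : ℝ) ≤ 4),
              div_inv_eq_mul, mul_comm]
    have far : ∀ T : ℝ, 0 < T → A ^ (-p) * T ^ (-k) ≤
        4 ^ (k + τ) * R ^ (-(k + τ)) * (A ^ (-(p - τ)) + T ^ (-(p - τ))) := by
      intro T hT
      have h := rpow_neg_mul_le_add (b := p - (k + τ)) (k := k) hA0 hT (by linarith) (by linarith)
      have e : p - (k + τ) + k = p - τ := by ring
      rw [e] at h
      have e2 : A ^ (-p) = A ^ (-(k + τ)) * A ^ (-(p - (k + τ))) := by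
        rw [← Real.rpow_add hA0]; ring_nf
      calc A ^ (-p) * T ^ (-k) = A ^ (-(k + τ)) * (A ^ (-(p - (k + τ))) * T ^ (-k)) := by
            rw [e2]; ring
        _ ≤ (4 ^ (k + τ) * R ^ (-(k + τ))) * (A ^ (-(p - τ)) + T ^ (-(p - τ))) := by
            gcongr
            exact conv4 _ (by linarith)
    have f1 := far _ hT1
    have f2 := far _ hT2
    have f3 : A ^ (-p) * R ^ (-k) ≤ 4 ^ τ * R ^ (-(k + τ)) * A ^ (-(p - τ)) := by
      have e2 : A ^ (-p) = A ^ (-τ) * A ^ (-(p - τ)) := by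
        rw [← Real.rpow_add hA0]; ring_nf
      have e3 : R ^ (-(k + τ)) = R ^ (-τ) * R ^ (-k) := by
        rw [← Real.rpow_add hR0]; ring_nf
      have := conv4 τ hτ0
      calc A ^ (-p) * R ^ (-k) = A ^ (-τ) * A ^ (-(p - τ)) * R ^ (-k) := by rw [e2]
        _ ≤ 4 ^ τ * R ^ (-τ) * A ^ (-(p - τ)) * R ^ (-k) := by gcongr
        _ = _ := by rw [e3]; ring
    have p1 : 0 < A ^ (-p) * (R + A + v) ^ (-k) := by positivity
    have p2 : 0 < A ^ (-p) * (R + A - v) ^ (-k) := by positivity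
    have p3 : 0 < A ^ (-p) * R ^ (-k) := by positivity
    have q1 : 0 < 4 ^ (k + τ) * R ^ (-(k + τ)) * (R + A + v) ^ (-(p - τ)) := by positivity
    have q2 : 0 < 4 ^ (k + τ) * R ^ (-(k + τ)) * (R + A - v) ^ (-(p - τ)) := by positivity
    have q3 : 0 < C₁ * K * R ^ (-(k + τ)) *
      (A ^ (-(p - τ)) + (R + A + v) ^ (-(p - τ)) + (R + A - v) ^ (-(p - τ))) := by positivity
    have q4 : 0 < 4 ^ τ * R ^ (-(k + τ)) * (R + A + v) ^ (-(p - τ)) := by positivity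
    have q5 : 0 < 4 ^ τ * R ^ (-(k + τ)) * (R + A - v) ^ (-(p - τ)) := by positivity
    have q6 : 0 < 4 ^ τ * R ^ (-(k + τ)) * A ^ (-(p - τ)) := by positivity
    have q7 : 0 < 4 ^ (k + τ) * R ^ (-(k + τ)) * A ^ (-(p - τ)) := by positivity
    rw [abs_le]
    constructor <;> linarith

/-! ### Integral estimates and scaling -/

/-- The rescaled statement: the interaction integral of two bubbles of unit scale whose centers
differ by `D`. -/
lemma interaction_bound (N : ℕ) {k p τ δ : ℝ} (hk : 1 ≤ k) (hτ0 : 0 ≤ τ) (hτ1 : τ ≤ 1)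
    (hp : k + τ ≤ p) (hpN : (N : ℝ) < 2 * (p - τ)) (hδ : 0 < δ) :
    ∃ C : ℝ, 0 < C ∧ ∀ D : EuclideanSpace ℝ (Fin N), δ ≤ ‖D‖ →
      |(∫ z : EuclideanSpace ℝ (Fin N), (1 + ‖z‖ ^ 2) ^ (-p) * (1 + ‖D + z‖ ^ 2) ^ (-k)) -
        (∫ z : EuclideanSpace ℝ (Fin N), (1 + ‖z‖ ^ 2) ^ (-p)) * ‖D‖ ^ (-(2 * k))| ≤
        C * ‖D‖ ^ (-(2 * (k + τ))) := by
  obtain ⟨C, hC, hb⟩ := pointwise_bound hk hτ0 hτ1 hp (r₀ := δ ^ 2) (by positivity)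
  have hJint : ∀ s : ℝ, (N : ℝ) < 2 * s →
      Integrable (fun z : EuclideanSpace ℝ (Fin N) => (1 + ‖z‖ ^ 2) ^ (-s)) := by
    intro s hs
    have := integrable_rpow_neg_one_add_norm_sq (E := EuclideanSpace ℝ (Fin N))
      (μ := volume) (r := 2 * s) (by simpa using hs)
    have e : -(2 * s) / 2 = -s := by ring
    simpa only [e] using this
  have hw := hJint p (by linarith)
  have hJ := hJint (p - τ) hpN
  obtain ⟨I, hI⟩ : ∃ I, I = ∫ z : EuclideanSpace ℝ (Fin N), (1 + ‖z‖ ^ 2) ^ (-(p - τ)) :=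
    ⟨_, rfl⟩
  have hI0 : 0 ≤ I := by rw [hI]; exact integral_nonneg fun z => by positivity
  refine ⟨C * (3 * I) + 1, by positivity, ?_⟩
  intro D hD
  have hD0 : 0 < ‖D‖ := by linarith
  have hcont : ∀ s : ℝ, Continuous fun z : EuclideanSpace ℝ (Fin N) => (1 + ‖z‖ ^ 2) ^ s :=
    fun s => Continuous.rpow_const (by fun_prop) fun z => Or.inl (by positivity)
  have hprod : ∀ f : EuclideanSpace ℝ (Fin N) → EuclideanSpace ℝ (Fin N), Continuous f →
      Integrable fun z : EuclideanSpace ℝ (Fin N) =>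
        (1 + ‖z‖ ^ 2) ^ (-p) * (1 + ‖f z‖ ^ 2) ^ (-k) := by
    intro f hf
    refine hw.mono' ((hcont _).mul ((hcont (-k)).comp hf)).aestronglyMeasurable
      (Filter.Eventually.of_forall fun z => ?_)
    rw [Real.norm_of_nonneg (by positivity)]
    apply mul_le_of_le_one_right (by positivity)
    exact Real.rpow_le_one_of_one_le_of_nonpos (by nlinarith [sq_nonneg ‖f z‖]) (by linarith)
  have hi1 := hprod (fun z => D + z) (by fun_prop)
  have hi2 := hprod (fun z => D - z) (by fun_prop)
  have hsymm : (∫ z : EuclideanSpace ℝ (Fin N), (1 + ‖z‖ ^ 2) ^ (-p) * (1 + ‖D - z‖ ^ 2) ^ (-k)) =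
      ∫ z : EuclideanSpace ℝ (Fin N), (1 + ‖z‖ ^ 2) ^ (-p) * (1 + ‖D + z‖ ^ 2) ^ (-k) := by
    rw [← integral_neg_eq_self]
    simp
  have hDk : ∀ s : ℝ, (‖D‖ ^ 2) ^ (-s) = ‖D‖ ^ (-(2 * s)) := by
    intro s
    rw [← Real.rpow_natCast, ← Real.rpow_mul hD0.le]
    congr 1; push_cast; ring
  have hrepr : (∫ z : EuclideanSpace ℝ (Fin N), (1 + ‖z‖ ^ 2) ^ (-p) * (1 + ‖D + z‖ ^ 2) ^ (-k)) -
        (∫ z : EuclideanSpace ℝ (Fin N), (1 + ‖z‖ ^ 2) ^ (-p)) * ‖D‖ ^ (-(2 * k)) =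
      ∫ z : EuclideanSpace ℝ (Fin N), (1 + ‖z‖ ^ 2) ^ (-p) *
        (((1 + ‖D + z‖ ^ 2) ^ (-k) + (1 + ‖D - z‖ ^ 2) ^ (-k)) / 2 - (‖D‖ ^ 2) ^ (-k)) := by
    have e : (fun z : EuclideanSpace ℝ (Fin N) => (1 + ‖z‖ ^ 2) ^ (-p) *
        (((1 + ‖D + z‖ ^ 2) ^ (-k) + (1 + ‖D - z‖ ^ 2) ^ (-k)) / 2 - (‖D‖ ^ 2) ^ (-k))) =
        fun z => ((1 + ‖z‖ ^ 2) ^ (-p) * (1 + ‖D + z‖ ^ 2) ^ (-k) +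
          (1 + ‖z‖ ^ 2) ^ (-p) * (1 + ‖D - z‖ ^ 2) ^ (-k)) / 2 -
          (1 + ‖z‖ ^ 2) ^ (-p) * (‖D‖ ^ 2) ^ (-k) := by
      funext z; ring
    rw [e, integral_sub ((hi1.fun_add hi2).div_const 2) (hw.mul_const _), integral_div,
      integral_add hi1 hi2, hsymm, integral_mul_const, hDk]
    ring
  rw [hrepr, ← Real.norm_eq_abs]
  have hJ1 := hJ.comp_add_left D
  have hJ2 := hJ.comp_sub_left D
  refine (norm_integral_le_of_norm_le (g := fun z => C * (‖D‖ ^ 2) ^ (-(k + τ)) *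
    ((1 + ‖z‖ ^ 2) ^ (-(p - τ)) + (1 + ‖D + z‖ ^ 2) ^ (-(p - τ)) +
      (1 + ‖D - z‖ ^ 2) ^ (-(p - τ)))) (((hJ.add hJ1).add hJ2).const_mul _)
    (Filter.Eventually.of_forall fun z => ?_)).trans ?_
  · have e1 : 1 + ‖D + z‖ ^ 2 = ‖D‖ ^ 2 + (1 + ‖z‖ ^ 2) + 2 * inner ℝ D z := by
      rw [norm_add_sq_real]; ring
    have e2 : 1 + ‖D - z‖ ^ 2 = ‖D‖ ^ 2 + (1 + ‖z‖ ^ 2) - 2 * inner ℝ D z := by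
      rw [norm_sub_sq_real]; ring
    have hv : (2 * inner ℝ D z) ^ 2 ≤ 4 * ‖D‖ ^ 2 * (1 + ‖z‖ ^ 2 - 1) := by
      have h := abs_real_inner_le_norm D z
      have h2 : (inner ℝ D z) ^ 2 ≤ (‖D‖ * ‖z‖) ^ 2 := by
        rw [← sq_abs]; gcongr
      nlinarith
    have := hb (‖D‖ ^ 2) (1 + ‖z‖ ^ 2) (2 * inner ℝ D z) (by gcongr)
      (by nlinarith [sq_nonneg ‖z‖]) hv (by rw [← e1]; positivity) (by rw [← e2]; positivity)
    rw [← e1, ← e2] at this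
    exact this
  · rw [integral_const_mul, integral_add (hJ.fun_add hJ1) hJ2, integral_add hJ hJ1,
      integral_add_left_eq_self (fun z : EuclideanSpace ℝ (Fin N) => (1 + ‖z‖ ^ 2) ^ (-(p - τ))) D,
      integral_sub_left_eq_self (fun z : EuclideanSpace ℝ (Fin N) => (1 + ‖z‖ ^ 2) ^ (-(p - τ)))
        volume D, ← hI, hDk]
    have : 0 < ‖D‖ ^ (-(2 * (k + τ))) := by positivity
    nlinarith

/-- The dilation `z = Λ (y - x)` turns both bubbles into bubbles of unit scale. All powers of `Λ`
cancel against the Jacobian, because the total exponent of `U` is critical. -/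
lemma interaction_rescale (N m : ℕ) (hN : 2 * m + 3 ≤ N) {Λ : ℝ} (hΛ : 0 < Λ)
    (x x' : EuclideanSpace ℝ (Fin N)) :
    (∫ y : EuclideanSpace ℝ (Fin N),
        U N m x Λ y ^ (((N : ℝ) + 2 * m) / ((N : ℝ) - 2 * m)) * U N m x' Λ y) =
      ∫ z : EuclideanSpace ℝ (Fin N), (1 + ‖z‖ ^ 2) ^ (-(((N : ℝ) + 2 * m) / 2)) *
        (1 + ‖Λ • (x - x') + z‖ ^ 2) ^ (-(((N : ℝ) - 2 * m) / 2)) := by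
  have hNR : (2 * m + 3 : ℝ) ≤ N := by exact_mod_cast hN
  have ha : (N : ℝ) - 2 * m ≠ 0 := by linarith
  obtain ⟨G, hG⟩ : ∃ G : EuclideanSpace ℝ (Fin N) → ℝ, G = fun z =>
      (1 + ‖z‖ ^ 2) ^ (-(((N : ℝ) + 2 * m) / 2)) *
        (1 + ‖Λ • (x - x') + z‖ ^ 2) ^ (-(((N : ℝ) - 2 * m) / 2)) := ⟨_, rfl⟩
  have hpt : ∀ y : EuclideanSpace ℝ (Fin N),
      U N m x Λ y ^ (((N : ℝ) + 2 * m) / ((N : ℝ) - 2 * m)) * U N m x' Λ y =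
        Λ ^ N * G (Λ • (y - x)) := by
    intro y
    have n1 : ‖Λ • (y - x)‖ ^ 2 = Λ ^ 2 * ‖y - x‖ ^ 2 := by
      rw [norm_smul, mul_pow, Real.norm_of_nonneg hΛ.le]
    have n2 : ‖Λ • (x - x') + Λ • (y - x)‖ ^ 2 = Λ ^ 2 * ‖y - x'‖ ^ 2 := by
      rw [← smul_add, norm_smul, mul_pow, Real.norm_of_nonneg hΛ.le]
      congr 3; abel
    have hS : 0 < 1 + Λ ^ 2 * ‖y - x‖ ^ 2 := by positivity
    have hS' : 0 < 1 + Λ ^ 2 * ‖y - x'‖ ^ 2 := by positivity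
    have hexp : ((N : ℝ) - 2 * m) / 2 * (((N : ℝ) + 2 * m) / ((N : ℝ) - 2 * m)) =
        ((N : ℝ) + 2 * m) / 2 := by field_simp
    have hΛN : Λ ^ N = Λ ^ (((N : ℝ) + 2 * m) / 2) * Λ ^ (((N : ℝ) - 2 * m) / 2) := by
      rw [← Real.rpow_add hΛ, ← Real.rpow_natCast]
      congr 1; ring
    rw [hG]
    simp only [U, n1, n2]
    rw [← Real.rpow_mul (by positivity), hexp, Real.div_rpow hΛ.le hS.le,
      Real.div_rpow hΛ.le hS'.le, hΛN, Real.rpow_neg hS.le, Real.rpow_neg hS'.le]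
    ring
  simp_rw [hpt]
  rw [integral_const_mul, integral_sub_right_eq_self (fun y => G (Λ • y)) x,
    Measure.integral_comp_smul, ← hG, abs_of_pos (by positivity), smul_eq_mul, ← mul_assoc]
  simp [hΛ.ne']

theorem stmt4 (N m : ℕ) (hm : 1 ≤ m) (hN : 2 * m + 3 ≤ N)
    (L₁ L₂ : ℝ) (hL1 : 0 < L₁) (hL12 : L₁ ≤ L₂)
    (ε₀ : ℝ) (hε₀0 : 0 < ε₀) (hε₀1 : ε₀ < 1)
    (B₀ : ℝ)
    (hB₀ : B₀ = ∫ z : EuclideanSpace ℝ (Fin N), (1 + ‖z‖ ^ 2) ^ (-((N : ℝ) + 2 * m) / 2)) :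
    ∃ C : ℝ, 0 < C ∧ ∀ Λ : ℝ, L₁ ≤ Λ → Λ ≤ L₂ →
      ∀ x x' : EuclideanSpace ℝ (Fin N), 2 ≤ ‖x - x'‖ →
      |(∫ y : EuclideanSpace ℝ (Fin N),
          U N m x Λ y ^ (((N : ℝ) + 2 * m) / ((N : ℝ) - 2 * m)) * U N m x' Λ y) -
          B₀ * Λ ^ (-((N : ℝ) - 2 * m)) * ‖x - x'‖ ^ (-((N : ℝ) - 2 * m))| ≤
        C * ‖x - x'‖ ^ (-((N : ℝ) - 2 * m + 2 - ε₀)) := by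
  have hNR : (2 * m + 3 : ℝ) ≤ N := by exact_mod_cast hN
  have hmR : (1 : ℝ) ≤ m := by exact_mod_cast hm
  -- `2τ = 2 - ε₀ < 2 ≤ 2m` keeps `(1 + |z|²) ^ (-(p - τ))` integrable.
  obtain ⟨C, hC, hb⟩ := interaction_bound N (k := ((N : ℝ) - 2 * m) / 2)
    (p := ((N : ℝ) + 2 * m) / 2) (τ := 1 - ε₀ / 2) (δ := 2 * L₁) (by linarith) (by linarith)
    (by linarith) (by linarith) (by linarith) (by linarith)
  refine ⟨C * L₁ ^ (-((N : ℝ) - 2 * m + 2 - ε₀)), by positivity, ?_⟩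
  intro Λ hΛ1 _ x x' hx
  have hΛ : 0 < Λ := by linarith
  have hn : ‖Λ • (x - x')‖ = Λ * ‖x - x'‖ := by rw [norm_smul, Real.norm_of_nonneg hΛ.le]
  have h := hb (Λ • (x - x')) (by rw [hn]; nlinarith)
  rw [← interaction_rescale N m hN hΛ x x', hn, Real.mul_rpow hΛ.le (norm_nonneg _),
    Real.mul_rpow hΛ.le (norm_nonneg _)] at h
  have e1 : -(2 * (((N : ℝ) - 2 * m) / 2)) = -((N : ℝ) - 2 * m) := by ring
  have e2 : -(2 * (((N : ℝ) - 2 * m) / 2 + (1 - ε₀ / 2))) = -((N : ℝ) - 2 * m + 2 - ε₀) := by ring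
  have e3 : -(((N : ℝ) + 2 * m) / 2) = -((N : ℝ) + 2 * m) / 2 := by ring
  rw [e1, e2, e3, ← hB₀, ← mul_assoc, ← mul_assoc] at h
  refine h.trans ?_
  have := Real.rpow_le_rpow_of_nonpos (z := -((N : ℝ) - 2 * m + 2 - ε₀)) hL1 hΛ1 (by linarith)
  gcongr
end

section
/- Let N, m be positive integers with N ≥ 2m+3, set n = N−2m, and let α ∈ (1, n). Then there exists C > 0 such that for every integer k ≥ 2, every r > 0 and every h ∈ (0, 1/2] with h·k ≥ 1, and every y ∈ Ω₁⁺: ∑_{j=2}^k (1+|y−x⁺_{k,j,r,h}|)^{−n} + ∑_{j=1}^k (1+|y−x⁻_{k,j,r,h}|)^{−n} ≤ C·(1+|y−x⁺_{k,1,r,h}|)^{−(n−α)}·(k/r)^α. -/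
/-- The coordinates beyond the third contribute the same amount `K` to every distance. -/
lemma exists_norm_sub_pt_sq (N : ℕ) (hN : 3 ≤ N) (y : EuclideanSpace ℝ (Fin N)) :
    ∃ K : ℝ, 0 ≤ K ∧ ∀ a b c : ℝ, ‖y - pt N a b c‖ ^ 2 =
      (y ⟨0, by omega⟩ - a) ^ 2 + (y ⟨1, by omega⟩ - b) ^ 2 + (y ⟨2, by omega⟩ - c) ^ 2 + K := by
  obtain ⟨M, rfl⟩ : ∃ M, N = M + 3 := ⟨N - 3, by omega⟩
  refine ⟨∑ i : Fin M, (y i.succ.succ.succ) ^ 2, by positivity, fun a b c => ?_⟩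
  rw [EuclideanSpace.norm_sq_eq, Fin.sum_univ_succ, Fin.sum_univ_succ, Fin.sum_univ_succ]
  have h0 : (pt (M + 3) a b c) ⟨0, by omega⟩ = a := rfl
  have h1 : (pt (M + 3) a b c) ⟨1, by omega⟩ = b := rfl
  have h2 : (pt (M + 3) a b c) ⟨2, by omega⟩ = c := rfl
  have h3 : ∀ i : Fin M, (pt (M + 3) a b c) i.succ.succ.succ = 0 := fun i => by simp [pt]
  change ‖(y - pt (M + 3) a b c) ⟨0, by omega⟩‖ ^ 2 + (‖(y - pt (M + 3) a b c) ⟨1, by omega⟩‖ ^ 2 +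
    (‖(y - pt (M + 3) a b c) ⟨2, by omega⟩‖ ^ 2 +
      ∑ i : Fin M, ‖(y - pt (M + 3) a b c) i.succ.succ.succ‖ ^ 2)) = _
  simp only [PiLp.sub_apply, h0, h1, h2, h3, Real.norm_eq_abs, sq_abs, sub_zero]
  ring

/-- In the plane, a point of the sector of half-angle `p` around the first axis is at least as close
to `(s, 0)` as to the point `(s cos 2t, s sin 2t)`, for `p ≤ t ≤ π - p`. -/
lemma planar_closest {u v s p t : ℝ} (hs : 0 ≤ s) (hp : 0 ≤ p) (hp2 : p ≤ Real.pi / 2)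
    (h1 : p ≤ t) (h2 : t ≤ Real.pi - p) (hu : Real.cos p * √(u ^ 2 + v ^ 2) ≤ u) :
    (u - s) ^ 2 + v ^ 2 ≤ (u - s * Real.cos (2 * t)) ^ 2 + (v - s * Real.sin (2 * t)) ^ 2 := by
  have hcp : 0 ≤ Real.cos p := Real.cos_nonneg_of_mem_Icc ⟨by linarith, hp2⟩
  have hsp : 0 ≤ Real.sin p := Real.sin_nonneg_of_nonneg_of_le_pi hp (by linarith)
  have hu0 : 0 ≤ u := le_trans (by positivity) hu
  have hct : |Real.cos t| ≤ Real.cos p := by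
    rw [abs_le]
    constructor
    · rw [← Real.cos_pi_sub]
      exact Real.cos_le_cos_of_nonneg_of_le_pi (by linarith) (by linarith) h2
    · exact Real.cos_le_cos_of_nonneg_of_le_pi hp (by linarith) h1
  have hst0 : 0 ≤ Real.sin t := Real.sin_nonneg_of_nonneg_of_le_pi (by linarith) (by linarith)
  have e1 := Real.sin_sq_add_cos_sq t
  have e2 := Real.sin_sq_add_cos_sq p
  have hst : Real.sin p ≤ Real.sin t := by
    apply le_of_sq_le_sq _ hst0
    have : Real.cos t ^ 2 ≤ Real.cos p ^ 2 := sq_le_sq' (by linarith [abs_le.1 hct]) (abs_le.1 hct).2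
    linarith
  have hv : |v| * Real.cos p ≤ u * Real.sin p := by
    apply le_of_sq_le_sq _ (by positivity)
    have h3 : (Real.cos p * √(u ^ 2 + v ^ 2)) ^ 2 ≤ u ^ 2 := pow_le_pow_left₀ (by positivity) hu 2
    rw [mul_pow, Real.sq_sqrt (by positivity)] at h3
    rw [mul_pow, mul_pow, sq_abs]
    have : Real.sin p ^ 2 = 1 - Real.cos p ^ 2 := by linarith
    rw [this]; linarith
  have hmain : v * Real.cos t ≤ u * Real.sin t :=
    calc v * Real.cos t ≤ |v| * |Real.cos t| := by rw [← abs_mul]; exact le_abs_self _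
      _ ≤ |v| * Real.cos p := by gcongr
      _ ≤ u * Real.sin p := hv
      _ ≤ u * Real.sin t := by gcongr
  -- The difference of the two sides is `4 s sin t (u sin t - v cos t)`.
  have hfin : 0 ≤ s * Real.sin t * (u * Real.sin t - v * Real.cos t) :=
    mul_nonneg (by positivity) (by linarith)
  rw [Real.cos_two_mul, Real.sin_two_mul]
  have e3 : Real.cos t ^ 2 = 1 - Real.sin t ^ 2 := by linarith
  have e4 : Real.cos t ^ 4 = (1 - Real.sin t ^ 2) ^ 2 := by rw [← e3]; ring
  ring_nf
  ring_nf at hfin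
  rw [e4, e3]
  nlinarith

/-- If `(s, 0)` is at least as close to `(u, v)` as `(s cos 2t, s sin 2t)` is, then the latter is at
distance at least half of the chord `2 s sin t`. -/
lemma planar_lower {u v s t : ℝ}
    (h : (u - s) ^ 2 + v ^ 2 ≤ (u - s * Real.cos (2 * t)) ^ 2 + (v - s * Real.sin (2 * t)) ^ 2) :
    (s * Real.sin t) ^ 2 ≤ (u - s * Real.cos (2 * t)) ^ 2 + (v - s * Real.sin (2 * t)) ^ 2 := by
  have e1 := Real.sin_sq_add_cos_sq (2 * t)
  have e2 : Real.cos (2 * t) = 1 - 2 * Real.sin t ^ 2 := by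
    rw [Real.cos_two_mul]; linarith [Real.sin_sq_add_cos_sq t]
  set c := Real.cos (2 * t)
  set d := Real.sin (2 * t)
  have e3 : (s * Real.sin t) ^ 2 = s ^ 2 * (1 - c) / 2 := by rw [e2]; ring
  have e4 : s ^ 2 * d ^ 2 = s ^ 2 * (1 - c ^ 2) := by rw [← e1]; ring
  rw [e3]
  -- The parallelogram law.
  nlinarith [sq_nonneg (2 * u - s - s * c), sq_nonneg (2 * v - s * d)]

/-- Jordan's inequality on `[0, π]`, at the angle `i π / k`. -/
lemma two_mul_div_le_sin {k i : ℝ} (hi : 0 ≤ i) (hik : i ≤ k) (hk : 0 < k) :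
    2 * min i (k - i) / k ≤ Real.sin (i * Real.pi / k) := by
  have hpi := Real.pi_pos
  have key : ∀ x : ℝ, 0 ≤ x → 2 * x ≤ k → 2 * x / k ≤ Real.sin (x * Real.pi / k) := by
    intro x hx hxk
    have := Real.mul_le_sin (x := x * Real.pi / k) (by positivity)
      (by rw [div_le_div_iff₀ hk two_pos]; nlinarith)
    convert this using 1
    field_simp
  rcases le_total (2 * i) k with h | h
  · rw [min_eq_left (by linarith)]; exact key i hi h
  · rw [min_eq_right (by linarith)]
    have := key (k - i) (by linarith) (by linarith)
    rwa [show (k - i) * Real.pi / k = Real.pi - i * Real.pi / k by field_simp,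
      Real.sin_pi_sub] at this

/-- Splitting the exponent: one factor is measured by the distance `e ≤ d` to the nearest point, the
other by the lower bound `r μ / k` on `d`. -/
lemma rpow_split {n α d e r k μ : ℝ} (hα : 0 < α) (hαn : α < n) (he : 0 ≤ e) (hed : e ≤ d)
    (hr : 0 < r) (hk : 0 < k) (hμ : 0 < μ) (hd : r * μ / k ≤ d) :
    (1 + d) ^ (-n) ≤ (1 + e) ^ (-(n - α)) * (k / r) ^ α * μ ^ (-α) := by
  have h1 : (1 + d) ^ (-n) = (1 + d) ^ (-(n - α)) * (1 + d) ^ (-α) := by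
    rw [← Real.rpow_add (by linarith)]; congr 1; ring
  have h2 : (k / r) ^ α * μ ^ (-α) = (r * μ / k) ^ (-α) := by
    rw [Real.rpow_neg hμ.le, Real.rpow_neg (by positivity), ← Real.inv_rpow hμ.le,
      ← Real.mul_rpow (by positivity) (by positivity), ← Real.inv_rpow (by positivity)]
    congr 1
    field_simp
  rw [h1, mul_assoc, h2]
  apply mul_le_mul
  · exact Real.rpow_le_rpow_of_nonpos (by linarith) (by linarith) (by linarith)
  · exact Real.rpow_le_rpow_of_nonpos (by positivity) (by linarith) (by linarith)
  · exact Real.rpow_nonneg (by linarith) _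
  · exact Real.rpow_nonneg (by linarith) _

lemma sum_min_rpow_le {α : ℝ} (hα : 1 < α) (k : ℕ) :
    ∑ j ∈ Finset.Icc 2 k, (min ((j : ℝ) - 1) (k - ((j : ℝ) - 1))) ^ (-α) ≤
      2 * ∑' i : ℕ, (i : ℝ) ^ (-α) := by
  have hs : Summable (fun i : ℕ => (i : ℝ) ^ (-α)) := Real.summable_nat_rpow.2 (by linarith)
  have hnn : ∀ i : ℕ, 0 ≤ (i : ℝ) ^ (-α) := fun i => by positivity
  have hle : ∀ f : ℕ → ℕ, Set.InjOn f (Finset.Icc 2 k : Finset ℕ) →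
      ∑ j ∈ Finset.Icc 2 k, ((f j : ℕ) : ℝ) ^ (-α) ≤ ∑' i : ℕ, (i : ℝ) ^ (-α) := by
    intro f hf
    rw [← Finset.sum_image (f := fun i : ℕ => (i : ℝ) ^ (-α)) hf]
    exact hs.sum_le_tsum _ (fun i _ => hnn i)
  have h1 := hle (fun j => j - 1) (by
    intro a ha b hb hab; simp at ha hb hab; omega)
  have h2 := hle (fun j => k + 1 - j) (by
    intro a ha b hb hab; simp at ha hb hab; omega)
  calc _ ≤ ∑ j ∈ Finset.Icc 2 k, (((j - 1 : ℕ) : ℝ) ^ (-α) + ((k + 1 - j : ℕ) : ℝ) ^ (-α)) := by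
        apply Finset.sum_le_sum
        intro j hj
        rw [Finset.mem_Icc] at hj
        rw [Nat.cast_sub (by omega : 1 ≤ j), Nat.cast_sub (by omega : j ≤ k + 1)]
        have hj2 : (2 : ℝ) ≤ j := by exact_mod_cast hj.1
        have hjk : (j : ℝ) ≤ k := by exact_mod_cast hj.2
        have p1 : 0 ≤ ((j : ℝ) - 1) ^ (-α) := Real.rpow_nonneg (by linarith) _
        have p2 : 0 ≤ ((k : ℝ) + 1 - j) ^ (-α) := Real.rpow_nonneg (by linarith) _
        push_cast
        rcases min_choice ((j : ℝ) - 1) (k - ((j : ℝ) - 1)) with h | h <;> rw [h]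
        · linarith
        · rw [show (k : ℝ) - (j - 1) = k + 1 - j by ring]; linarith
    _ ≤ _ := by rw [Finset.sum_add_distrib]; linarith

theorem stmt5 (N m : ℕ) (hm : 1 ≤ m) (hN : 2 * m + 3 ≤ N) (n : ℕ) (hn : n = N - 2 * m)
    (α : ℝ) (hα1 : 1 < α) (hαn : α < (n : ℝ)) :
    ∃ C : ℝ, 0 < C ∧ ∀ k : ℕ, 2 ≤ k → ∀ r h : ℝ, 0 < r → 0 < h → h ≤ 1 / 2 →
      1 ≤ h * k → ∀ y : EuclideanSpace ℝ (Fin N),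
      -- `y ∈ Ω₁`: `y₁ ≥ cos(π/k)·√(y₁² + y₂²)`
      Real.cos (Real.pi / k) * Real.sqrt (y ⟨0, by omega⟩ ^ 2 + y ⟨1, by omega⟩ ^ 2) ≤
        y ⟨0, by omega⟩ →
      -- `y ∈ Ω₁⁺`: moreover `y₃ ≥ 0`
      0 ≤ y ⟨2, by omega⟩ →
      (∑ j ∈ Finset.Icc 2 k, (1 + ‖y - xp N k r h j‖) ^ (-(n : ℝ))) +
        (∑ j ∈ Finset.Icc 1 k, (1 + ‖y - xm N k r h j‖) ^ (-(n : ℝ))) ≤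
        C * (1 + ‖y - xp N k r h 1‖) ^ (-((n : ℝ) - α)) * ((k : ℝ) / r) ^ α := by
  have hα0 : 0 < α := by linarith
  have hZ : 0 ≤ ∑' i : ℕ, (i : ℝ) ^ (-α) := tsum_nonneg fun i => by positivity
  set Z := ∑' i : ℕ, (i : ℝ) ^ (-α) with hZdef
  refine ⟨4 * Z + 1, by linarith, ?_⟩
  intro k hk r h hr hh hh2 hhk y hy hy3
  obtain ⟨K, hK, hnorm⟩ := exists_norm_sub_pt_sq N (by omega) y
  set u := y ⟨0, by omega⟩
  set v := y ⟨1, by omega⟩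
  set w := y ⟨2, by omega⟩
  have hk2 : (2 : ℝ) ≤ k := by exact_mod_cast hk
  have hk0 : (0 : ℝ) < k := by linarith
  set s := r * √(1 - h ^ 2) with hs
  have hsq : 1 / 2 ≤ √(1 - h ^ 2) := Real.le_sqrt_of_sq_le (by nlinarith)
  have hs0 : 0 ≤ s := by positivity
  have hsr : r / 2 ≤ s := by rw [hs]; nlinarith
  have hrh : 0 < r * h := by positivity
  have hx1 : ‖y - xp N k r h 1‖ ^ 2 = (u - s) ^ 2 + v ^ 2 + (w - r * h) ^ 2 + K := by
    rw [xp, hnorm]; simp [hs]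
  have hxm1 : ‖y - xm N k r h 1‖ ^ 2 = (u - s) ^ 2 + v ^ 2 + (w + r * h) ^ 2 + K := by
    rw [xm, hnorm]; simp [hs]
  have hwp : (w - r * h) ^ 2 ≤ (w + r * h) ^ 2 := by
    linarith [mul_nonneg hy3 hrh.le, add_sq w (r * h), sub_sq w (r * h)]
  set e := ‖y - xp N k r h 1‖ with he
  have he0 : 0 ≤ e := norm_nonneg _
  set A := (1 + e) ^ (-((n : ℝ) - α)) * ((k : ℝ) / r) ^ α with hA
  have hA0 : 0 ≤ A := by positivity
  -- One bound for both signs `c = ± r h` of the third coordinate.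
  have hterm : ∀ c : ℝ, (w - r * h) ^ 2 ≤ (w - c) ^ 2 → ∀ j ∈ Finset.Icc 2 k,
      (1 + ‖y - pt N (s * Real.cos (2 * ((j : ℝ) - 1) * Real.pi / k))
        (s * Real.sin (2 * ((j : ℝ) - 1) * Real.pi / k)) c‖) ^ (-(n : ℝ)) ≤
      A * (min ((j : ℝ) - 1) (k - ((j : ℝ) - 1))) ^ (-α) := by
    intro c hc j hj
    rw [Finset.mem_Icc] at hj
    have hj2 : (2 : ℝ) ≤ j := by exact_mod_cast hj.1
    have hjk : (j : ℝ) ≤ k := by exact_mod_cast hj.2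
    have hpi := Real.pi_pos
    have h2t : 2 * ((j : ℝ) - 1) * Real.pi / k = 2 * (((j : ℝ) - 1) * Real.pi / k) := by ring
    rw [h2t]
    have hsin := two_mul_div_le_sin (k := k) (i := (j : ℝ) - 1) (by linarith) (by linarith) hk0
    set μ := min ((j : ℝ) - 1) (k - ((j : ℝ) - 1))
    have hμ : 0 < μ := lt_min (by linarith) (by linarith)
    set t := ((j : ℝ) - 1) * Real.pi / k with ht
    have hclose := planar_closest (u := u) (v := v) (s := s) (p := Real.pi / k) (t := t) hs0
      (by positivity) (by gcongr) (by rw [ht]; gcongr; exact le_mul_of_one_le_left hpi.le (by linarith))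
      (by
        rw [ht, le_sub_iff_add_le, ← add_div, div_le_iff₀ hk0]
        linarith [mul_le_mul_of_nonneg_right hjk hpi.le]) hy
    have hlow := planar_lower hclose
    have hn2 := hnorm (s * Real.cos (2 * t)) (s * Real.sin (2 * t)) c
    set d := ‖y - pt N (s * Real.cos (2 * t)) (s * Real.sin (2 * t)) c‖
    have hd0 : 0 ≤ d := norm_nonneg _
    refine rpow_split hα0 hαn he0 ?_ hr hk0 hμ ?_
    · exact le_of_sq_le_sq (by rw [hx1, hn2]; linarith) hd0
    · have h1 : s * Real.sin t ≤ d :=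
        le_of_sq_le_sq (by rw [hn2]; linarith [sq_nonneg (w - c)]) hd0
      refine le_trans ?_ h1
      calc r * μ / k = (r / 2) * (2 * μ / k) := by ring
        _ ≤ s * Real.sin t := mul_le_mul hsr hsin (by positivity) hs0
  have hsum := sum_min_rpow_le hα1 k
  rw [← hZdef] at hsum
  have hS : ∀ c : ℝ, (w - r * h) ^ 2 ≤ (w - c) ^ 2 → ∑ j ∈ Finset.Icc 2 k,
      (1 + ‖y - pt N (s * Real.cos (2 * ((j : ℝ) - 1) * Real.pi / k))
        (s * Real.sin (2 * ((j : ℝ) - 1) * Real.pi / k)) c‖) ^ (-(n : ℝ)) ≤ A * (2 * Z) := by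
    intro c hc
    refine (Finset.sum_le_sum (hterm c hc)).trans ?_
    rw [← Finset.mul_sum]
    gcongr
  have hP := hS (r * h) le_rfl
  have hM := hS (-(r * h)) (by rw [sub_neg_eq_add]; exact hwp)
  have h1 : (1 + ‖y - xm N k r h 1‖) ^ (-(n : ℝ)) ≤ A := by
    have hd0 : 0 ≤ ‖y - xm N k r h 1‖ := norm_nonneg _
    have := rpow_split (n := n) (d := ‖y - xm N k r h 1‖) (μ := 1) hα0 hαn he0
      (le_of_sq_le_sq (by rw [hx1, hxm1]; linarith) hd0) hr hk0 one_pos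
      (by
        have h2 : r * h ≤ ‖y - xm N k r h 1‖ :=
          le_of_sq_le_sq (by
            rw [hxm1]
            linarith [sq_nonneg (u - s), sq_nonneg v, sq_nonneg w, mul_nonneg hy3 hrh.le,
              add_sq w (r * h)]) hd0
        refine le_trans ?_ h2
        rw [div_le_iff₀ hk0, mul_assoc]
        exact mul_le_mul_of_nonneg_left hhk hr.le)
    rwa [Real.one_rpow, mul_one] at this
  rw [← Finset.add_sum_Ioc_eq_sum_Icc (by omega : 1 ≤ k)]
  have hI : Finset.Ioc 1 k = Finset.Icc 2 k := by ext; simp; omega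
  rw [hI, mul_assoc, ← hA]
  simp only [xp, xm] at h1 ⊢
  linarith
end

section
/- Let N ≥ 3 and k ≥ 2 be integers, r > 0 and h ∈ [0,1). Then for every y ∈ Ω₁ and every j ∈ {2,…,k}: |y − x⁺_{k,j,r,h}| ≥ |y − x⁺_{k,1,r,h}| and |y − x⁺_{k,j,r,h}| ≥ (1/4)·|x⁺_{k,1,r,h} − x⁺_{k,j,r,h}|. -/
lemma abs_cos_le_cos {a φ : ℝ} (ha : 0 ≤ a) (h1 : a ≤ φ) (h2 : φ ≤ Real.pi - a) :
    |Real.cos φ| ≤ Real.cos a := by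
  rw [abs_le]
  constructor
  · rw [← Real.cos_pi_sub]
    exact Real.cos_le_cos_of_nonneg_of_le_pi (by linarith) (by linarith) h2
  · exact Real.cos_le_cos_of_nonneg_of_le_pi ha (by linarith) h1

/-- A planar point `(u, v)` of the sector of half-angle `a` around the first axis lies on the
side of the line of direction `φ` that contains `(1, 0)`. -/
lemma mul_cos_le_mul_sin {a φ u v : ℝ} (ha : 0 ≤ a) (h1 : a ≤ φ) (h2 : φ ≤ Real.pi - a)
    (h : Real.cos a * Real.sqrt (u ^ 2 + v ^ 2) ≤ u) :
    v * Real.cos φ ≤ u * Real.sin φ := by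
  have hc := abs_cos_le_cos ha h1 h2
  have hs : 0 ≤ Real.sin φ := Real.sin_nonneg_of_nonneg_of_le_pi (by linarith) (by linarith)
  have hR : 0 ≤ Real.sqrt (u ^ 2 + v ^ 2) := Real.sqrt_nonneg _
  have hle : |Real.cos φ| * Real.sqrt (u ^ 2 + v ^ 2) ≤ u :=
    (mul_le_mul_of_nonneg_right hc hR).trans h
  have hu : 0 ≤ u := (by positivity : 0 ≤ |Real.cos φ| * Real.sqrt (u ^ 2 + v ^ 2)).trans hle
  have hsq : Real.cos φ ^ 2 * (u ^ 2 + v ^ 2) ≤ u ^ 2 := by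
    have := pow_le_pow_left₀ (by positivity) hle 2
    rwa [mul_pow, sq_abs, Real.sq_sqrt (by positivity)] at this
  refine abs_le_of_sq_le_sq' ?_ (mul_nonneg hu hs) |>.2
  rw [mul_pow, mul_pow, Real.sin_sq]
  linarith

theorem stmt8 (N : ℕ) (hN : 3 ≤ N) (k : ℕ) (hk : 2 ≤ k) (r h : ℝ) (hr : 0 < r)
    (hh0 : 0 ≤ h) (hh1 : h < 1) (y : EuclideanSpace ℝ (Fin N))
    -- `y ∈ Ω₁`: `y₁ ≥ cos(π/k)·√(y₁² + y₂²)`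
    (hy : Real.cos (Real.pi / k) * Real.sqrt (y ⟨0, by omega⟩ ^ 2 + y ⟨1, by omega⟩ ^ 2) ≤
      y ⟨0, by omega⟩)
    (j : ℕ) (hj2 : 2 ≤ j) (hjk : j ≤ k) :
    ‖y - xp N k r h 1‖ ≤ ‖y - xp N k r h j‖ ∧
    1 / 4 * ‖xp N k r h 1 - xp N k r h j‖ ≤ ‖y - xp N k r h j‖ := by
  have hk0 : (0 : ℝ) < k := by exact_mod_cast (by omega : 0 < k)
  have hj2' : (2 : ℝ) ≤ j := by exact_mod_cast hj2
  have hjk' : (j : ℝ) ≤ k := by exact_mod_cast hjk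
  have hpi := Real.pi_pos
  have ha : 0 ≤ Real.pi / k := by positivity
  obtain ⟨φ, hφ⟩ : ∃ φ, φ = ((j : ℝ) - 1) * (Real.pi / k) := ⟨_, rfl⟩
  have h1 : Real.pi / k ≤ φ := by rw [hφ]; nlinarith
  have h2 : φ ≤ Real.pi - Real.pi / k := by
    have : (k : ℝ) * (Real.pi / k) = Real.pi := by field_simp
    rw [hφ]; nlinarith
  have hs : 0 ≤ Real.sin φ := Real.sin_nonneg_of_nonneg_of_le_pi (by linarith) (by linarith)
  have key := mul_cos_le_mul_sin ha h1 h2 hy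
  have hθ : 2 * ((j : ℝ) - 1) * Real.pi / k = 2 * φ := by rw [hφ]; ring
  have first : ‖y - xp N k r h 1‖ ≤ ‖y - xp N k r h j‖ := by
    obtain ⟨m, rfl⟩ : ∃ m, N = m + 3 := ⟨N - 3, by omega⟩
    have hρ : 0 ≤ r * Real.sqrt (1 - h ^ 2) := by positivity
    refine le_of_sq_le_sq ?_ (norm_nonneg _)
    rw [EuclideanSpace.norm_sq_eq, EuclideanSpace.norm_sq_eq]
    simp only [xp, hθ]
    generalize r * Real.sqrt (1 - h ^ 2) = ρ at hρ
    change y 1 * Real.cos φ ≤ y 0 * Real.sin φ at key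
    have hmod : 2 % (m + 3) = 2 := Nat.mod_eq_of_lt (by omega)
    have h20 : (2 : Fin (m + 3)) ≠ 0 := by
      intro h0
      have := congrArg Fin.val h0
      simp [hmod] at this
    simp only [Fin.sum_univ_succ, pt]
    simp [Real.sin_two_mul, Real.cos_two_mul, hmod, h20]
    -- The difference of the two sides is `4 ρ sin φ (y₁ sin φ - y₂ cos φ)`.
    have hpos := mul_nonneg (mul_nonneg hρ hs) (sub_nonneg.2 key)
    have hcs := Real.sin_sq_add_cos_sq φ
    generalize Real.sin φ = s at *
    generalize Real.cos φ = c at *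
    have hc : c ^ 2 = 1 - s ^ 2 := by linarith
    have e : (y 0 - ρ * (2 * c ^ 2 - 1)) ^ 2 + (y 1 - ρ * (2 * s * c)) ^ 2
        = (y 0 - ρ) ^ 2 + y 1 ^ 2 + 4 * (ρ * s * (y 0 * s - y 1 * c)) := by
      linear_combination (4 * ρ ^ 2 * c ^ 2 - 4 * ρ * y 0) * hc
    linarith
  refine ⟨first, ?_⟩
  have := norm_sub_le_norm_sub_add_norm_sub (xp N k r h 1) y (xp N k r h j)
  rw [norm_sub_rev _ y] at this
  linarith [norm_nonneg (y - xp N k r h j)]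
end

section
/- Let N, m be positive integers with N ≥ 2m+3, set n = N−2m, and let θ ∈ (0, n/2 − 1). Then there exists C > 0 such that for every integer k ≥ 2, every r > 0, every h ∈ [0,1) and every y ∈ Ω₁: ∑_{j=2}^k (1+|y−x⁺_{k,j,r,h}|)^{−n} ≤ C·(k/(r·√(1−h²)))^{n/2−θ}·(1+|y−x⁺_{k,1,r,h}|)^{−(n/2+θ)}. -/
lemma inner_pt {N : ℕ} (hN : 3 ≤ N) (y : EuclideanSpace ℝ (Fin N)) (a b c : ℝ) :
    inner ℝ y (pt N a b c) =
      y ⟨0, by omega⟩ * a + y ⟨1, by omega⟩ * b + y ⟨2, by omega⟩ * c := by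
  obtain ⟨M, rfl⟩ : ∃ M, N = M + 3 := ⟨N - 3, by omega⟩
  simp only [PiLp.inner_apply, pt, Fin.sum_univ_succ]
  simp
  have e2 : (⟨2, by omega⟩ : Fin (M + 3)) = 2 := rfl
  have e3 : (2 : Fin (M + 3)) ≠ 0 := by simp [Fin.ext_iff, Nat.mod_eq_of_lt]
  have e4 : 2 % (M + 3) = 2 := Nat.mod_eq_of_lt (by omega)
  simp [e2, e3, e4]
  ring

lemma norm_sub_pt_sq {N : ℕ} (hN : 3 ≤ N) (y : EuclideanSpace ℝ (Fin N)) (a b c : ℝ) :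
    ‖y - pt N a b c‖ ^ 2 = ‖y‖ ^ 2 -
      2 * (y ⟨0, by omega⟩ * a + y ⟨1, by omega⟩ * b + y ⟨2, by omega⟩ * c)
      + (a ^ 2 + b ^ 2 + c ^ 2) := by
  rw [norm_sub_sq_real, inner_pt hN, ← real_inner_self_eq_norm_sq (pt N a b c), inner_pt hN]
  simp [pt]
  ring

lemma norm_pt_sub_pt_sq {N : ℕ} (hN : 3 ≤ N) (a b a' b' c : ℝ) :
    ‖pt N a b c - pt N a' b' c‖ ^ 2 = (a - a') ^ 2 + (b - b') ^ 2 := by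
  rw [norm_sub_pt_sq hN, ← real_inner_self_eq_norm_sq (pt N a b c), inner_pt hN]
  simp [pt]
  ring

/-- A planar vector `(u, v)` at angle at most `β` from the positive first axis lies on the right
of the line through the origin at angle `t`, for every `t ∈ [β, π - β]`. -/
lemma sector_le {u v β t : ℝ} (hβ0 : 0 ≤ β) (hβ : β ≤ Real.pi / 2) (ht : β ≤ t)
    (ht' : t ≤ Real.pi - β)
    (h : Real.cos β * Real.sqrt (u ^ 2 + v ^ 2) ≤ u) :
    v * Real.cos t ≤ u * Real.sin t := by
  have hc : 0 ≤ Real.cos β := Real.cos_nonneg_of_neg_pi_div_two_le_of_le (by linarith) hβ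
  have hs : 0 ≤ Real.sin β := Real.sin_nonneg_of_nonneg_of_le_pi hβ0 (by linarith)
  have hst : 0 ≤ Real.sin t := Real.sin_nonneg_of_nonneg_of_le_pi (by linarith) (by linarith)
  have hu : 0 ≤ u := le_trans (mul_nonneg hc (Real.sqrt_nonneg _)) h
  have hct : |Real.cos t| ≤ Real.cos β := by
    rw [abs_le]
    constructor
    · rw [← Real.cos_pi_sub]
      exact Real.cos_le_cos_of_nonneg_of_le_pi (by linarith) (by linarith) ht'
    · exact Real.cos_le_cos_of_nonneg_of_le_pi hβ0 (by linarith) ht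
  have hcs : Real.sin β ≤ Real.sin t := by
    refine (sq_le_sq₀ hs hst).1 ?_
    rw [Real.sin_sq, Real.sin_sq]
    have := sq_le_sq' (by linarith [abs_nonneg (Real.cos t)]) hct
    rw [sq_abs] at this
    linarith
  have hsq : Real.cos β ^ 2 * (u ^ 2 + v ^ 2) ≤ u ^ 2 := by
    have := pow_le_pow_left₀ (mul_nonneg hc (Real.sqrt_nonneg _)) h 2
    rwa [mul_pow, Real.sq_sqrt (by positivity)] at this
  have hv : |v| * Real.cos β ≤ u * Real.sin β := by
    refine (sq_le_sq₀ (by positivity) (by positivity)).1 ?_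
    rw [mul_pow, mul_pow, sq_abs, Real.sin_sq]
    nlinarith
  calc v * Real.cos t ≤ |v * Real.cos t| := le_abs_self _
    _ = |v| * |Real.cos t| := abs_mul _ _
    _ ≤ |v| * Real.cos β := by gcongr
    _ ≤ u * Real.sin β := hv
    _ ≤ u * Real.sin t := by gcongr

lemma min_div_le_sin {k i : ℕ} (hi : 0 < i) (hik : i < k) :
    min (i : ℝ) ((k - i : ℕ) : ℝ) / k ≤ Real.sin (i * Real.pi / k) := by
  have hk : (0 : ℝ) < k := by exact_mod_cast (by omega : 0 < k)
  have hpi := Real.pi_pos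
  have key : ∀ p : ℕ, 2 * p ≤ k → (p : ℝ) / k ≤ Real.sin (p * Real.pi / k) := by
    intro p hp
    have hp' : (2 : ℝ) * p ≤ k := by exact_mod_cast hp
    have := Real.mul_le_sin (x := p * Real.pi / k) (by positivity)
      (by rw [div_le_div_iff₀ hk two_pos]; nlinarith)
    have e : 2 / Real.pi * (p * Real.pi / k) = 2 * (p / k) := by field_simp
    have : (0 : ℝ) ≤ p / k := by positivity
    linarith
  rcases le_total (2 * i) k with h | h
  · exact le_trans (by gcongr; exact min_le_left _ _) (key i h)
  · have h2 := key (k - i) (by omega)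
    have e : ((k - i : ℕ) : ℝ) * Real.pi / k = Real.pi - i * Real.pi / k := by
      rw [Nat.cast_sub hik.le]; field_simp
    rw [e, Real.sin_pi_sub] at h2
    exact le_trans (by gcongr; exact min_le_right _ _) h2

lemma dist_bounds {N k j : ℕ} (hN : 3 ≤ N) (hk : 2 ≤ k) (hj : 2 ≤ j) (hjk : j ≤ k) {r h : ℝ}
    (hr : 0 < r) (y : EuclideanSpace ℝ (Fin N))
    (hy : Real.cos (Real.pi / k) * Real.sqrt (y ⟨0, by omega⟩ ^ 2 + y ⟨1, by omega⟩ ^ 2) ≤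
        y ⟨0, by omega⟩) :
    ‖y - xp N k r h 1‖ ≤ ‖y - xp N k r h j‖ ∧
      r * Real.sqrt (1 - h ^ 2) * Real.sin ((j - 1 : ℕ) * Real.pi / k) ≤
        ‖y - xp N k r h j‖ := by
  have hk0 : (2 : ℝ) ≤ k := by exact_mod_cast hk
  have hk1 : (0 : ℝ) < k := by linarith
  have hpi := Real.pi_pos
  have hjc : ((j - 1 : ℕ) : ℝ) = (j : ℝ) - 1 := by rw [Nat.cast_sub (by omega)]; simp
  have hj1 : (2 : ℝ) ≤ j := by exact_mod_cast hj
  have hj2 : (j : ℝ) ≤ k := by exact_mod_cast hjk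
  set t : ℝ := (j - 1 : ℕ) * Real.pi / k with ht
  have h2t : 2 * ((j : ℝ) - 1) * Real.pi / k = 2 * t := by rw [ht, hjc]; ring
  have hρ : 0 ≤ r * Real.sqrt (1 - h ^ 2) := by positivity
  have hb : Real.pi / k ≤ t := by
    rw [ht, hjc]; gcongr; nlinarith
  have hb' : t ≤ Real.pi - Real.pi / k := by
    rw [ht, hjc, le_sub_iff_add_le, ← add_div, div_le_iff₀ hk1]; nlinarith
  have hb0 : 0 ≤ Real.pi / k := by positivity
  have hst : 0 ≤ Real.sin t := Real.sin_nonneg_of_nonneg_of_le_pi (by linarith) (by linarith)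
  have hsec := sector_le hb0 (by gcongr) hb hb' hy
  have h1 : ‖y - xp N k r h 1‖ ≤ ‖y - xp N k r h j‖ := by
    refine (sq_le_sq₀ (norm_nonneg _) (norm_nonneg _)).1 ?_
    unfold xp
    rw [norm_sub_pt_sq hN, norm_sub_pt_sq hN, h2t]
    simp only [Nat.cast_one, sub_self, mul_zero, zero_mul, zero_div, Real.cos_zero, Real.sin_zero]
    rw [Real.cos_two_mul, Real.sin_two_mul]
    have hcs := Real.sin_sq_add_cos_sq t
    have hm := mul_nonneg (mul_nonneg hρ hst) (sub_nonneg.2 hsec)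
    generalize r * Real.sqrt (1 - h ^ 2) = ρ at *
    generalize y ⟨0, _⟩ = u at *
    generalize y ⟨1, _⟩ = v at *
    generalize Real.sin t = s at *
    generalize Real.cos t = c at *
    have e : c ^ 2 = 1 - s ^ 2 := by linarith
    have e4 : (ρ * (2 * c ^ 2 - 1)) ^ 2 + (ρ * (2 * s * c)) ^ 2 = ρ ^ 2 := by
      have : (ρ * (2 * c ^ 2 - 1)) ^ 2 + (ρ * (2 * s * c)) ^ 2 =
        ρ ^ 2 * ((2 * c ^ 2 - 1) ^ 2 + 4 * s ^ 2 * c ^ 2) := by ring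
      rw [this, e]; ring
    have e5 : u * (ρ * (2 * c ^ 2 - 1)) = u * ρ - 2 * (ρ * s * (u * s)) := by rw [e]; ring
    rw [e5]
    linarith
  refine ⟨h1, ?_⟩
  have h3 : ‖xp N k r h j - xp N k r h 1‖ = 2 * (r * Real.sqrt (1 - h ^ 2) * Real.sin t) := by
    rw [← sq_eq_sq₀ (norm_nonneg _) (by positivity)]
    unfold xp
    rw [norm_pt_sub_pt_sq hN, h2t]
    simp only [Nat.cast_one, sub_self, mul_zero, zero_mul, zero_div, Real.cos_zero, Real.sin_zero]
    rw [Real.cos_two_mul, Real.sin_two_mul]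
    have e : Real.cos t ^ 2 = 1 - Real.sin t ^ 2 := Real.cos_sq' t
    ring_nf
    rw [show Real.cos t ^ 4 = (Real.cos t ^ 2) ^ 2 by ring, e]
    ring
  have h4 : ‖xp N k r h j - xp N k r h 1‖ ≤ ‖y - xp N k r h 1‖ + ‖y - xp N k r h j‖ := by
    rw [show xp N k r h j - xp N k r h 1 = (y - xp N k r h 1) - (y - xp N k r h j) by abel]
    exact norm_sub_le _ _
  linarith

lemma sum_rpow_le {α : ℝ} (hα : 1 < α) (s : Finset ℕ) (g : ℕ → ℕ) (hg : Set.InjOn g s) :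
    ∑ j ∈ s, ((g j : ℕ) : ℝ) ^ (-α) ≤ ∑' i : ℕ, (i : ℝ) ^ (-α) := by
  rw [← Finset.sum_image (f := fun i : ℕ => (i : ℝ) ^ (-α)) hg]
  exact (Real.summable_nat_rpow.2 (by linarith)).sum_le_tsum _ fun i _ => by positivity

theorem stmt9 (N m : ℕ) (hm : 1 ≤ m) (hN : 2 * m + 3 ≤ N) (n : ℕ) (hn : n = N - 2 * m)
    (θ : ℝ) (hθ0 : 0 < θ) (hθ : θ < (n : ℝ) / 2 - 1) :
    ∃ C : ℝ, 0 < C ∧ ∀ k : ℕ, 2 ≤ k → ∀ r h : ℝ, 0 < r → 0 ≤ h → h < 1 →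
      ∀ y : EuclideanSpace ℝ (Fin N),
      -- `y ∈ Ω₁`: `y₁ ≥ cos(π/k)·√(y₁² + y₂²)`
      Real.cos (Real.pi / k) * Real.sqrt (y ⟨0, by omega⟩ ^ 2 + y ⟨1, by omega⟩ ^ 2) ≤
        y ⟨0, by omega⟩ →
      ∑ j ∈ Finset.Icc 2 k, (1 + ‖y - xp N k r h j‖) ^ (-(n : ℝ)) ≤
        C * ((k : ℝ) / (r * Real.sqrt (1 - h ^ 2))) ^ ((n : ℝ) / 2 - θ) *
          (1 + ‖y - xp N k r h 1‖) ^ (-((n : ℝ) / 2 + θ)) := by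
  set α : ℝ := (n : ℝ) / 2 - θ with hα
  have hα1 : 1 < α := by linarith
  have hZ0 : 0 ≤ ∑' i : ℕ, (i : ℝ) ^ (-α) := tsum_nonneg fun i => by positivity
  -- the summand `1` only serves to make positivity of the constant evident
  refine ⟨2 * (∑' i : ℕ, (i : ℝ) ^ (-α)) + 1, by linarith, ?_⟩
  intro k hk r h hr h0 h1 y hy
  have hρ : 0 < r * Real.sqrt (1 - h ^ 2) := mul_pos hr (Real.sqrt_pos.2 (by nlinarith))
  have hk1 : (0 : ℝ) < k := by exact_mod_cast (by omega : 0 < k)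
  set B : ℝ := (1 + ‖y - xp N k r h 1‖) ^ (-((n : ℝ) / 2 + θ)) with hB
  have hB0 : 0 ≤ B := by positivity
  set A : ℝ := ((k : ℝ) / (r * Real.sqrt (1 - h ^ 2))) ^ α with hA
  have hA0 : 0 ≤ A := by positivity
  have term : ∀ j ∈ Finset.Icc 2 k, (1 + ‖y - xp N k r h j‖) ^ (-(n : ℝ)) ≤
      A * B * (((j - 1 : ℕ) : ℝ) ^ (-α) + ((k - (j - 1) : ℕ) : ℝ) ^ (-α)) := by
    intro j hj
    rw [Finset.mem_Icc] at hj
    obtain ⟨d1, d2⟩ := dist_bounds (by omega) hk hj.1 hj.2 hr y hy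
    have hsin := min_div_le_sin (k := k) (i := j - 1) (by omega) (by omega)
    have hi0 : (0 : ℝ) < ((j - 1 : ℕ) : ℝ) := by exact_mod_cast (by omega : 0 < j - 1)
    have hl0 : (0 : ℝ) < ((k - (j - 1) : ℕ) : ℝ) := by
      exact_mod_cast (by omega : 0 < k - (j - 1))
    set M : ℝ := min ((j - 1 : ℕ) : ℝ) ((k - (j - 1) : ℕ) : ℝ) with hM
    have hM0 : 0 < M := lt_min hi0 hl0
    have hd : M / (k / (r * Real.sqrt (1 - h ^ 2))) ≤ 1 + ‖y - xp N k r h j‖ := by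
      calc M / (k / (r * Real.sqrt (1 - h ^ 2)))
          = r * Real.sqrt (1 - h ^ 2) * (M / k) := by field_simp
        _ ≤ _ := mul_le_mul_of_nonneg_left hsin hρ.le
        _ ≤ _ := d2
        _ ≤ _ := by linarith
    have hpos : 0 < 1 + ‖y - xp N k r h j‖ := by positivity
    have e1 : (1 + ‖y - xp N k r h j‖) ^ (-(n : ℝ)) =
        (1 + ‖y - xp N k r h j‖) ^ (-α) * (1 + ‖y - xp N k r h j‖) ^ (-((n : ℝ) / 2 + θ)) := by
      rw [← Real.rpow_add hpos]; congr 1; rw [hα]; ring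
    have e2 : (1 + ‖y - xp N k r h j‖) ^ (-((n : ℝ) / 2 + θ)) ≤ B :=
      Real.rpow_le_rpow_of_nonpos (by positivity) (by linarith) (by linarith)
    have e3 : (1 + ‖y - xp N k r h j‖) ^ (-α) ≤ A * M ^ (-α) := by
      calc _ ≤ (M / (k / (r * Real.sqrt (1 - h ^ 2)))) ^ (-α) :=
            Real.rpow_le_rpow_of_nonpos (by positivity) hd (by linarith)
        _ = A * M ^ (-α) := by
            rw [Real.div_rpow hM0.le (by positivity), hA,
              Real.rpow_neg (x := (k : ℝ) / _) (by positivity), div_inv_eq_mul, mul_comm]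
    have e4 : M ^ (-α) ≤ ((j - 1 : ℕ) : ℝ) ^ (-α) + ((k - (j - 1) : ℕ) : ℝ) ^ (-α) := by
      have p1 := Real.rpow_nonneg hi0.le (-α)
      have p2 := Real.rpow_nonneg hl0.le (-α)
      rcases min_choice ((j - 1 : ℕ) : ℝ) ((k - (j - 1) : ℕ) : ℝ) with h | h <;>
        rw [hM, h] <;> linarith
    rw [e1]
    calc _ ≤ (A * M ^ (-α)) * B := by gcongr
      _ = A * B * M ^ (-α) := by ring
      _ ≤ _ := by gcongr
  have s1 := sum_rpow_le hα1 (Finset.Icc 2 k) (fun j => j - 1) (by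
    intro a ha b hb hab
    simp only [Finset.coe_Icc, Set.mem_Icc] at ha hb hab
    omega)
  have s2 := sum_rpow_le hα1 (Finset.Icc 2 k) (fun j => k - (j - 1)) (by
    intro a ha b hb hab
    simp only [Finset.coe_Icc, Set.mem_Icc] at ha hb hab
    omega)
  refine (Finset.sum_le_sum term).trans ?_
  rw [← Finset.mul_sum, Finset.sum_add_distrib]
  calc _ ≤ A * B * (2 * (∑' i : ℕ, (i : ℝ) ^ (-α)) + 1) := by
        refine mul_le_mul_of_nonneg_left ?_ (by positivity)
        linarith
    _ = _ := by ring
end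

section
/- Let N, m be positive integers with N > 2m, let l > 0, δ ∈ (0,1), c₀ > 0, 0 < L₁ ≤ L₂ and τ ∈ (0, (N+2m)/2) be real numbers, and let K : [0,∞) → ℝ be a bounded function satisfying |K(s) − 1| ≤ c₀·|s−1|^l whenever |s−1| ≤ δ. Then there exists C > 0 such that for every μ ≥ 1, every Λ ∈ [L₁,L₂], every x ∈ ℝ^N with ||x| − μ| ≤ 1, and every y ∈ ℝ^N: U_{x,Λ}(y)^{(N+2m)/(N−2m)}·|K(|y|/μ) − 1| ≤ C·μ^{−min{(N+2m)/2−τ, l}}·(1+|y−x|)^{−((N+2m)/2+τ)}. -/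
theorem bubble_base_le {L₁ L₂ Λ r : ℝ} (hL1 : 0 < L₁) (h1 : L₁ ≤ Λ) (h2 : Λ ≤ L₂)
    (hr : 0 ≤ r) : Λ / (1 + Λ ^ 2 * r ^ 2) ≤ (2 * L₂ + 2 / L₁) * ((1 + r) ^ 2)⁻¹ := by
  have hΛ : 0 < Λ := hL1.trans_le h1
  have ht : 0 < (1 + r) ^ 2 := by positivity
  rw [← div_eq_mul_inv, div_le_div_iff₀ (by positivity) ht]
  have e1 : (1 + r) ^ 2 ≤ 2 + 2 * r ^ 2 := by nlinarith [sq_nonneg (1 - r)]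
  have e2 : 1 ≤ 1 / L₁ * Λ := by
    rw [one_div, inv_mul_eq_div, le_div_iff₀ hL1]; linarith
  have e3 : Λ * r ^ 2 ≤ 1 / L₁ * Λ * (Λ * r ^ 2) :=
    le_mul_of_one_le_left (by positivity) e2
  have e4 : 0 ≤ L₂ * (Λ ^ 2 * r ^ 2) := by
    have : 0 < L₂ := hΛ.trans_le h2
    positivity
  have e5 : 0 < 2 / L₁ := by positivity
  calc Λ * (1 + r) ^ 2 ≤ Λ * (2 + 2 * r ^ 2) := by gcongr
    _ ≤ (2 * L₂ + 2 / L₁) * (1 + Λ ^ 2 * r ^ 2) := by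
      have : 2 / L₁ * (Λ ^ 2 * r ^ 2) = 2 * (1 / L₁ * Λ * (Λ * r ^ 2)) := by ring
      nlinarith

/-- Flatness of order `l` at `1` and boundedness combine into one Hölder-type bound of any
smaller order `θ`, valid for all `q` dominating `|s - 1|`. -/
theorem abs_sub_one_le_rpow {K : ℝ → ℝ} {M c₀ δ l θ : ℝ} (hM : ∀ s : ℝ, 0 ≤ s → |K s| ≤ M)
    (hδ0 : 0 < δ) (hδ1 : δ < 1) (hc₀ : 0 < c₀) (hθ : 0 < θ) (hθl : θ ≤ l)
    (hK : ∀ s : ℝ, 0 ≤ s → |s - 1| ≤ δ → |K s - 1| ≤ c₀ * |s - 1| ^ l)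
    {s q : ℝ} (hs : 0 ≤ s) (hq : 0 < q) (hsq : |s - 1| ≤ q) :
    |K s - 1| ≤ (c₀ + (M + 1) / δ ^ θ) * q ^ θ := by
  have hM0 : 0 ≤ M := (abs_nonneg _).trans (hM s hs)
  have hqθ : 0 < q ^ θ := Real.rpow_pos_of_pos hq θ
  have hδθ : 0 < δ ^ θ := Real.rpow_pos_of_pos hδ0 θ
  rcases le_or_gt q δ with h | h
  · calc |K s - 1| ≤ c₀ * |s - 1| ^ l := hK s hs (hsq.trans h)
      _ ≤ c₀ * q ^ l := by
        gcongr
        linarith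
      _ ≤ c₀ * q ^ θ := by
        gcongr c₀ * ?_
        exact Real.rpow_le_rpow_of_exponent_ge hq (by linarith) hθl
      _ ≤ _ := by
        gcongr
        exact le_add_of_nonneg_right (by positivity)
  · have h1 : |K s - 1| ≤ M + 1 := by
      have := abs_sub (K s) 1
      have := hM s hs
      simp only [abs_one] at *
      linarith
    have h2 : δ ^ θ ≤ q ^ θ := Real.rpow_le_rpow hδ0.le h.le hθ.le
    calc |K s - 1| ≤ (M + 1) / δ ^ θ * δ ^ θ := by rwa [div_mul_cancel₀ _ hδθ.ne']
      _ ≤ (M + 1) / δ ^ θ * q ^ θ := by gcongr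
      _ ≤ _ := by
        gcongr
        exact le_add_of_nonneg_left hc₀.le

theorem stmt11 (N m : ℕ) (hm : 1 ≤ m) (hNm : 2 * m < N)
    (l : ℝ) (hl : 0 < l) (δ : ℝ) (hδ0 : 0 < δ) (hδ1 : δ < 1)
    (c₀ : ℝ) (hc₀ : 0 < c₀) (L₁ L₂ : ℝ) (hL1 : 0 < L₁) (hL12 : L₁ ≤ L₂)
    (τ : ℝ) (hτ0 : 0 < τ) (hτ : τ < ((N : ℝ) + 2 * m) / 2)
    (K : ℝ → ℝ) (hKbdd : ∃ M : ℝ, ∀ s : ℝ, 0 ≤ s → |K s| ≤ M)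
    (hK : ∀ s : ℝ, 0 ≤ s → |s - 1| ≤ δ → |K s - 1| ≤ c₀ * |s - 1| ^ l) :
    ∃ C : ℝ, 0 < C ∧ ∀ μ : ℝ, 1 ≤ μ → ∀ Λ : ℝ, L₁ ≤ Λ → Λ ≤ L₂ →
      ∀ x : EuclideanSpace ℝ (Fin N), |‖x‖ - μ| ≤ 1 →
      ∀ y : EuclideanSpace ℝ (Fin N),
      U N m x Λ y ^ (((N : ℝ) + 2 * m) / ((N : ℝ) - 2 * m)) * |K (‖y‖ / μ) - 1| ≤
        C * μ ^ (-min (((N : ℝ) + 2 * m) / 2 - τ) l) *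
          (1 + ‖y - x‖) ^ (-(((N : ℝ) + 2 * m) / 2 + τ)) := by
  obtain ⟨M, hM⟩ := hKbdd
  have hM0 : 0 ≤ M := (abs_nonneg _).trans (hM 0 le_rfl)
  have hd : (0 : ℝ) < (N : ℝ) - 2 * m := by
    have : ((2 * m : ℕ) : ℝ) < N := by exact_mod_cast hNm
    push_cast at this
    linarith
  set p : ℝ := ((N : ℝ) + 2 * m) / 2 with hp
  set θ : ℝ := min (p - τ) l with hθdef
  have hθ : 0 < θ := lt_min (by linarith) hl
  have hL2 : 0 < L₂ := hL1.trans_le hL12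
  have hB : 0 < 2 * L₂ + 2 / L₁ := by positivity
  have hD : 0 < c₀ + (M + 1) / δ ^ θ := by positivity
  refine ⟨(2 * L₂ + 2 / L₁) ^ p * (c₀ + (M + 1) / δ ^ θ), by positivity, ?_⟩
  intro μ hμ Λ h1 h2 x hx y
  have hμ0 : 0 < μ := by linarith
  have hΛ : 0 < Λ := hL1.trans_le h1
  have hr : 0 ≤ ‖y - x‖ := norm_nonneg _
  have ht : 0 < 1 + ‖y - x‖ := by positivity
  have hU : U N m x Λ y ^ (((N : ℝ) + 2 * m) / ((N : ℝ) - 2 * m)) ≤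
      (2 * L₂ + 2 / L₁) ^ p * (1 + ‖y - x‖) ^ (-(2 * p)) := by
    rw [U, ← Real.rpow_mul (by positivity)]
    have e : ((N : ℝ) - 2 * m) / 2 * (((N : ℝ) + 2 * m) / ((N : ℝ) - 2 * m)) = p := by
      rw [hp]
      field_simp
    have e2 : (1 + ‖y - x‖) ^ (-(2 * p)) = (((1 + ‖y - x‖) ^ 2)⁻¹) ^ p := by
      rw [Real.inv_rpow (by positivity), ← Real.rpow_natCast, ← Real.rpow_mul ht.le,
        Real.rpow_neg ht.le]
      norm_num
    rw [e, e2, ← Real.mul_rpow hB.le (by positivity)]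
    exact Real.rpow_le_rpow (by positivity) (bubble_base_le hL1 h1 h2 hr)
      (by linarith)
  have hs : |‖y‖ / μ - 1| ≤ (1 + ‖y - x‖) / μ := by
    have e : ‖y‖ / μ - 1 = (‖y‖ - μ) / μ := by field_simp
    rw [e, abs_div, abs_of_pos hμ0]
    gcongr
    calc |‖y‖ - μ| ≤ |‖y‖ - ‖x‖| + |‖x‖ - μ| := abs_sub_le _ _ _
      _ ≤ 1 + ‖y - x‖ := by linarith [abs_norm_sub_norm_le y x]
  have hKb := abs_sub_one_le_rpow hM hδ0 hδ1 hc₀ hθ (min_le_right _ _) hK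
    (s := ‖y‖ / μ) (by positivity) (div_pos ht hμ0) hs
  have hq : ((1 + ‖y - x‖) / μ) ^ θ ≤ μ ^ (-θ) * (1 + ‖y - x‖) ^ (p - τ) := by
    rw [Real.div_rpow ht.le hμ0.le, Real.rpow_neg hμ0.le, div_eq_inv_mul]
    gcongr
    · linarith
    · exact min_le_left _ _
  have hexp : (1 + ‖y - x‖) ^ (-(2 * p)) * (1 + ‖y - x‖) ^ (p - τ) =
      (1 + ‖y - x‖) ^ (-(p + τ)) := by
    rw [← Real.rpow_add ht]
    congr 1
    ring
  calc _ ≤ ((2 * L₂ + 2 / L₁) ^ p * (1 + ‖y - x‖) ^ (-(2 * p))) *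
        ((c₀ + (M + 1) / δ ^ θ) * (μ ^ (-θ) * (1 + ‖y - x‖) ^ (p - τ))) :=
        mul_le_mul hU (hKb.trans (by gcongr)) (abs_nonneg _) (by positivity)
    _ = (2 * L₂ + 2 / L₁) ^ p * (c₀ + (M + 1) / δ ^ θ) * μ ^ (-θ) *
        ((1 + ‖y - x‖) ^ (-(2 * p)) * (1 + ‖y - x‖) ^ (p - τ)) := by ring
    _ = _ := by rw [hexp]
end

section
/- Let N, m be positive integers with N ≥ 2m+3, set n = N−2m and m* = 2N/(N−2m), let l ∈ [2, n), δ ∈ (0,1), c₀ > 0, K₀ > 0, 0 < L₁ ≤ L₂ and 0 < c₁ ≤ c₂ be real numbers, and set μ_k = k^{n/(n−l)}. Let K : [0,∞) → ℝ be a function with |K| ≤ K₀ and |K(s) − 1| ≤ c₀·|s−1|^l whenever |s−1| ≤ δ. Then for every sufficiently small ε₁ > 0 and every τ ∈ ((n−l)/n, (n−l)/n + ε₁) there exist C > 0 and an integer k₀ such that for every integer k ≥ k₀, every Λ ∈ [L₁,L₂], every r > 0 with |r − μ_k| ≤ 1, every h with c₁·k^{−(n−1)/(n+1)} ≤ h ≤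 c₂·k^{−(n−1)/(n+1)}, and every y ∈ ℝ^N, the function l_k(y) = K(|y|/μ_k)·W_{r,h,Λ}(y)^{m*−1} − ∑_{j=1}^k (U_{x⁺_{k,j,r,h},Λ}(y)^{m*−1} + U_{x⁻_{k,j,r,h},Λ}(y)^{m*−1}) satisfies |l_k(y)| ≤ C·max{(k/μ_k)^{(N+2m)/2 − (n−l)/n − ε₁}, μ_k^{−l}}·∑_{j=1}^k [(1+|y−x⁺_{k,j,r,h}|)^{−((N+2m)/2+τ)} + (1+|y−x⁻_{k,j,r,h}|)^{−((N+2m)/2+τ)}]. -/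
/-- The approximate solution `W_{r,h,Λ} = ∑_{j=1}^k (U_{x⁺_{k,j,r,h},Λ} + U_{x⁻_{k,j,r,h},Λ})`. -/
noncomputable def W (N m k : ℕ) (r h Λ : ℝ) (y : EuclideanSpace ℝ (Fin N)) : ℝ :=
  ∑ j ∈ Finset.Icc 1 k, (U N m (xp N k r h j) Λ y + U N m (xm N k r h j) Λ y)

/-! ### Geometry of the centres -/

lemma pt_sub (N : ℕ) (a b c a' b' c' : ℝ) :
    pt N a b c - pt N a' b' c' = pt N (a - a') (b - b') (c - c') := by
  ext i
  simp only [pt, WithLp.equiv_symm_apply, PiLp.sub_apply]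
  split_ifs <;> simp

lemma norm_pt_sq (N : ℕ) (hN : 3 ≤ N) (a b c : ℝ) :
    ‖pt N a b c‖ ^ 2 = a ^ 2 + b ^ 2 + c ^ 2 := by
  obtain ⟨M, rfl⟩ := Nat.exists_eq_add_of_le' hN
  rw [EuclideanSpace.norm_sq_eq, Fin.sum_univ_succ, Fin.sum_univ_succ, Fin.sum_univ_succ]
  have h3 : ∀ x : ℕ, ¬ (x + 1 + 1 + 1 = 2) := by omega
  simp only [pt, WithLp.equiv_symm_apply, Fin.val_succ, Fin.val_zero, Real.norm_eq_abs, sq_abs, h3]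
  norm_num
  ring

/-- The centre `x⁺_{k,j}` or `x⁻_{k,j}`, indexed by `(j, true)` or `(j, false)`. -/
noncomputable def ctr (N k : ℕ) (r h : ℝ) (q : ℕ × Bool) : EuclideanSpace ℝ (Fin N) :=
  if q.2 then xp N k r h q.1 else xm N k r h q.1

/-- The index set of the `2k` centres. -/
def idx (k : ℕ) : Finset (ℕ × Bool) := Finset.Icc 1 k ×ˢ Finset.univ

lemma sum_idx (k : ℕ) (f : ℕ × Bool → ℝ) :
    ∑ q ∈ idx k, f q = ∑ j ∈ Finset.Icc 1 k, (f (j, true) + f (j, false)) := by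
  simp [idx, Finset.sum_product]

/-- Cyclic distance of the indices `i` and `j` modulo `k`, with the value `1` on the diagonal: up to
a factor, a lower bound for the distance of two distinct centres in units of `μ_k / k`. -/
noncomputable def cyc (k i j : ℕ) : ℝ :=
  if i = j then 1 else min |(j : ℝ) - i| (k - |(j : ℝ) - i|)

lemma abs_sub_bounds {k i j : ℕ} (hi : i ∈ Finset.Icc 1 k) (hj : j ∈ Finset.Icc 1 k) :
    |(j : ℝ) - i| ≤ k - 1 := by
  rw [Finset.mem_Icc] at hi hj
  have h1 : (1 : ℝ) ≤ i := by exact_mod_cast hi.1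
  have h2 : (1 : ℝ) ≤ j := by exact_mod_cast hj.1
  have h3 : (i : ℝ) ≤ k := by exact_mod_cast hi.2
  have h4 : (j : ℝ) ≤ k := by exact_mod_cast hj.2
  rw [abs_le]; constructor <;> linarith

lemma cyc_pos {k i j : ℕ} (hi : i ∈ Finset.Icc 1 k) (hj : j ∈ Finset.Icc 1 k) :
    0 < cyc k i j := by
  unfold cyc
  split_ifs with h
  · exact one_pos
  · have := abs_sub_bounds hi hj
    refine lt_min (abs_pos.2 (sub_ne_zero.2 ?_)) (by linarith)
    exact fun e => h (Nat.cast_injective e).symm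

/-- Jordan's inequality, used on both sides of `π / 2`. -/
lemma min_le_abs_sin {k : ℝ} (hk : 0 < k) {t : ℝ} (ht : |t| ≤ k) :
    2 * min |t| (k - |t|) / k ≤ |Real.sin (Real.pi * t / k)| := by
  have hpi := Real.pi_pos
  have key : ∀ s : ℝ, 0 ≤ s → s ≤ k → 2 * min s (k - s) / k ≤ Real.sin (Real.pi * s / k) := by
    intro s h0 h1
    rcases le_total s (k - s) with h | h
    · rw [min_eq_left h]
      have := Real.mul_le_sin (x := Real.pi * s / k) (by positivity)
        (by rw [div_le_div_iff₀ hk two_pos]; nlinarith)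
      calc _ = 2 / Real.pi * (Real.pi * s / k) := by field_simp
        _ ≤ _ := this
    · rw [min_eq_right h]
      have h2 : 0 ≤ k - s := by linarith
      have := Real.mul_le_sin (x := Real.pi * (k - s) / k) (by positivity)
        (by rw [div_le_div_iff₀ hk two_pos]; nlinarith)
      calc _ = 2 / Real.pi * (Real.pi * (k - s) / k) := by field_simp
        _ ≤ _ := this
        _ = Real.sin (Real.pi - Real.pi * s / k) := by congr 1; field_simp
        _ = _ := Real.sin_pi_sub _
  rcases le_total 0 t with h | h
  · rw [abs_of_nonneg h] at ht ⊢
    exact (key t h ht).trans (le_abs_self _)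
  · rw [abs_of_nonpos h] at ht ⊢
    have := (key (-t) (by linarith) ht).trans (le_abs_self _)
    rwa [show Real.pi * -t / k = -(Real.pi * t / k) by ring, Real.sin_neg, abs_neg] at this

lemma norm_ctr (N k : ℕ) (hN : 3 ≤ N) (r h : ℝ) (hr : 0 < r) (hh : h ^ 2 ≤ 1) (q : ℕ × Bool) :
    ‖ctr N k r h q‖ = r := by
  have hs : Real.sqrt (1 - h ^ 2) ^ 2 = 1 - h ^ 2 := Real.sq_sqrt (by linarith)
  have h2 : ‖ctr N k r h q‖ ^ 2 = r ^ 2 := by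
    have e := Real.sin_sq_add_cos_sq (2 * ((q.1 : ℝ) - 1) * Real.pi / k)
    unfold ctr xp xm
    split_ifs <;>
    · rw [norm_pt_sq N hN]
      linear_combination (r ^ 2 * (1 - h ^ 2)) * e +
        r ^ 2 * hs * (Real.cos (2 * ((q.1 : ℝ) - 1) * Real.pi / k) ^ 2 +
        Real.sin (2 * ((q.1 : ℝ) - 1) * Real.pi / k) ^ 2)
  exact (pow_left_inj₀ (norm_nonneg _) hr.le two_ne_zero).1 h2

/-- Two distinct centres are at distance at least a constant times the spacing `μ / k` times their
cyclic distance. Centres above each other are `2 r h` apart, which is at least of order `μ / k`. -/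
lemma ctr_sep (N k : ℕ) (hN : 3 ≤ N) (hk : 1 ≤ k) (r h μ c : ℝ) (hr : 0 < r) (hμ : 0 ≤ μ)
    (hμr : μ ≤ 2 * r) (hh0 : 0 ≤ h) (hh : h ≤ 1 / 2) (hch : c ≤ h * k) (hc1 : c ≤ 1)
    (p q : ℕ × Bool) (hp : p ∈ idx k) (hq : q ∈ idx k) (hpq : q ≠ p) :
    c * cyc k p.1 q.1 * (μ / k) ≤ ‖ctr N k r h q - ctr N k r h p‖ := by
  have hk0 : (0 : ℝ) < k := by exact_mod_cast hk
  have hp1 : p.1 ∈ Finset.Icc 1 k := (Finset.mem_product.1 hp).1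
  have hq1 : q.1 ∈ Finset.Icc 1 k := (Finset.mem_product.1 hq).1
  have hcy := cyc_pos hp1 hq1
  by_cases hj : p.1 = q.1
  · have hb : q.2 ≠ p.2 := fun e => hpq (Prod.ext hj.symm e)
    have h2 : ‖ctr N k r h q - ctr N k r h p‖ ^ 2 = (2 * r * h) ^ 2 := by
      obtain ⟨j, b⟩ := p
      obtain ⟨j', b'⟩ := q
      simp only at hj hb
      subst hj
      cases b <;> cases b' <;> simp at hb <;> simp only [ctr, xp, xm, Bool.false_eq_true, if_true,
        if_false] <;> rw [pt_sub, norm_pt_sq N hN] <;> ring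
    have h3 := (pow_left_inj₀ (norm_nonneg _) (by positivity) two_ne_zero).1 h2
    rw [h3, cyc, if_pos hj, mul_one]
    calc c * (μ / k) ≤ (h * k) * (μ / k) := by gcongr
      _ = μ * h := by field_simp
      _ ≤ _ := by gcongr
  · set t : ℝ := (q.1 : ℝ) - p.1 with ht
    have hle : |t| ≤ k := by have := abs_sub_bounds hp1 hq1; linarith
    have hsin := min_le_abs_sin hk0 hle
    set R := r * Real.sqrt (1 - h ^ 2) with hR
    have hRr : r ≤ 2 * R := by
      have : (1 / 2 : ℝ) ≤ Real.sqrt (1 - h ^ 2) := Real.le_sqrt_of_sq_le (by nlinarith)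
      nlinarith
    have h2 : (2 * R * |Real.sin (Real.pi * t / k)|) ^ 2 ≤
        ‖ctr N k r h q - ctr N k r h p‖ ^ 2 := by
      have key : ∀ u v w : ℝ, (2 * R * |Real.sin ((u - v) / 2)|) ^ 2 ≤
          (R * Real.cos u - R * Real.cos v) ^ 2 + (R * Real.sin u - R * Real.sin v) ^ 2
            + w ^ 2 := by
        intro u v w
        rw [mul_pow, sq_abs, Real.sin_sq_eq_half_sub, mul_div_cancel₀ _ (two_ne_zero' ℝ),
          Real.cos_sub]
        have e1 := Real.sin_sq_add_cos_sq u
        have e2 := Real.sin_sq_add_cos_sq v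
        nlinarith [sq_nonneg w, congrArg (R ^ 2 * ·) e1, congrArg (R ^ 2 * ·) e2]
      have harg : Real.pi * t / k = (2 * ((q.1 : ℝ) - 1) * Real.pi / k
          - 2 * ((p.1 : ℝ) - 1) * Real.pi / k) / 2 := by rw [ht]; field_simp; ring
      rw [harg]
      unfold ctr xp xm
      split_ifs <;> rw [pt_sub, norm_pt_sq N hN] <;> exact key _ _ _
    have h3 := (pow_le_pow_iff_left₀ (by positivity) (norm_nonneg _) two_ne_zero).1 h2
    refine le_trans ?_ h3
    have hcyc : cyc k p.1 q.1 = min |t| (k - |t|) := by rw [cyc, if_neg hj]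
    rw [hcyc] at hcy ⊢
    have h5 : μ ≤ 4 * R := by linarith
    calc c * min |t| (k - |t|) * (μ / k) ≤ 1 * min |t| (k - |t|) * (4 * R / k) := by gcongr
      _ = 2 * R * (2 * min |t| (k - |t|) / k) := by ring
      _ ≤ _ := by gcongr

/-! ### Sums over the centres -/

lemma sum_shift_le {α : ℝ} (hα : 1 < α) (s : Finset ℕ) (z : ℤ) :
    ∑ j ∈ s, |(j : ℝ) + z| ^ (-α) ≤ ∑' n : ℤ, |(n : ℝ)| ^ (-α) := by
  have hs := Real.summable_abs_int_rpow hα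
  have hinj : Function.Injective (fun j : ℕ => (j : ℤ) + z) := fun a b h => by simpa using h
  have h1 := (hs.comp_injective hinj).sum_le_tsum s (fun i _ => Real.rpow_nonneg (abs_nonneg _) _)
  have h2 := tsum_comp_le_tsum_of_inj hs (fun i => by positivity) hinj
  refine le_trans (le_of_eq ?_) (h1.trans h2)
  simp

lemma sum_cyc_le {α : ℝ} (hα : 1 < α) (k i : ℕ) (hi : i ∈ Finset.Icc 1 k) :
    ∑ j ∈ Finset.Icc 1 k, cyc k i j ^ (-α) ≤ 3 * ∑' n : ℤ, |(n : ℝ)| ^ (-α) + 1 := by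
  have key : ∀ j ∈ Finset.Icc 1 k, cyc k i j ^ (-α) ≤
      |(j : ℝ) + ((-i : ℤ) : ℝ)| ^ (-α) + |(j : ℝ) + ((-i - k : ℤ) : ℝ)| ^ (-α)
        + |(j : ℝ) + ((-i + k : ℤ) : ℝ)| ^ (-α) + if i = j then 1 else 0 := by
    intro j hj
    have hb := abs_sub_bounds hi hj
    have n1 : 0 ≤ |(j : ℝ) + ((-i : ℤ) : ℝ)| ^ (-α) := by positivity
    have n2 : 0 ≤ |(j : ℝ) + ((-i - k : ℤ) : ℝ)| ^ (-α) := by positivity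
    have n3 : 0 ≤ |(j : ℝ) + ((-i + k : ℤ) : ℝ)| ^ (-α) := by positivity
    unfold cyc
    split_ifs with h
    · rw [Real.one_rpow]; linarith
    · rcases min_choice |(j : ℝ) - i| (k - |(j : ℝ) - i|) with e | e
      · have : |(j : ℝ) + ((-i : ℤ) : ℝ)| = |(j : ℝ) - i| := by push_cast; congr 1
        rw [e, ← this]; linarith
      · rw [e]
        rcases le_total 0 ((j : ℝ) - i) with h0 | h0
        · have : |(j : ℝ) + ((-i - k : ℤ) : ℝ)| = k - |(j : ℝ) - i| := by
            rw [abs_of_nonneg h0] at hb ⊢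
            push_cast
            rw [abs_of_nonpos (by linarith)]; ring
          rw [← this]; linarith
        · have : |(j : ℝ) + ((-i + k : ℤ) : ℝ)| = k - |(j : ℝ) - i| := by
            rw [abs_of_nonpos h0] at hb ⊢
            push_cast
            rw [abs_of_nonneg (by linarith)]; ring
          rw [← this]; linarith
  refine (Finset.sum_le_sum key).trans ?_
  simp only [Finset.sum_add_distrib]
  have h1 := sum_shift_le hα (Finset.Icc 1 k) (-i)
  have h2 := sum_shift_le hα (Finset.Icc 1 k) (-i - k)
  have h3 := sum_shift_le hα (Finset.Icc 1 k) (-i + k)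
  have h4 : ∑ j ∈ Finset.Icc 1 k, (if i = j then (1 : ℝ) else 0) = 1 := by
    rw [Finset.sum_ite_eq, if_pos hi]
  rw [h4]
  linarith

/-- The total tail of all centres but the nearest one. Interpolating `d_j^{-n}` between `d_i` and
the distance of the centres splits off the factor `σ^α`, at the price of decay `d_i^{-(n-α)}`. -/
lemma tail_sum {α n c : ℝ} (hα : 1 < α) (hαn : α ≤ n) (hc : 0 < c) :
    ∃ B : ℝ, 0 < B ∧ ∀ (k : ℕ) (σ : ℝ), 0 < σ → ∀ (d : ℕ × Bool → ℝ) (i : ℕ × Bool), i ∈ idx k →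
      0 < d i → (∀ j ∈ idx k, d i ≤ d j) →
      (∀ j ∈ idx k, j ≠ i → c * cyc k i.1 j.1 ≤ σ * d j) →
      ∑ j ∈ (idx k).erase i, d j ^ (-n) ≤ B * σ ^ α * d i ^ (-(n - α)) := by
  have hZ : 0 ≤ ∑' n : ℤ, |(n : ℝ)| ^ (-α) := tsum_nonneg fun _ => by positivity
  refine ⟨c ^ (-α) * (2 * (3 * ∑' n : ℤ, |(n : ℝ)| ^ (-α) + 1)), by positivity, ?_⟩
  intro k σ hσ d i hi hd0 hd hsep
  have hi1 : i.1 ∈ Finset.Icc 1 k := (Finset.mem_product.1 hi).1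
  have key : ∀ j ∈ (idx k).erase i,
      d j ^ (-n) ≤ c ^ (-α) * σ ^ α * d i ^ (-(n - α)) * cyc k i.1 j.1 ^ (-α) := by
    intro j hj
    have hj' := Finset.mem_of_mem_erase hj
    have hji := Finset.ne_of_mem_erase hj
    have hj1 : j.1 ∈ Finset.Icc 1 k := (Finset.mem_product.1 hj').1
    have hcy := cyc_pos hi1 hj1
    have hdj : 0 < d j := hd0.trans_le (hd j hj')
    have h1 : d j ^ (-(n - α)) ≤ d i ^ (-(n - α)) :=
      Real.rpow_le_rpow_of_nonpos hd0 (hd j hj') (by linarith)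
    have h2 : d j ^ (-α) ≤ σ ^ α * (c ^ (-α) * cyc k i.1 j.1 ^ (-α)) := by
      have := Real.rpow_le_rpow_of_nonpos (by positivity) (hsep j hj' hji)
        (show -α ≤ 0 by linarith)
      rw [Real.mul_rpow hσ.le hdj.le, Real.mul_rpow hc.le hcy.le] at this
      calc d j ^ (-α) = σ ^ α * (σ ^ (-α) * d j ^ (-α)) := by
            rw [← mul_assoc, ← Real.rpow_add hσ]; simp
        _ ≤ _ := by gcongr
    calc d j ^ (-n) = d j ^ (-(n - α)) * d j ^ (-α) := by
          rw [← Real.rpow_add hdj]; congr 1; ring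
      _ ≤ d i ^ (-(n - α)) * (σ ^ α * (c ^ (-α) * cyc k i.1 j.1 ^ (-α))) := by gcongr
      _ = _ := by ring
  calc _ ≤ ∑ j ∈ (idx k).erase i,
        c ^ (-α) * σ ^ α * d i ^ (-(n - α)) * cyc k i.1 j.1 ^ (-α) := Finset.sum_le_sum key
    _ ≤ ∑ j ∈ idx k, c ^ (-α) * σ ^ α * d i ^ (-(n - α)) * cyc k i.1 j.1 ^ (-α) := by
        refine Finset.sum_le_sum_of_subset_of_nonneg (Finset.erase_subset _ _) ?_
        intro j hj _
        have := cyc_pos hi1 (Finset.mem_product.1 hj).1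
        positivity
    _ = c ^ (-α) * σ ^ α * d i ^ (-(n - α)) *
        (2 * ∑ j ∈ Finset.Icc 1 k, cyc k i.1 j ^ (-α)) := by
        rw [← Finset.mul_sum, sum_idx]
        simp only [← two_mul, ← Finset.mul_sum]
    _ ≤ c ^ (-α) * σ ^ α * d i ^ (-(n - α)) *
        (2 * (3 * ∑' n : ℤ, |(n : ℝ)| ^ (-α) + 1)) := by
        gcongr
        exact sum_cyc_le hα k i.1 hi1
    _ = _ := by ring

/-! ### Bubbles and their interaction -/

lemma U_nonneg (N m : ℕ) (x : EuclideanSpace ℝ (Fin N)) {Λ : ℝ} (hΛ : 0 ≤ Λ)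
    (y : EuclideanSpace ℝ (Fin N)) : 0 ≤ U N m x Λ y := by
  unfold U; positivity

lemma U_le (N m : ℕ) {n L₁ L₂ : ℝ} (hn : n = (N : ℝ) - 2 * m) (hn0 : 0 ≤ n) (hL1 : 0 < L₁)
    (x : EuclideanSpace ℝ (Fin N)) {Λ : ℝ} (h1 : L₁ ≤ Λ) (h2 : Λ ≤ L₂)
    (y : EuclideanSpace ℝ (Fin N)) :
    U N m x Λ y ≤ (2 * L₂ / min 1 (L₁ ^ 2)) ^ (n / 2) * (1 + ‖y - x‖) ^ (-n) := by
  unfold U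
  rw [← hn]
  set s := ‖y - x‖
  have hs : 0 ≤ s := norm_nonneg _
  have hΛ : 0 < Λ := hL1.trans_le h1
  have hL2 : 0 < L₂ := hΛ.trans_le h2
  have hmin : 0 < min 1 (L₁ ^ 2) := by positivity
  have e : (1 + s) ^ (-n) = (((1 + s) ^ 2)⁻¹) ^ (n / 2) := by
    rw [Real.inv_rpow (by positivity), ← Real.rpow_natCast, ← Real.rpow_mul (by positivity),
      Real.rpow_neg (by positivity)]
    congr 2; push_cast; ring
  rw [e, ← Real.mul_rpow (by positivity) (by positivity)]
  refine Real.rpow_le_rpow (by positivity) ?_ (by positivity)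
  rw [← div_eq_mul_inv, div_div, div_le_div_iff₀ (by positivity) (by positivity)]
  have a1 : min 1 (L₁ ^ 2) * (1 + s ^ 2) ≤ 1 + Λ ^ 2 * s ^ 2 := by
    have b1 : min 1 (L₁ ^ 2) ≤ 1 := min_le_left _ _
    have b2 : min 1 (L₁ ^ 2) ≤ Λ ^ 2 := (min_le_right _ _).trans (by gcongr)
    nlinarith [mul_le_mul_of_nonneg_right b2 (sq_nonneg s)]
  calc Λ * (min 1 (L₁ ^ 2) * (1 + s) ^ 2) ≤ L₂ * (min 1 (L₁ ^ 2) * (2 * (1 + s ^ 2))) := by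
        gcongr
        nlinarith [sq_nonneg (1 - s)]
    _ = 2 * L₂ * (min 1 (L₁ ^ 2) * (1 + s ^ 2)) := by ring
    _ ≤ _ := by gcongr

/-- The interaction of one summand `a` with the rest `S`, from Bernoulli's inequality applied to
`a / (a + S)`. -/
lemma rpow_add_sub_le {p a S : ℝ} (hp : 1 ≤ p) (ha : 0 ≤ a) (hS : 0 ≤ S) :
    (a + S) ^ p - a ^ p ≤ p * 2 ^ (p - 1) * (a ^ (p - 1) * S + S ^ p) := by
  rcases (add_nonneg ha hS).eq_or_lt with h0 | h0
  · have h1 : a = 0 := by linarith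
    have h2 : S = 0 := by linarith
    subst h1 h2
    simp
    positivity
  have hsp : S ^ (p - 1) * S = S ^ p := by
    rw [mul_comm, ← Real.rpow_one_add' hS (by linarith)]; congr 1; ring
  have hb := one_add_mul_self_le_rpow_one_add (s := -(S / (a + S)))
    (by rw [neg_le_neg_iff, div_le_one h0]; linarith) hp
  have e : 1 + -(S / (a + S)) = a / (a + S) := by field_simp; ring
  rw [e, Real.div_rpow ha h0.le, le_div_iff₀ (by positivity)] at hb
  have e2 : (a + S) ^ p = (a + S) ^ (p - 1) * (a + S) := by
    rw [← Real.rpow_add_one h0.ne']; congr 1; ring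
  have h1 : (a + S) ^ p - a ^ p ≤ p * ((a + S) ^ (p - 1) * S) := by
    have : (1 + p * -(S / (a + S))) * (a + S) ^ p =
        (a + S) ^ p - p * ((a + S) ^ (p - 1) * S) := by
      rw [e2]; field_simp; ring
    linarith
  have h2 : (a + S) ^ (p - 1) ≤ 2 ^ (p - 1) * (a ^ (p - 1) + S ^ (p - 1)) := by
    rcases le_total a S with h | h
    · calc (a + S) ^ (p - 1) ≤ (2 * S) ^ (p - 1) := by
            apply Real.rpow_le_rpow h0.le <;> linarith
        _ = 2 ^ (p - 1) * S ^ (p - 1) := Real.mul_rpow two_pos.le hS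
        _ ≤ _ := by gcongr; linarith [Real.rpow_nonneg ha (p - 1)]
    · calc (a + S) ^ (p - 1) ≤ (2 * a) ^ (p - 1) := by
            apply Real.rpow_le_rpow h0.le <;> linarith
        _ = 2 ^ (p - 1) * a ^ (p - 1) := Real.mul_rpow two_pos.le ha
        _ ≤ _ := by gcongr; linarith [Real.rpow_nonneg hS (p - 1)]
  calc _ ≤ p * ((a + S) ^ (p - 1) * S) := h1
    _ ≤ p * (2 ^ (p - 1) * (a ^ (p - 1) + S ^ (p - 1)) * S) := by gcongr
    _ = p * 2 ^ (p - 1) * (a ^ (p - 1) * S + S ^ (p - 1) * S) := by ring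
    _ = _ := by rw [hsp]

lemma abs_rpow_sum_sub_le {ι : Type*} [DecidableEq ι] (I : Finset ι) (u : ι → ℝ) (i : ι)
    (hi : i ∈ I) (hu : ∀ j, 0 ≤ u j) {p : ℝ} (hp : 1 ≤ p) :
    |(∑ j ∈ I, u j) ^ p - ∑ j ∈ I, u j ^ p| ≤
      (p * 2 ^ (p - 1) + 1) *
        (u i ^ (p - 1) * (∑ j ∈ I.erase i, u j) + (∑ j ∈ I.erase i, u j) ^ p) := by
  rw [← Finset.add_sum_erase I u hi, ← Finset.add_sum_erase I (fun j => u j ^ p) hi]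
  set S := ∑ j ∈ I.erase i, u j with hS
  have hS0 : 0 ≤ S := Finset.sum_nonneg fun j _ => hu j
  have h1 := rpow_add_sub_le hp (hu i) hS0
  have h2 : ∑ j ∈ I.erase i, u j ^ p ≤ S ^ p := by
    have hpow : ∀ x : ℝ, 0 ≤ x → x ^ p = x ^ (p - 1) * x := fun x hx => by
      rw [mul_comm, ← Real.rpow_one_add' hx (by linarith)]; congr 1; ring
    rw [hpow S hS0]
    conv_rhs => rw [hS, Finset.mul_sum]
    refine Finset.sum_le_sum fun j hj => ?_
    rw [hpow _ (hu j)]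
    refine mul_le_mul_of_nonneg_right ?_ (hu j)
    exact Real.rpow_le_rpow (hu j) (Finset.single_le_sum (fun j _ => hu j) hj) (by linarith)
  have h3 : 0 ≤ ∑ j ∈ I.erase i, u j ^ p := Finset.sum_nonneg fun j _ => Real.rpow_nonneg (hu j) p
  have h4 : u i ^ p ≤ (u i + S) ^ p := Real.rpow_le_rpow (hu i) (by linarith) (by linarith)
  have h5 : 0 ≤ u i ^ (p - 1) * S := mul_nonneg (Real.rpow_nonneg (hu i) _) hS0
  have h6 : 0 ≤ S ^ p := Real.rpow_nonneg hS0 p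
  have h7 : 0 ≤ p * 2 ^ (p - 1) * (u i ^ (p - 1) * S + S ^ p) := by positivity
  rw [abs_le]
  constructor <;> nlinarith

/-- The interaction estimate. The mixed term `u_i^{p-1} S` is estimated by `tail_sum` with exponent
`min (q - τ) n`, the power `S^p` with the exponent `(q - τ) / p`, where `p = 2 q / n`. -/
lemma interaction {n q τ c A : ℝ} (hn : 0 < n) (hq : n ≤ 2 * q) (hτ : 0 ≤ τ)
    (h1 : 1 < min (q - τ) n) (h2 : 1 < (q - τ) / (2 * q / n)) (hc : 0 < c) (hA : 0 < A) :
    ∃ C : ℝ, 0 < C ∧ ∀ (k : ℕ) (σ : ℝ), 0 < σ → σ ≤ 1 → ∀ (d u : ℕ × Bool → ℝ) (i : ℕ × Bool),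
      i ∈ idx k → 1 ≤ d i → (∀ j ∈ idx k, d i ≤ d j) →
      (∀ j ∈ idx k, j ≠ i → c * cyc k i.1 j.1 ≤ σ * d j) →
      (∀ j, 0 ≤ u j) → (∀ j ∈ idx k, u j ≤ A * d j ^ (-n)) →
      |(∑ j ∈ idx k, u j) ^ (2 * q / n) - ∑ j ∈ idx k, u j ^ (2 * q / n)| ≤
        C * σ ^ (min (q - τ) n) * d i ^ (-(q + τ)) := by
  have hq0 : 0 < q := by linarith
  have hβ : 0 < q - τ := by linarith [min_le_left (q - τ) n]
  set p := 2 * q / n with hp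
  have hpn : n * p = 2 * q := by rw [hp]; field_simp
  have hp1 : 1 ≤ p := by rw [hp, one_le_div hn]; exact hq
  have hp0 : 0 < p := by linarith
  have h3 : (q - τ) / p ≤ n := by rw [div_le_iff₀ hp0, hpn]; linarith
  obtain ⟨B₁, hB₁, H₁⟩ := tail_sum h1 (min_le_right _ _) hc
  obtain ⟨B₂, hB₂, H₂⟩ := tail_sum h2 h3 hc
  set α := min (q - τ) n with hα
  refine ⟨(p * 2 ^ (p - 1) + 1) * (A ^ (p - 1) * (A * B₁) + (A * B₂) ^ p), by positivity, ?_⟩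
  intro k σ hσ hσ1 d u i hi hd1 hd hsep hu huA
  have hd0 : 0 < d i := by linarith
  set S := ∑ j ∈ (idx k).erase i, u j with hS
  have hS0 : 0 ≤ S := Finset.sum_nonneg fun j _ => hu j
  have hSle : S ≤ A * ∑ j ∈ (idx k).erase i, d j ^ (-n) := by
    rw [Finset.mul_sum]
    exact Finset.sum_le_sum fun j hj => huA j (Finset.mem_of_mem_erase hj)
  have hS1 : S ≤ A * (B₁ * σ ^ α * d i ^ (-(n - α))) :=
    hSle.trans (mul_le_mul_of_nonneg_left (H₁ k σ hσ d i hi hd0 hd hsep) hA.le)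
  have hS2 : S ≤ A * (B₂ * σ ^ ((q - τ) / p) * d i ^ (-(n - (q - τ) / p))) :=
    hSle.trans (mul_le_mul_of_nonneg_left (H₂ k σ hσ d i hi hd0 hd hsep) hA.le)
  have t1 : u i ^ (p - 1) * S ≤ A ^ (p - 1) * (A * B₁) * (σ ^ α * d i ^ (-(q + τ))) := by
    have e1 : u i ^ (p - 1) ≤ A ^ (p - 1) * d i ^ (-n * (p - 1)) := by
      rw [Real.rpow_mul hd0.le, ← Real.mul_rpow hA.le (by positivity)]
      exact Real.rpow_le_rpow (hu i) (huA i hi) (by linarith)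
    have e2 : d i ^ (-n * (p - 1)) * d i ^ (-(n - α)) ≤ d i ^ (-(q + τ)) := by
      rw [← Real.rpow_add hd0]
      apply Real.rpow_le_rpow_of_exponent_le hd1
      have : α ≤ q - τ := min_le_left _ _
      linarith
    calc u i ^ (p - 1) * S ≤ (A ^ (p - 1) * d i ^ (-n * (p - 1))) *
          (A * (B₁ * σ ^ α * d i ^ (-(n - α)))) := by gcongr
      _ = A ^ (p - 1) * (A * B₁) *
          (σ ^ α * (d i ^ (-n * (p - 1)) * d i ^ (-(n - α)))) := by ring
      _ ≤ _ := by gcongr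
  have t2 : S ^ p ≤ (A * B₂) ^ p * (σ ^ α * d i ^ (-(q + τ))) := by
    have e1 : (σ ^ ((q - τ) / p)) ^ p ≤ σ ^ α := by
      rw [← Real.rpow_mul hσ.le, div_mul_cancel₀ _ hp0.ne']
      exact Real.rpow_le_rpow_of_exponent_ge hσ hσ1 (min_le_left _ _)
    have e2 : (d i ^ (-(n - (q - τ) / p))) ^ p = d i ^ (-(q + τ)) := by
      rw [← Real.rpow_mul hd0.le]
      congr 1
      have : (q - τ) / p * p = q - τ := div_mul_cancel₀ _ hp0.ne'
      linarith
    calc S ^ p ≤ ((A * B₂) * (σ ^ ((q - τ) / p) * d i ^ (-(n - (q - τ) / p)))) ^ p := by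
          apply Real.rpow_le_rpow hS0 _ hp0.le
          refine hS2.trans (le_of_eq ?_)
          ring
      _ = (A * B₂) ^ p * ((σ ^ ((q - τ) / p)) ^ p * (d i ^ (-(n - (q - τ) / p))) ^ p) := by
          rw [Real.mul_rpow (x := A * B₂) (by positivity) (by positivity),
            Real.mul_rpow (x := σ ^ ((q - τ) / p)) (by positivity) (by positivity)]
      _ ≤ _ := by rw [e2]; gcongr
  calc _ ≤ (p * 2 ^ (p - 1) + 1) * (u i ^ (p - 1) * S + S ^ p) :=
        abs_rpow_sum_sub_le (idx k) u i hi hu hp1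
    _ ≤ (p * 2 ^ (p - 1) + 1) * (A ^ (p - 1) * (A * B₁) * (σ ^ α * d i ^ (-(q + τ))) +
        (A * B₂) ^ p * (σ ^ α * d i ^ (-(q + τ)))) := by gcongr
    _ = _ := by ring

/-! ### The factor `K` -/

/-- The deviation of `K (Y / μ)` from `1` when `Y` is within `d` of `μ`. For `d` of
order `μ` or larger, boundedness of `K` suffices, since `d / μ` is then bounded below. -/
lemma abs_K_sub_one_le {l δ c₀ K₀ β : ℝ} (hδ0 : 0 < δ) (hδ1 : δ < 1) (hc₀ : 0 < c₀)
    (hK₀ : 0 < K₀) (hβ : 0 < β) (K : ℝ → ℝ) (hKb : ∀ s : ℝ, 0 ≤ s → |K s| ≤ K₀)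
    (hl : 0 ≤ l) (hK : ∀ s : ℝ, 0 ≤ s → |s - 1| ≤ δ → |K s - 1| ≤ c₀ * |s - 1| ^ l)
    {μ Y d : ℝ} (hμ : 0 < μ) (hY : 0 ≤ Y) (hd : 1 ≤ d) (hYd : |Y - μ| ≤ d) :
    |K (Y / μ) - 1| ≤ (c₀ + (K₀ + 1) * δ ^ (-β)) * (max (μ ^ (-β)) (μ ^ (-l)) * d ^ β) := by
  have hd0 : 0 < d := by linarith
  set M := max (μ ^ (-β)) (μ ^ (-l))
  have hM1 : μ ^ (-β) ≤ M := le_max_left _ _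
  have hM2 : μ ^ (-l) ≤ M := le_max_right _ _
  have hM0 : 0 < M := (Real.rpow_pos_of_pos hμ _).trans_le hM1
  have hs : 0 ≤ Y / μ := by positivity
  have hs1 : |Y / μ - 1| ≤ d / μ := by
    rw [show Y / μ - 1 = (Y - μ) / μ by field_simp, abs_div, abs_of_pos hμ]
    gcongr
  have hdiv : ∀ a : ℝ, (d / μ) ^ a = μ ^ (-a) * d ^ a := fun a => by
    rw [Real.div_rpow hd0.le hμ.le, Real.rpow_neg hμ.le, div_eq_inv_mul]
  rcases le_or_gt (d / μ) δ with h | h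
  · have h1 : |K (Y / μ) - 1| ≤ c₀ * (d / μ) ^ l :=
      (hK _ hs (hs1.trans h)).trans (by gcongr)
    have h2 : (d / μ) ^ l ≤ M * d ^ β := by
      rcases le_total l β with hlβ | hlβ
      · rw [hdiv]
        gcongr
      · calc (d / μ) ^ l ≤ (d / μ) ^ β :=
              Real.rpow_le_rpow_of_exponent_ge (by positivity) (by linarith) hlβ
          _ = μ ^ (-β) * d ^ β := hdiv β
          _ ≤ _ := by gcongr
    calc _ ≤ c₀ * (d / μ) ^ l := h1
      _ ≤ c₀ * (M * d ^ β) := by gcongr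
      _ ≤ _ := by
        gcongr
        have : 0 ≤ (K₀ + 1) * δ ^ (-β) := by positivity
        linarith
  · have h1 : |K (Y / μ) - 1| ≤ K₀ + 1 := by
      refine (abs_sub _ _).trans ?_
      rw [abs_one]
      linarith [hKb _ hs]
    have h2 : 1 ≤ δ ^ (-β) * (M * d ^ β) := by
      calc 1 = δ ^ (-β) * δ ^ β := by rw [← Real.rpow_add hδ0]; simp
        _ ≤ δ ^ (-β) * (d / μ) ^ β := by gcongr
        _ = δ ^ (-β) * (μ ^ (-β) * d ^ β) := by rw [hdiv]
        _ ≤ _ := by gcongr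
    calc _ ≤ (K₀ + 1) * 1 := by linarith
      _ ≤ (K₀ + 1) * (δ ^ (-β) * (M * d ^ β)) := by gcongr
      _ = ((K₀ + 1) * δ ^ (-β)) * (M * d ^ β) := by ring
      _ ≤ _ := by gcongr; linarith

/-! ### The error estimate -/

set_option maxHeartbeats 1000000 in
theorem stmt15 (N m : ℕ) (hm : 1 ≤ m) (hN : 2 * m + 3 ≤ N)
    (n mstar : ℝ) (hn : n = (N : ℝ) - 2 * m) (hmstar : mstar = 2 * (N : ℝ) / ((N : ℝ) - 2 * m))
    (l δ c₀ K₀ L₁ L₂ c₁ c₂ : ℝ) (hl2 : 2 ≤ l) (hln : l < n)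
    (hδ0 : 0 < δ) (hδ1 : δ < 1) (hc₀ : 0 < c₀) (hK₀ : 0 < K₀)
    (hL1 : 0 < L₁) (hL12 : L₁ ≤ L₂) (hc1 : 0 < c₁) (hc12 : c₁ ≤ c₂)
    (K : ℝ → ℝ) (hKb : ∀ s : ℝ, 0 ≤ s → |K s| ≤ K₀)
    (hK : ∀ s : ℝ, 0 ≤ s → |s - 1| ≤ δ → |K s - 1| ≤ c₀ * |s - 1| ^ l) :
    ∃ ε₂ : ℝ, 0 < ε₂ ∧ ∀ ε₁ : ℝ, 0 < ε₁ → ε₁ < ε₂ →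
      ∀ τ : ℝ, (n - l) / n < τ → τ < (n - l) / n + ε₁ →
      ∃ C : ℝ, 0 < C ∧ ∃ k₀ : ℕ, ∀ k : ℕ, k₀ ≤ k →
      ∀ Λ : ℝ, L₁ ≤ Λ → Λ ≤ L₂ →
      ∀ r : ℝ, 0 < r → |r - (k : ℝ) ^ (n / (n - l))| ≤ 1 →
      ∀ h : ℝ, c₁ * (k : ℝ) ^ (-((n - 1) / (n + 1))) ≤ h →
        h ≤ c₂ * (k : ℝ) ^ (-((n - 1) / (n + 1))) →
      ∀ y : EuclideanSpace ℝ (Fin N),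
        |K (‖y‖ / (k : ℝ) ^ (n / (n - l))) * W N m k r h Λ y ^ (mstar - 1) -
            ∑ j ∈ Finset.Icc 1 k,
              (U N m (xp N k r h j) Λ y ^ (mstar - 1) +
                U N m (xm N k r h j) Λ y ^ (mstar - 1))| ≤
          C * max (((k : ℝ) / (k : ℝ) ^ (n / (n - l))) ^
                (((N : ℝ) + 2 * m) / 2 - (n - l) / n - ε₁))
              (((k : ℝ) ^ (n / (n - l))) ^ (-l)) *
            ∑ j ∈ Finset.Icc 1 k,
              ((1 + ‖y - xp N k r h j‖) ^ (-(((N : ℝ) + 2 * m) / 2 + τ)) +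
                (1 + ‖y - xm N k r h j‖) ^ (-(((N : ℝ) + 2 * m) / 2 + τ))) := by
  have hn3 : 3 ≤ n := by
    have : ((2 * m + 3 : ℕ) : ℝ) ≤ N := by exact_mod_cast hN
    push_cast at this
    linarith
  have hm1 : (1 : ℝ) ≤ m := by exact_mod_cast hm
  have hn0 : 0 < n := by linarith
  set q : ℝ := ((N : ℝ) + 2 * m) / 2 with hq
  have hqn : q = n / 2 + 2 * m := by rw [hq, hn]; ring
  set a : ℝ := (n - l) / n with ha
  have han : a * n = n - l := div_mul_cancel₀ _ hn0.ne'
  have ha0 : 0 < a := div_pos (by linarith) hn0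
  have ha1 : a < 1 := by rw [ha, div_lt_one hn0]; linarith
  have hpq : mstar - 1 = 2 * q / n := by
    rw [hmstar, ← hn, hq]
    field_simp
    linarith
  rw [hpq]
  refine ⟨1 / n, by positivity, ?_⟩
  intro ε hε0 hε τ hτ1 hτ2
  have hεn : ε * n < 1 := by rwa [lt_div_iff₀ hn0] at hε
  have hε1 : ε < 1 := by nlinarith
  have hτn : τ * n < n - l + 1 := by nlinarith
  have hβ1 : 1 < q - τ := by linarith
  have hexp1 : 1 < min (q - τ) n := lt_min hβ1 (by linarith)
  have hexp2 : 1 < (q - τ) / (2 * q / n) := by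
    rw [one_lt_div (div_pos (by linarith) hn0), div_lt_iff₀ hn0]
    nlinarith
  set A : ℝ := (2 * L₂ / min 1 (L₁ ^ 2)) ^ (n / 2) with hA
  have hL2 : 0 < L₂ := hL1.trans_le hL12
  have hA0 : 0 < A := Real.rpow_pos_of_pos (by positivity) _
  set c : ℝ := min 1 c₁ with hc
  have hc0 : 0 < c := lt_min one_pos hc1
  obtain ⟨C₁, hC₁, H₁⟩ := interaction (n := n) (q := q) (τ := τ) (c := c / 2) (A := A) hn0
    (by linarith) (by linarith) hexp1 hexp2 (by positivity) hA0
  set C₂ : ℝ := c₀ + (K₀ + 1) * δ ^ (-(q - τ)) with hC₂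
  have hC₂0 : 0 < C₂ := by positivity
  -- for large `k` the height `h` is at most `1/2`
  have hlim : ∀ᶠ k : ℕ in Filter.atTop,
      c₂ * (k : ℝ) ^ (-((n - 1) / (n + 1))) ≤ 1 / 2 := by
    have h0 : Filter.Tendsto (fun k : ℕ => c₂ * (k : ℝ) ^ (-((n - 1) / (n + 1)))) Filter.atTop
        (nhds (c₂ * 0)) :=
      ((tendsto_rpow_neg_atTop (div_pos (by linarith) (by linarith))).comp
        tendsto_natCast_atTop_atTop).const_mul c₂
    rw [mul_zero] at h0
    exact h0.eventually_le_const (by norm_num)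
  obtain ⟨k₁, hk₁⟩ := Filter.eventually_atTop.1 hlim
  refine ⟨K₀ * C₁ + C₂ * A ^ (2 * q / n), by positivity, max 2 k₁, ?_⟩
  intro k hk Λ hΛ1 hΛ2 r hr hrμ h hh1 hh2 y
  have hk2 : 2 ≤ k := (le_max_left _ _).trans hk
  have hk2' : (2 : ℝ) ≤ k := by exact_mod_cast hk2
  have hk0 : (0 : ℝ) < k := by linarith
  have hh : h ≤ 1 / 2 := hh2.trans (hk₁ k ((le_max_right _ _).trans hk))
  have hh0 : 0 < h := lt_of_lt_of_le (by positivity) hh1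
  set μ : ℝ := (k : ℝ) ^ (n / (n - l)) with hμ
  have hnl : 0 < n - l := by linarith
  have hkμ : (k : ℝ) ≤ μ :=
    Real.self_le_rpow_of_one_le (by linarith) (by rw [one_le_div hnl]; linarith)
  have hμ0 : 0 < μ := by linarith
  have hrμ' := abs_le.1 hrμ
  set σ : ℝ := (k : ℝ) / μ with hσ
  have hσ0 : 0 < σ := by positivity
  have hσ1 : σ ≤ 1 := by rw [hσ, div_le_one hμ0]; exact hkμ
  -- `μ^{-l} = (k/μ)^n` because `k = μ^{(n-l)/n}`
  have hμl : μ ^ (-l) = σ ^ n := by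
    rw [hσ, hμ, Real.div_rpow hk0.le (by positivity), ← Real.rpow_mul hk0.le,
      ← Real.rpow_mul hk0.le, ← Real.rpow_sub hk0]
    congr 1
    field_simp
    ring
  set M : ℝ := max (σ ^ (q - a - ε)) (μ ^ (-l)) with hM
  have hM0 : 0 < M := lt_of_lt_of_le (Real.rpow_pos_of_pos hμ0 _) (le_max_right _ _)
  have hσq : σ ^ (q - τ) ≤ σ ^ (q - a - ε) :=
    Real.rpow_le_rpow_of_exponent_ge hσ0 hσ1 (by linarith)
  have hσM : σ ^ (min (q - τ) n) ≤ M := by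
    rcases min_choice (q - τ) n with e | e <;> rw [e]
    · exact hσq.trans (le_max_left _ _)
    · rw [← hμl]; exact le_max_right _ _
  have hμM : max (μ ^ (-(q - τ))) (μ ^ (-l)) ≤ M := by
    refine max_le_max ?_ le_rfl
    refine le_trans ?_ hσq
    rw [Real.rpow_neg hμ0.le, ← Real.inv_rpow hμ0.le]
    refine Real.rpow_le_rpow (by positivity) ?_ (by linarith)
    rw [hσ, inv_eq_one_div]
    gcongr
    linarith
  set d : ℕ × Bool → ℝ := fun j => 1 + ‖y - ctr N k r h j‖ with hd
  set u : ℕ × Bool → ℝ := fun j => U N m (ctr N k r h j) Λ y with hu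
  have hd1 : ∀ j, 1 ≤ d j := fun j => by simp [hd]
  have hu0 : ∀ j, 0 ≤ u j := fun j => U_nonneg N m _ (by linarith) y
  have huA : ∀ j, u j ≤ A * d j ^ (-n) := fun j => U_le N m hn hn0.le hL1 _ hΛ1 hΛ2 y
  have eW : W N m k r h Λ y = ∑ j ∈ idx k, u j := by
    rw [sum_idx]; simp [W, hu, ctr]
  have eU : ∑ j ∈ Finset.Icc 1 k, (U N m (xp N k r h j) Λ y ^ (2 * q / n) +
      U N m (xm N k r h j) Λ y ^ (2 * q / n)) = ∑ j ∈ idx k, u j ^ (2 * q / n) := by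
    rw [sum_idx]; simp [hu, ctr]
  have eT : ∑ j ∈ Finset.Icc 1 k, ((1 + ‖y - xp N k r h j‖) ^ (-(q + τ)) +
      (1 + ‖y - xm N k r h j‖) ^ (-(q + τ))) = ∑ j ∈ idx k, d j ^ (-(q + τ)) := by
    rw [sum_idx]; simp [hd, ctr]
  rw [eW, eU, eT]
  have hne : (idx k).Nonempty :=
    ⟨(1, true), Finset.mem_product.2 ⟨Finset.mem_Icc.2 ⟨le_rfl, by omega⟩, Finset.mem_univ _⟩⟩
  obtain ⟨i, hi, hmin⟩ := Finset.exists_min_image (idx k) d hne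
  have hN3 : 3 ≤ N := by omega
  have hsep : ∀ j ∈ idx k, j ≠ i → c / 2 * cyc k i.1 j.1 ≤ σ * d j := by
    intro j hj hji
    have hch : c ≤ h * k := by
      have e1 : (k : ℝ) ^ (-1 : ℝ) ≤ (k : ℝ) ^ (-((n - 1) / (n + 1))) := by
        apply Real.rpow_le_rpow_of_exponent_le (by linarith)
        rw [neg_le_neg_iff, div_le_one (by linarith)]
        linarith
      calc c ≤ c₁ := min_le_right _ _
        _ = c₁ * (k : ℝ) ^ (-1 : ℝ) * k := by
            rw [Real.rpow_neg_one]; field_simp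
        _ ≤ c₁ * (k : ℝ) ^ (-((n - 1) / (n + 1))) * k := by gcongr
        _ ≤ h * k := by gcongr
    have h1 := ctr_sep N k hN3 (by omega) r h μ c hr hμ0.le (by linarith) hh0.le hh hch
      (min_le_left _ _) i j hi hj hji
    have h2 : ‖ctr N k r h j - ctr N k r h i‖ ≤ 2 * d j := by
      have h3 : ‖ctr N k r h j - ctr N k r h i‖ ≤
          ‖y - ctr N k r h j‖ + ‖y - ctr N k r h i‖ := by
        rw [show ctr N k r h j - ctr N k r h i =
          (y - ctr N k r h i) - (y - ctr N k r h j) by abel, add_comm]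
        exact norm_sub_le _ _
      have h4 := hmin j hj
      simp only [hd] at h4 ⊢
      linarith
    calc c / 2 * cyc k i.1 j.1 = σ / 2 * (c * cyc k i.1 j.1 * (μ / k)) := by
          rw [hσ]; field_simp
      _ ≤ σ / 2 * (2 * d j) := 
          mul_le_mul_of_nonneg_left (h1.trans h2) (by positivity)
      _ = σ * d j := by ring
  have hI := H₁ k σ hσ0 hσ1 d u i hi (hd1 i) hmin hsep hu0 (fun j _ => huA j)
  set T : ℝ := ∑ j ∈ idx k, d j ^ (-(q + τ)) with hT
  have hdT : ∀ j, 0 ≤ d j ^ (-(q + τ)) := fun j =>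
    Real.rpow_nonneg (by linarith [hd1 j]) _
  have hiT : d i ^ (-(q + τ)) ≤ T := Finset.single_le_sum (fun j _ => hdT j) hi
  set κ : ℝ := K (‖y‖ / μ) with hκ
  have hκK : |κ| ≤ K₀ := hKb _ (by positivity)
  have part1 : |κ * ((∑ j ∈ idx k, u j) ^ (2 * q / n) - ∑ j ∈ idx k, u j ^ (2 * q / n))| ≤
      K₀ * (C₁ * M * T) := by
    rw [abs_mul]
    refine mul_le_mul hκK (hI.trans ?_) (abs_nonneg _) hK₀.le
    have := hdT i
    gcongr
  have part2 : |(κ - 1) * ∑ j ∈ idx k, u j ^ (2 * q / n)| ≤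
      C₂ * A ^ (2 * q / n) * M * T := by
    rw [abs_mul, abs_of_nonneg (a := ∑ j ∈ idx k, u j ^ (2 * q / n))
      (Finset.sum_nonneg fun j _ => Real.rpow_nonneg (hu0 j) _), Finset.mul_sum, hT,
      Finset.mul_sum]
    refine Finset.sum_le_sum fun j _ => ?_
    have hdj := hd1 j
    have hdj0 : 0 < d j := by linarith
    have hYd : |‖y‖ - μ| ≤ d j := by
      have e1 := abs_norm_sub_norm_le y (ctr N k r h j)
      rw [norm_ctr N k hN3 r h hr (by nlinarith)] at e1
      calc |‖y‖ - μ| = |(‖y‖ - r) + (r - μ)| := by congr 1; ring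
        _ ≤ |‖y‖ - r| + |r - μ| := abs_add_le _ _
        _ ≤ d j := by simp only [hd]; linarith
    have e2 := abs_K_sub_one_le hδ0 hδ1 hc₀ hK₀ (show 0 < q - τ by linarith) K hKb
      (by linarith) hK hμ0 (norm_nonneg y) hdj hYd
    have e3 : u j ^ (2 * q / n) ≤ A ^ (2 * q / n) * d j ^ (-(2 * q)) := by
      have : d j ^ (-(2 * q)) = (d j ^ (-n)) ^ (2 * q / n) := by
        rw [← Real.rpow_mul hdj0.le]; congr 1; field_simp
      rw [this, ← Real.mul_rpow hA0.le (by positivity)]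
      exact Real.rpow_le_rpow (hu0 j) (huA j) (div_nonneg (by linarith) hn0.le)
    calc |κ - 1| * u j ^ (2 * q / n)
        ≤ (C₂ * (M * d j ^ (q - τ))) * (A ^ (2 * q / n) * d j ^ (-(2 * q))) := by
          refine mul_le_mul (e2.trans ?_) e3 (Real.rpow_nonneg (hu0 j) _) (by positivity)
          gcongr
      _ = C₂ * A ^ (2 * q / n) * M * (d j ^ (q - τ) * d j ^ (-(2 * q))) := by ring
      _ = C₂ * A ^ (2 * q / n) * M * d j ^ (-(q + τ)) := by
          rw [← Real.rpow_add hdj0]; congr 2; ring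
  calc |κ * (∑ j ∈ idx k, u j) ^ (2 * q / n) - ∑ j ∈ idx k, u j ^ (2 * q / n)|
      = |κ * ((∑ j ∈ idx k, u j) ^ (2 * q / n) - ∑ j ∈ idx k, u j ^ (2 * q / n)) +
          (κ - 1) * ∑ j ∈ idx k, u j ^ (2 * q / n)| := by congr 1; ring
    _ ≤ K₀ * (C₁ * M * T) + C₂ * A ^ (2 * q / n) * M * T :=
        (abs_add_le _ _).trans (add_le_add part1 part2)
    _ = (K₀ * C₁ + C₂ * A ^ (2 * q / n)) * M * T := by ring
end

section
/- For every real α > 1 and every integer N ≥ 3 there exists C > 0 such that for every integer k ≥ 2, every r > 0 and every h ∈ (0, 1/2] with h·k ≥ 1: ∑_{j=1}^k |x⁺_{k,1,r,h} − x⁻_{k,j,r,h}|^{−α} ≤ C·k/(r^α·h^{α−1}). -/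
lemma norm_sq_eq (N : ℕ) (hN : 3 ≤ N) (k : ℕ) (r h : ℝ) (h1 : h ^ 2 ≤ 1) (m : ℕ) :
    ‖xp N k r h 1 - xm N k r h (m + 1)‖ ^ 2 =
      r ^ 2 * (4 * (1 - h ^ 2) * Real.sin (m * Real.pi / k) ^ 2 + 4 * h ^ 2) := by
  obtain ⟨n, rfl⟩ : ∃ n, N = n + 3 := ⟨N - 3, by omega⟩
  have hs : Real.sqrt (1 - h ^ 2) ^ 2 = 1 - h ^ 2 := Real.sq_sqrt (by linarith)
  have hθ : 2 * (m : ℝ) * Real.pi / k = 2 * (m * Real.pi / k) := by ring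
  rw [EuclideanSpace.norm_sq_eq]
  simp [xp, xm, pt, Fin.sum_univ_succ, hθ, Real.cos_two_mul, Real.sin_two_mul]
  have hc := Real.sin_sq_add_cos_sq (m * Real.pi / k)
  set s := Real.sin (m * Real.pi / k)
  set c := Real.cos (m * Real.pi / k)
  have hc2 : c ^ 2 = 1 - s ^ 2 := by linarith
  set q := Real.sqrt (1 - h ^ 2)
  rw [← hs]
  linear_combination (r ^ 2 * q ^ 2 * (4 * c ^ 2 - 4)) * hc2

/-- Jordan's inequality on `[0, π]`, sampled at `t = m π / k`. -/
lemma sin_lower (k m : ℕ) (hk : 0 < k) (hm : m ≤ k) :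
    2 * min (m : ℝ) (k - m) / k ≤ Real.sin (m * Real.pi / k) := by
  have hk' : (0 : ℝ) < k := by exact_mod_cast hk
  have hm' : (m : ℝ) ≤ k := by exact_mod_cast hm
  have hπ := Real.pi_pos
  rcases le_total (m : ℝ) (k - m) with hle | hle
  · rw [min_eq_left hle]
    have := Real.mul_le_sin (x := m * Real.pi / k) (by positivity)
      (by rw [div_le_div_iff₀ hk' two_pos]; nlinarith)
    refine le_trans (le_of_eq ?_) this
    field_simp
  · rw [min_eq_right hle]
    have := Real.mul_le_sin (x := (k - m) * Real.pi / k)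
      (div_nonneg (mul_nonneg (by linarith) hπ.le) hk'.le)
      (by rw [div_le_div_iff₀ hk' two_pos]; nlinarith)
    have e : ((k : ℝ) - m) * Real.pi / k = Real.pi - m * Real.pi / k := by field_simp
    rw [← Real.sin_pi_sub, ← e]
    refine le_trans (le_of_eq ?_) this
    field_simp

lemma norm_lower (N : ℕ) (hN : 3 ≤ N) (k m : ℕ) (hk : 0 < k) (hm : m ≤ k) (r h : ℝ)
    (hr : 0 < r) (h0 : 0 < h) (h1 : h ≤ 1 / 2) :
    r / k * (h * k + min (m : ℝ) (k - m)) ≤ ‖xp N k r h 1 - xm N k r h (m + 1)‖ := by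
  have hk' : (0 : ℝ) < k := by exact_mod_cast hk
  have hm' : (m : ℝ) ≤ k := by exact_mod_cast hm
  have hs := sin_lower k m hk hm
  have hmin : 0 ≤ min (m : ℝ) (k - m) := le_min (by positivity) (by linarith)
  set d := min (m : ℝ) (k - m)
  set s := Real.sin (m * Real.pi / k)
  have e : r / k * (h * k + d) = r * (h + d / k) := by field_simp
  have hd : 0 ≤ d / k := by positivity
  have hs' : 2 * (d / k) ≤ s := by rw [← mul_div_assoc]; exact hs
  rw [e]
  refine le_of_sq_le_sq ?_ (norm_nonneg _)
  rw [norm_sq_eq N hN k r h (by nlinarith) m, mul_pow]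
  refine mul_le_mul_of_nonneg_left ?_ (by positivity)
  change _ ≤ 4 * (1 - h ^ 2) * s ^ 2 + _
  have hss : 4 * (d / k) ^ 2 ≤ s ^ 2 := by nlinarith
  have hh : 3 ≤ 4 * (1 - h ^ 2) := by nlinarith
  have h3 : 3 * s ^ 2 ≤ 4 * (1 - h ^ 2) * s ^ 2 := mul_le_mul_of_nonneg_right hh (sq_nonneg s)
  nlinarith [sq_nonneg (h - d / k)]

/-- The tangent-line (Bernoulli) inequality for the convex function `t ↦ t ^ p`, `p ≤ 0`. -/
lemma bernoulli_neg (p t : ℝ) (hp : p ≤ 0) (ht : 0 < t) : 1 + p * (t - 1) ≤ t ^ p := by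
  rw [Real.rpow_def_of_pos ht]
  have h1 := Real.add_one_le_exp (Real.log t * p)
  have h2 := Real.log_le_sub_one_of_pos ht
  nlinarith

/-- The discrete form of `x ^ (-α) = -(d/dx) x ^ (1 - α) / (α - 1)`. The factor `2 ^ α` pays for
replacing `x` by `x + 1`, which is where `1 ≤ x` enters. -/
lemma step_le (α : ℝ) (hα : 1 < α) (x : ℝ) (hx : 1 ≤ x) :
    x ^ (-α) ≤ 2 ^ α / (α - 1) * (x ^ (1 - α) - (x + 1) ^ (1 - α)) := by
  have hx0 : 0 < x := by linarith
  have hy : 0 < x + 1 := by linarith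
  have hb := bernoulli_neg (1 - α) (x / (x + 1)) (by linarith) (by positivity)
  have e1 : (x / (x + 1)) ^ (1 - α) * (x + 1) ^ (1 - α) = x ^ (1 - α) := by
    rw [← Real.mul_rpow (by positivity) hy.le]
    congr 1
    field_simp
  have e2 : (x + 1) ^ (1 - α) = (x + 1) * (x + 1) ^ (-α) := by
    rw [show (1 : ℝ) - α = 1 + -α by ring, Real.rpow_add hy, Real.rpow_one]
  have hb2 := mul_le_mul_of_nonneg_right hb (Real.rpow_nonneg hy.le (1 - α))
  rw [e1] at hb2
  have hgap : (α - 1) * (x + 1) ^ (-α) ≤ x ^ (1 - α) - (x + 1) ^ (1 - α) := by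
    have e3 : (1 + (1 - α) * (x / (x + 1) - 1)) * (x + 1) ^ (1 - α)
        = (x + 1) ^ (1 - α) + (α - 1) * (x + 1) ^ (-α) := by
      rw [e2]; field_simp; ring
    linarith
  have hshift : x ^ (-α) ≤ 2 ^ α * (x + 1) ^ (-α) := by
    have h1 : (2 * x) ^ (-α) ≤ (x + 1) ^ (-α) :=
      Real.rpow_le_rpow_of_nonpos hy (by linarith) (by linarith)
    rw [Real.mul_rpow two_pos.le hx0.le] at h1
    have h2 : (2 : ℝ) ^ α * 2 ^ (-α) = 1 := by rw [← Real.rpow_add two_pos]; simp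
    calc x ^ (-α) = 2 ^ α * (2 ^ (-α) * x ^ (-α)) := by rw [← mul_assoc, h2, one_mul]
      _ ≤ _ := mul_le_mul_of_nonneg_left h1 (by positivity)
  have hα' : 0 < α - 1 := by linarith
  calc x ^ (-α) ≤ 2 ^ α * (x + 1) ^ (-α) := hshift
    _ = 2 ^ α / (α - 1) * ((α - 1) * (x + 1) ^ (-α)) := by field_simp
    _ ≤ _ := mul_le_mul_of_nonneg_left hgap (by positivity)

lemma sum_rpow_le_s16 (α : ℝ) (hα : 1 < α) (a : ℝ) (ha : 1 ≤ a) (k : ℕ) :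
    ∑ m ∈ Finset.range k, (a + m) ^ (-α) ≤ 2 ^ α / (α - 1) * a ^ (1 - α) := by
  have hα' : 0 < α - 1 := by linarith
  have key : ∑ m ∈ Finset.range k, (a + m) ^ (-α) ≤
      2 ^ α / (α - 1) * (a ^ (1 - α) - (a + k) ^ (1 - α)) := by
    induction k with
    | zero => simp
    | succ n ih =>
      rw [Finset.sum_range_succ]
      have := step_le α hα (a + n) (by have : (0 : ℝ) ≤ n := by positivity
                                       linarith)
      push_cast
      rw [← add_assoc]
      linarith
  refine key.trans (mul_le_mul_of_nonneg_left ?_ (by positivity))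
  have : 0 ≤ (a + k) ^ (1 - α) := Real.rpow_nonneg (by positivity) _
  linarith

/-- Each summand is bounded by the contributions of both halves of the circle, so that no case
distinction on `min (m, k - m)` survives; `k - m` is weakened to `k - 1 - m` to match the
reflection of `Finset.range k`. -/
lemma term_le (α : ℝ) (hα : 1 < α) (N : ℕ) (hN : 3 ≤ N) (k m : ℕ) (hm : m < k) (r h : ℝ)
    (hr : 0 < r) (h0 : 0 < h) (h1 : h ≤ 1 / 2) :
    ‖xp N k r h 1 - xm N k r h (m + 1)‖ ^ (-α) ≤
      (r / k) ^ (-α) * ((h * k + m) ^ (-α) + (h * k + (k - 1 - m : ℕ)) ^ (-α)) := by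
  have hk : 0 < k := by omega
  have hk' : (0 : ℝ) < k := by exact_mod_cast hk
  have hm' : (m : ℝ) ≤ k := by exact_mod_cast hm.le
  have hlow := norm_lower N hN k m hk hm.le r h hr h0 h1
  have hmin : 0 ≤ min (m : ℝ) (k - m) := le_min (by positivity) (by linarith)
  have hpos : 0 < h * k + min (m : ℝ) (k - m) := by positivity
  have hA : 0 ≤ (h * k + (m : ℝ)) ^ (-α) := Real.rpow_nonneg (by positivity) _
  have hB : 0 ≤ (h * k + ((k - 1 - m : ℕ) : ℝ)) ^ (-α) := Real.rpow_nonneg (by positivity) _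
  calc _ ≤ (r / k * (h * k + min (m : ℝ) (k - m))) ^ (-α) :=
        Real.rpow_le_rpow_of_nonpos (by positivity) hlow (by linarith)
    _ = (r / k) ^ (-α) * (h * k + min (m : ℝ) (k - m)) ^ (-α) :=
        Real.mul_rpow (by positivity) hpos.le
    _ ≤ _ := by
        refine mul_le_mul_of_nonneg_left ?_ (Real.rpow_nonneg (by positivity) _)
        rcases le_total (m : ℝ) (k - m) with hle | hle
        · rw [min_eq_left hle]; linarith
        · rw [min_eq_right hle]
          have hcast : ((k - 1 - m : ℕ) : ℝ) ≤ (k : ℝ) - m := by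
            rw [← Nat.cast_sub hm.le]
            exact_mod_cast (by omega : k - 1 - m ≤ k - m)
          have : (h * k + ((k : ℝ) - m)) ^ (-α) ≤ (h * k + ((k - 1 - m : ℕ) : ℝ)) ^ (-α) :=
            Real.rpow_le_rpow_of_nonpos (by positivity) (by linarith) (by linarith)
          linarith

theorem stmt16 (α : ℝ) (hα : 1 < α) (N : ℕ) (hN : 3 ≤ N) :
    ∃ C : ℝ, 0 < C ∧ ∀ k : ℕ, 2 ≤ k → ∀ r h : ℝ, 0 < r → 0 < h → h ≤ 1 / 2 →
      1 ≤ h * k →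
      ∑ j ∈ Finset.Icc 1 k, ‖xp N k r h 1 - xm N k r h j‖ ^ (-α) ≤
        C * k / (r ^ α * h ^ (α - 1)) := by
  have hα' : 0 < α - 1 := by linarith
  refine ⟨2 * (2 ^ α / (α - 1)), by positivity, fun k hk r h hr h0 h1 hhk => ?_⟩
  have hk' : (0 : ℝ) < k := by exact_mod_cast (by omega : 0 < k)
  have hreindex : ∑ j ∈ Finset.Icc 1 k, ‖xp N k r h 1 - xm N k r h j‖ ^ (-α) =
      ∑ m ∈ Finset.range k, ‖xp N k r h 1 - xm N k r h (m + 1)‖ ^ (-α) := by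
    rw [Finset.range_eq_Ico, Finset.sum_Ico_add' (fun j => ‖xp N k r h 1 - xm N k r h j‖ ^ (-α))]
    rfl
  have hsum := sum_rpow_le_s16 α hα (h * k) hhk k
  have hrefl := Finset.sum_range_reflect (fun m : ℕ => (h * k + (m : ℝ)) ^ (-α)) k
  rw [hreindex]
  calc _ ≤ ∑ m ∈ Finset.range k,
        (r / k) ^ (-α) * ((h * k + m) ^ (-α) + (h * k + (k - 1 - m : ℕ)) ^ (-α)) :=
        Finset.sum_le_sum fun m hm =>
          term_le α hα N hN k m (Finset.mem_range.mp hm) r h hr h0 h1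
    _ = (r / k) ^ (-α) * (2 * ∑ m ∈ Finset.range k, (h * k + (m : ℝ)) ^ (-α)) := by
        rw [← Finset.mul_sum, Finset.sum_add_distrib, hrefl, two_mul]
    _ ≤ (r / k) ^ (-α) * (2 * (2 ^ α / (α - 1) * (h * k) ^ (1 - α))) := by
        gcongr
    _ = _ := by
        have e1 : (k : ℝ) ^ (1 - α) = k / k ^ α := by
          rw [Real.rpow_sub hk', Real.rpow_one]
        have e2 : h ^ (1 - α) = (h ^ (α - 1))⁻¹ := by
          rw [← Real.rpow_neg h0.le]; ring_nf
        rw [Real.rpow_neg (by positivity), Real.div_rpow hr.le hk'.le,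
          Real.mul_rpow h0.le hk'.le, e1, e2]
        have : 0 < (k : ℝ) ^ α := by positivity
        have : 0 < h ^ (α - 1) := by positivity
        have : 0 < r ^ α := by positivity
        field_simp
end
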